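/- arXiv:2208.08488 — 4 statements merged into one kernel-verified Lean document; each statement's English description precedes it below -/
import Mathlib

section
/- Every spider graph is odd prime. -/
/-- A simple graph `G` of order `n` is *odd prime* if there is an injective labeling
of its vertices by odd integers from `{1, 3, ..., 2n-1}` such that the labels of
adjacent vertices are relatively prime. -/
def IsOddPrime {V : Type*} [Fintype V] (G : SimpleGraph V) : Prop :=
  ∃ ℓ : V → ℕ, Function.Injective ℓ ∧
    (∀ v, Odd (ℓ v) ∧ ℓ v ≤ 2 * Fintype.card V - 1) ∧
    ∀ u v, G.Adj u v → Nat.Coprime (ℓ u) (ℓ v)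

/-- Every spider graph (a tree with at most one vertex of degree 3 or more) is
odd prime. -/
theorem spider_oddPrime {V : Type*} [Fintype V] (G : SimpleGraph V)
    [DecidableRel G.Adj] (htree : G.IsTree)
    (hspider : ∀ u v : V, 3 ≤ G.degree u → 3 ≤ G.degree v → u = v) :
    IsOddPrime G := by
  classical
  have hconn := htree.connected
  haveI := hconn.nonempty
  -- the centre
  obtain ⟨r, hr⟩ : ∃ r : V, ∀ v, v ≠ r → G.degree v < 3 := by
    by_cases h : ∃ r, 3 ≤ G.degree r
    · obtain ⟨r, h⟩ := h
      refine ⟨r, fun v hv => ?_⟩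
      by_contra hc
      exact hv (hspider v r (by omega) h)
    · push Not at h
      exact ⟨Classical.arbitrary V, fun v _ => h v⟩
  -- parents
  have hpar : ∀ v : V, ∃ w, v ≠ r → G.Adj v w ∧ G.dist r v = G.dist r w + 1 := by
    intro v
    by_cases hv : v = r
    · exact ⟨v, fun h => absurd hv h⟩
    obtain ⟨q, hq⟩ := (hconn v r).exists_walk_length_eq_dist
    cases q with
    | nil => exact absurd rfl hv
    | @cons _ w _ hadj q =>
      refine ⟨w, fun _ => ⟨hadj, ?_⟩⟩
      have h1 := SimpleGraph.dist_le q
      rw [SimpleGraph.Walk.length_cons] at hq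
      have h2 := hconn.dist_triangle (u := v) (v := w) (w := r)
      have h3 : G.dist v w = 1 := SimpleGraph.dist_eq_one_iff_adj.mpr hadj
      rw [SimpleGraph.dist_comm (u := r) (v := v), SimpleGraph.dist_comm (u := r) (v := w)]
      omega
  choose p hp using hpar
  set d : V → ℕ := fun v => G.dist r v with hd
  have hpd : ∀ v, v ≠ r → d v = d (p v) + 1 := fun v hv => (hp v hv).2
  have hpa : ∀ v, v ≠ r → G.Adj v (p v) := fun v hv => (hp v hv).1
  have hdr : d r = 0 := by simp [hd]
  have hd0 : ∀ v, d v = 0 → v = r := by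
    intro v h
    by_contra hv
    have := hpd v hv
    omega
  -- every edge joins a vertex with its parent
  have hedge : ∀ u v, G.Adj u v → (u ≠ r ∧ v = p u) ∨ (v ≠ r ∧ u = p v) := by
    have himg : (Finset.univ.erase r).image (fun v => s(v, p v)) = G.edgeFinset := by
      apply Finset.eq_of_subset_of_card_le
      · intro e he
        simp only [Finset.mem_image, Finset.mem_erase, Finset.mem_univ, and_true] at he
        obtain ⟨v, hv, rfl⟩ := he
        rw [SimpleGraph.mem_edgeFinset]
        exact hpa v hv
      · have hc := htree.card_edgeFinset
        rw [Finset.card_image_of_injOn, Finset.card_erase_of_mem (Finset.mem_univ _),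
          Finset.card_univ]
        · omega
        · intro u hu v hv huv
          have hu' : u ≠ r := by simpa using hu
          have hv' : v ≠ r := by simpa using hv
          have h1 := hpd u hu'
          have h2 := hpd v hv'
          rcases Sym2.eq_iff.mp huv with h | h
          · exact h.1
          · rw [h.2, ] at h1
            rw [← h.1] at h2
            omega
    intro u v huv
    have he : s(u, v) ∈ G.edgeFinset := by
      rw [SimpleGraph.mem_edgeFinset]; exact huv
    rw [← himg] at he
    simp only [Finset.mem_image, Finset.mem_erase, Finset.mem_univ, and_true] at he
    obtain ⟨w, hw, h⟩ := he
    rcases Sym2.eq_iff.mp h with ⟨h1, h2⟩ | ⟨h1, h2⟩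
    · left; subst h1; exact ⟨hw, h2.symm⟩
    · right; subst h1; exact ⟨hw, h2.symm⟩
  -- a vertex different from the centre has at most one child
  have hchild : ∀ u v, u ≠ r → v ≠ r → p u = p v → p u ≠ r → u = v := by
    intro u v hu hv huv hw
    by_contra hne
    have h1 := hr _ hw
    have hsub : ({u, v, p (p u)} : Finset V) ⊆ G.neighborFinset (p u) := by
      intro x hx
      rw [SimpleGraph.mem_neighborFinset]
      simp only [Finset.mem_insert, Finset.mem_singleton] at hx
      rcases hx with rfl | rfl | rfl
      · exact (hpa _ hu).symm
      · rw [huv]; exact (hpa _ hv).symm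
      · exact hpa _ hw
    have hcard := Finset.card_le_card hsub
    rw [SimpleGraph.card_neighborFinset_eq_degree] at hcard
    have e1 := hpd u hu
    have e2 := hpd v hv
    have e3 := hpd _ hw
    have n1 : u ≠ p (p u) := by
      intro h; have := congrArg d h; omega
    have n2 : v ≠ p (p u) := by
      intro h; have := congrArg d h; rw [← huv] at e2; omega
    rw [Finset.card_eq_three.mpr ⟨u, v, p (p u), hne, n1, n2, rfl⟩] at hcard
    omega
  -- branches
  have hbr : ∀ k u v, d u = k + 1 → d v = k + 1 → p^[k] u = p^[k] v → u = v := by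
    intro k
    induction k with
    | zero => intro u v _ _ h; simpa using h
    | succ k ih =>
      intro u v hu hv h
      have hur : u ≠ r := by rintro rfl; omega
      have hvr : v ≠ r := by rintro rfl; omega
      have e1 := hpd u hur
      have e2 := hpd v hvr
      rw [Function.iterate_succ_apply, Function.iterate_succ_apply] at h
      refine hchild u v hur hvr (ih _ _ (by omega) (by omega) h) ?_
      intro hc
      rw [hc] at e1
      omega
  obtain ⟨N, hN⟩ : ∃ N, ∀ v, d v < N :=
    ⟨Finset.univ.sup d + 1, fun v => Nat.lt_succ_of_le (Finset.le_sup (Finset.mem_univ v))⟩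
  let e := Fintype.equivFin V
  let b : V → ℕ := fun v => (e (p^[d v - 1] v) : ℕ)
  let K : V → ℕ := fun v => N * b v + d v
  have hK : ∀ u v, u ≠ r → v ≠ r → K u = K v → u = v := by
    intro u v hu hv h
    have hm : d u = d v := by
      have := congrArg (· % N) h
      simpa [K, Nat.mod_eq_of_lt (hN _)] using this
    have hb : b u = b v := by
      have h' : N * b u + d u = N * b v + d v := h
      have : N * b u = N * b v := by omega
      exact Nat.eq_of_mul_eq_mul_left (by have := hN u; omega) this
    have hb' : p^[d u - 1] u = p^[d v - 1] v := e.injective (Fin.ext hb)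
    have := hpd u hu
    rw [← hm] at hb'
    exact hbr (d u - 1) u v (by omega) (by omega) hb'
  have hKp : ∀ v, v ≠ r → p v ≠ r → K v = K (p v) + 1 := by
    intro v hv hpv
    have e1 := hpd v hv
    have e2 := hpd _ hpv
    have hb : b v = b (p v) := by
      have : d v - 1 = (d (p v) - 1) + 1 := by omega
      simp only [b]
      rw [this, Function.iterate_succ_apply]
    simp only [K]
    rw [hb, e1]
    omega
  let S : V → Finset V := fun v => Finset.univ.filter (fun w => w ≠ r ∧ K w < K v)
  have hSmem : ∀ v w, w ∈ S v ↔ w ≠ r ∧ K w < K v := by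
    intro v w; simp [S]
  let f : V → ℕ := fun v => (S v).card
  have hfmono : ∀ u v, u ≠ r → K u < K v → f u < f v := by
    intro u v hu h
    apply Finset.card_lt_card
    rw [Finset.ssubset_iff_of_subset]
    · exact ⟨u, (hSmem _ _).2 ⟨hu, h⟩, fun hc => by simpa using ((hSmem _ _).1 hc).2⟩
    · intro w hw
      rw [hSmem] at hw ⊢
      exact ⟨hw.1, hw.2.trans h⟩
  have hfinj : ∀ u v, u ≠ r → v ≠ r → f u = f v → u = v := by
    intro u v hu hv h
    rcases lt_trichotomy (K u) (K v) with hlt | heq | hgt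
    · have := hfmono u v hu hlt; omega
    · exact hK u v hu hv heq
    · have := hfmono v u hv hgt; omega
  have hfp : ∀ v, v ≠ r → p v ≠ r → f v = f (p v) + 1 := by
    intro v hv hpv
    have hk := hKp v hv hpv
    have : S v = insert (p v) (S (p v)) := by
      ext w
      rw [Finset.mem_insert, hSmem, hSmem]
      constructor
      · rintro ⟨hw, hlt⟩
        by_cases hc : K w = K (p v)
        · exact Or.inl (hK _ _ hw hpv hc)
        · exact Or.inr ⟨hw, by omega⟩
      · rintro (rfl | ⟨hw, hlt⟩)
        · exact ⟨hpv, by omega⟩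
        · exact ⟨hw, by omega⟩
    simp only [f]
    rw [this, Finset.card_insert_of_notMem]
    rw [hSmem]
    simp
  have hfle : ∀ v, v ≠ r → f v + 2 ≤ Fintype.card V := by
    intro v hv
    have hsub : insert r (insert v (S v)) ⊆ Finset.univ := Finset.subset_univ _
    have := Finset.card_le_card hsub
    rw [Finset.card_insert_of_notMem, Finset.card_insert_of_notMem, Finset.card_univ] at this
    · exact this
    · simp [hSmem]
    · simp [hSmem, hv.symm]
  have hcop : ∀ k : ℕ, Nat.Coprime (2 * (k + 1) + 3) (2 * k + 3) := by
    intro k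
    have h : 2 * (k + 1) + 3 = 2 + (2 * k + 3) := by ring
    rw [h, Nat.coprime_add_self_left]
    exact Nat.coprime_two_left.mpr ⟨k + 1, by ring⟩
  have hpos : 0 < Fintype.card V := Fintype.card_pos
  let L : V → ℕ := fun v => if v = r then 1 else 2 * f v + 3
  have hLr : L r = 1 := by simp [L]
  have hLv : ∀ v, v ≠ r → L v = 2 * f v + 3 := fun v hv => by simp [L, hv]
  have hLp : ∀ v, v ≠ r → Nat.Coprime (L v) (L (p v)) := by
    intro v hv
    by_cases hpv : p v = r
    · rw [hpv, hLr]; exact Nat.coprime_one_right _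
    · rw [hLv v hv, hLv _ hpv, hfp v hv hpv]
      exact hcop _
  refine ⟨L, ?_, ?_, ?_⟩
  · intro u v h
    by_cases hu : u = r <;> by_cases hv : v = r
    · rw [hu, hv]
    · rw [hu, hLr, hLv v hv] at h; omega
    · rw [hv, hLr, hLv u hu] at h; omega
    · rw [hLv u hu, hLv v hv] at h
      exact hfinj u v hu hv (by omega)
  · intro v
    by_cases hv : v = r
    · rw [hv, hLr]; exact ⟨odd_one, by omega⟩
    · have := hfle v hv
      rw [hLv v hv]
      exact ⟨⟨f v + 1, by ring⟩, by omega⟩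
  · intro u v huv
    rcases hedge u v huv with ⟨h, rfl⟩ | ⟨h, rfl⟩
    · exact hLp u h
    · exact (hLp v h).symm
end

section
/- Every caterpillar whose maximum vertex degree is at most 5 is odd prime. -/
def SA (S k o : ℕ) : Prop :=
  o < k ∧ (k = 4 → (S % 3 = 1 → o = 1 ∨ o = 2) ∧ (S % 3 = 2 → o ≠ 2)) ∧
    (k = 3 → S % 3 = 2 → o ≠ 2)

lemma cop_aux (a d : ℕ) (h : d = 1 ∨ d = 2 ∨ d = 4 ∨ ((d = 3 ∨ d = 6) ∧ a % 3 ≠ 1)) :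
    Nat.Coprime (2 * a + 1) (2 * (a + d) + 1) := by
  have h2 : Nat.Coprime (2 * a + 1) 2 := by simp
  have h3 : a % 3 ≠ 1 → Nat.Coprime (2 * a + 1) 3 := by
    intro h
    rw [Nat.coprime_comm, Nat.Prime.coprime_iff_not_dvd Nat.prime_three]
    omega
  have key : Nat.Coprime (2 * a + 1) (2 * d) := by
    rcases h with rfl | rfl | rfl | ⟨rfl | rfl, h⟩
    · exact h2
    · exact h2.mul_right h2
    · exact h2.mul_right (h2.mul_right h2)
    · exact h2.mul_right (h3 h)
    · exact h2.mul_right (h2.mul_right (h3 h))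
  have : 2 * (a + d) + 1 = 2 * d + (2 * a + 1) := by ring
  rw [this]
  simpa using key

lemma cop_block (S k o t : ℕ) (hk : k ≤ 4) (h : SA S k o) (ht : t < k) (hne : t ≠ o) :
    Nat.Coprime (2 * (S + t) + 1) (2 * (S + o) + 1) := by
  obtain ⟨h1, h2, h3⟩ := h
  rcases lt_or_gt_of_ne hne with hlt | hlt
  · have := cop_aux (S + t) (o - t) (by omega)
    rwa [show S + t + (o - t) = S + o by omega] at this
  · have := cop_aux (S + o) (t - o) (by omega)
    rw [show S + o + (t - o) = S + t by omega] at this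
    exact this.symm

lemma SA_exists (S k : ℕ) (h1 : 1 ≤ k) (h4 : k ≤ 4) : ∃ o, SA S k o := by
  refine ⟨if k = 4 then 1 else 0, ?_⟩
  unfold SA
  split_ifs <;> omega

instance (S k o : ℕ) : Decidable (SA S k o) := by unfold SA; infer_instance

set_option synthInstance.maxHeartbeats 400000 in
set_option synthInstance.maxSize 100000 in
set_option maxRecDepth 100000 in
lemma SA_finite : ∀ r < 3, ∀ k < 5, ∀ k' < 5, ∀ o' < 4, 1 ≤ k → SA (r + k) k' o' →
    ∃ o ∈ Finset.range 4, SA r k o ∧ (k + o' - o = 1 ∨ k + o' - o = 2 ∨ k + o' - o = 4 ∨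
      ((k + o' - o = 3 ∨ k + o' - o = 6) ∧ (r + o) % 3 ≠ 1)) := by
  decide

lemma SA_step (S k k' o' : ℕ) (h1 : 1 ≤ k) (h4 : k ≤ 4) (h4' : k' ≤ 4)
    (h : SA (S + k) k' o') :
    ∃ o, SA S k o ∧ Nat.Coprime (2 * (S + o) + 1) (2 * (S + k + o') + 1) := by
  suffices hs : ∃ o ∈ Finset.range 4, SA S k o ∧ (k + o' - o = 1 ∨ k + o' - o = 2 ∨ k + o' - o = 4 ∨
      ((k + o' - o = 3 ∨ k + o' - o = 6) ∧ (S + o) % 3 ≠ 1)) by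
    obtain ⟨o, -, ho, hd⟩ := hs
    refine ⟨o, ho, ?_⟩
    have := cop_aux (S + o) (k + o' - o) hd
    have h5 := ho.1
    rwa [show S + o + (k + o' - o) = S + k + o' by omega] at this
  have ho' : o' < 4 := lt_of_lt_of_le h.1 h4'
  have e1 : ∀ o, SA S k o ↔ SA (S % 3) k o := fun o => by simp [SA]
  have e2 : SA (S % 3 + k) k' o' := by simpa [SA, Nat.add_mod] using h
  have e3 : ∀ o, (S + o) % 3 = (S % 3 + o) % 3 := fun o => by simp [Nat.add_mod]
  simp only [e1, e3]
  have hr : S % 3 < 3 := Nat.mod_lt _ (by omega)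
  exact SA_finite (S % 3) hr k (by omega) k' (by omega) o' ho' h1 e2

open Finset in
lemma seq_exists (k : ℕ → ℕ) (h1 : ∀ i, 1 ≤ k i) (h4 : ∀ i, k i ≤ 4) (m : ℕ) :
    ∀ o, SA (∑ j ∈ range m, k j) (k m) o → ∃ c : ℕ → ℕ, c m = o ∧
      (∀ i ≤ m, SA (∑ j ∈ range i, k j) (k i) (c i)) ∧
      ∀ i < m, Nat.Coprime (2 * ((∑ j ∈ range i, k j) + c i) + 1)
        (2 * ((∑ j ∈ range (i + 1), k j) + c (i + 1)) + 1) := by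
  induction m with
  | zero =>
    intro o ho
    refine ⟨fun _ => o, rfl, ?_, by omega⟩
    intro i hi
    obtain rfl : i = 0 := by omega
    exact ho
  | succ m ih =>
    intro o' ho'
    obtain ⟨o, ho, hc⟩ := SA_step (∑ j ∈ range m, k j) (k m) (k (m + 1)) o' (h1 _) (h4 _) (h4 _)
      (by rw [← sum_range_succ]; exact ho')
    obtain ⟨c, rfl, hc1, hc2⟩ := ih o ho
    refine ⟨Function.update c (m + 1) o', by simp, ?_, ?_⟩
    · intro i hi
      rcases Nat.lt_or_ge m i with h | h
      · obtain rfl : i = m + 1 := by omega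
        simpa using ho'
      · rw [Function.update_of_ne (by omega)]
        exact hc1 i h
    · intro i hi
      rw [Function.update_of_ne (by omega : i ≠ m + 1)]
      rcases Nat.lt_or_ge i m with h | h
      · rw [Function.update_of_ne (by omega : i + 1 ≠ m + 1)]
        exact hc2 i h
      · obtain rfl : i = m := by omega
        rw [Function.update_self, sum_range_succ]
        exact hc

lemma block_label {α : Type*} (B : Finset α) (v : α) (hv : v ∈ B) (o : ℕ) (ho : o < B.card) :
    ∃ f : α → ℕ, Set.InjOn f B ∧ (∀ x ∈ B, f x < B.card) ∧ f v = o := by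
  classical
  let e := B.equivFin.trans (Equiv.swap (B.equivFin ⟨v, hv⟩) ⟨o, ho⟩)
  refine ⟨fun x => if h : x ∈ B then (e ⟨x, h⟩ : ℕ) else 0, ?_, ?_, ?_⟩
  · intro x hx y hy hxy
    have hx' : x ∈ B := hx
    have hy' : y ∈ B := hy
    simp only [hx', hy', dite_true] at hxy
    simpa using e.injective (Fin.ext hxy)
  · intro x hx
    simp [hx]
  · simp [hv, e]

open SimpleGraph Finset

def Dominating {V : Type*} (G : SimpleGraph V) (n : ℕ) : Prop :=
  ∃ (u w : V) (p : G.Walk u w), p.IsPath ∧ p.length = n ∧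
      ∀ v : V, v ∈ p.support ∨ ∃ x ∈ p.support, G.Adj v x

lemma exists_max_path {V : Type*} [Fintype V] (G : SimpleGraph V)
    (hcat : ∃ (u w : V) (p : G.Walk u w), p.IsPath ∧
      ∀ v : V, v ∈ p.support ∨ ∃ x ∈ p.support, G.Adj v x) :
    ∃ (u w : V) (p : G.Walk u w), p.IsPath ∧
      (∀ v : V, v ∈ p.support ∨ ∃ x ∈ p.support, G.Adj v x) ∧
      (∀ x, G.Adj x u → x ∈ p.support) ∧ (∀ x, G.Adj x w → x ∈ p.support) := by
  classical
  obtain ⟨u, w, p, hp, hd⟩ := hcat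
  have h0 : Dominating G p.length := ⟨u, w, p, hp, rfl, hd⟩
  have hlt : p.length ≤ Fintype.card V := hp.length_lt.le
  have hmax := Nat.findGreatest_spec (P := Dominating G) hlt h0
  have hg : ∀ m, Dominating G m → m ≤ Nat.findGreatest (Dominating G) (Fintype.card V) := by
    intro m hm
    obtain ⟨u', w', p', hp', hl, -⟩ := id hm
    exact Nat.le_findGreatest (hl ▸ hp'.length_lt.le) hm
  obtain ⟨u', w', q, hq, hl, hdq⟩ := hmax
  rw [← hl] at hg
  refine ⟨u', w', q, hq, hdq, ?_, ?_⟩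
  · intro x hx
    by_contra hns
    have := hg (q.length + 1) ⟨x, w', Walk.cons hx q, hq.cons hns, by simp, ?_⟩
    · omega
    · intro v
      rcases hdq v with h | ⟨y, hy, h⟩
      · left; simp [h]
      · right; exact ⟨y, by simp [hy], h⟩
  · intro x hx
    by_contra hns
    have := hg (q.length + 1) ⟨u', x, q.concat hx.symm, hq.concat hns hx.symm, by simp, ?_⟩
    · omega
    · intro v
      rcases hdq v with h | ⟨y, hy, h⟩
      · left; simp [Walk.support_concat, h]
      · right; exact ⟨y, by simp [Walk.support_concat, hy], h⟩

lemma edge_class {V : Type*} (G : SimpleGraph V) (htree : G.IsTree) {u w : V}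
    (p : G.Walk u w) (s : V → ℕ) (hs : ∀ x, s x ≤ p.length)
    (hadj : ∀ x, x = p.getVert (s x) ∨ G.Adj x (p.getVert (s x))) (x y : V) (hxy : G.Adj x y) :
    (y = p.getVert (s x) ∨ ∃ i < p.length, x = p.getVert i ∧ y = p.getVert (i + 1)) ∨
    (x = p.getVert (s y) ∨ ∃ i < p.length, y = p.getVert i ∧ x = p.getVert (i + 1)) := by
  let H : SimpleGraph V := SimpleGraph.fromRel
    (fun x y => y = p.getVert (s x) ∨ ∃ i < p.length, x = p.getVert i ∧ y = p.getVert (i + 1))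
  have hle : H ≤ G := by
    have aux : ∀ a b, a ≠ b → (b = p.getVert (s a) ∨
        ∃ i < p.length, a = p.getVert i ∧ b = p.getVert (i + 1)) → G.Adj a b := by
      rintro a b hab (h | ⟨i, hi, rfl, rfl⟩)
      · rcases hadj a with h' | h'
        · exact absurd (h'.trans h.symm) hab
        · rw [h]; exact h'
      · exact p.adj_getVert_succ hi
    intro a b hab
    rw [SimpleGraph.fromRel_adj] at hab
    obtain ⟨hne, h | h⟩ := hab
    · exact aux a b hne h
    · exact (aux b a hne.symm h).symm
  have hr0 : ∀ i ≤ p.length, H.Reachable (p.getVert 0) (p.getVert i) := by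
    intro i
    induction i with
    | zero => intro _; rfl
    | succ i ih =>
      intro hi
      refine (ih (by omega)).trans (SimpleGraph.Adj.reachable ?_)
      rw [SimpleGraph.fromRel_adj]
      exact ⟨(p.adj_getVert_succ (by omega)).ne, Or.inl (Or.inr ⟨i, by omega, rfl, rfl⟩)⟩
  have hr1 : ∀ a, H.Reachable (p.getVert 0) a := by
    intro a
    refine (hr0 (s a) (hs a)).trans ?_
    by_cases h : a = p.getVert (s a)
    · rw [← h]
    · apply SimpleGraph.Reachable.symm
      apply SimpleGraph.Adj.reachable
      rw [SimpleGraph.fromRel_adj]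
      exact ⟨h, Or.inl (Or.inl rfl)⟩
  have hconn : H.Connected := by
    have : Nonempty V := ⟨u⟩
    exact SimpleGraph.Connected.mk fun a b => (hr1 a).symm.trans (hr1 b)
  have hHG := (SimpleGraph.isTree_iff_minimal_connected.mp htree).2 hconn hle
  have := hHG hxy
  rw [SimpleGraph.fromRel_adj] at this
  exact this.2

/-- Every caterpillar (a tree in which every vertex is within distance 1 of a
central path) whose maximum vertex degree is at most 5 is odd prime. -/
theorem caterpillar_maxDegree_le_five_oddPrime {V : Type*} [Fintype V]
    (G : SimpleGraph V) [DecidableRel G.Adj] (htree : G.IsTree)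
    (hcat : ∃ (u w : V) (p : G.Walk u w), p.IsPath ∧
      ∀ v : V, v ∈ p.support ∨ ∃ x ∈ p.support, G.Adj v x)
    (hdeg : ∀ v : V, G.degree v ≤ 5) :
    IsOddPrime G := by
  classical
  obtain ⟨u, w, p, hp, hdom, hu, hw⟩ := exists_max_path G hcat
  have hex : ∀ x, ∃ i, i ≤ p.length ∧
      (x = p.getVert i ∨ (x ∉ p.support ∧ G.Adj x (p.getVert i))) := by
    intro x
    by_cases hx : x ∈ p.support
    · obtain ⟨i, hi, hl⟩ := Walk.mem_support_iff_exists_getVert.mp hx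
      exact ⟨i, hl, Or.inl hi.symm⟩
    · rcases hdom x with h | ⟨y, hy, h⟩
      · exact absurd h hx
      · obtain ⟨i, rfl, hl⟩ := Walk.mem_support_iff_exists_getVert.mp hy
        exact ⟨i, hl, Or.inr ⟨hx, h⟩⟩
  choose s hs hsx using hex
  have hsv : ∀ i ≤ p.length, s (p.getVert i) = i := by
    intro i hi
    rcases hsx (p.getVert i) with h | ⟨h, -⟩
    · exact (hp.getVert_injOn hi (hs _) h).symm
    · exact absurd (p.getVert_mem_support i) h
  have hedge := edge_class G htree p s hs (fun x => (hsx x).imp id And.right)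
  let B : ℕ → Finset V := fun i => univ.filter (fun x => s x = i)
  have hB : ∀ i x, x ∈ B i ↔ s x = i := by simp [B]
  have hvB : ∀ i ≤ p.length, p.getVert i ∈ B i := fun i hi => (hB _ _).2 (hsv i hi)
  have hBcard : ∀ i ≤ p.length, (B i).card ≤ 4 := by
    intro i hi
    by_cases hend : i = 0 ∨ i = p.length
    · have hsub : B i ⊆ {p.getVert i} := by
        intro x hx
        rw [hB] at hx
        rw [mem_singleton]
        have h := hsx x
        rw [hx] at h
        rcases h with h | ⟨h1, h2⟩
        · exact h
        · exfalso
          rcases hend with h | h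
          · rw [h, Walk.getVert_zero] at h2
            exact h1 (hu x h2)
          · rw [h, Walk.getVert_length] at h2
            exact h1 (hw x h2)
      have := card_le_card hsub
      simp at this
      omega
    · have hsub : insert (p.getVert (i - 1)) (insert (p.getVert (i + 1))
          ((B i).erase (p.getVert i))) ⊆ G.neighborFinset (p.getVert i) := by
        intro x hx
        rw [mem_neighborFinset]
        simp only [mem_insert, mem_erase] at hx
        rcases hx with rfl | rfl | ⟨hne, hx⟩
        · have := p.adj_getVert_succ (i := i - 1) (by omega)
          rw [show i - 1 + 1 = i by omega] at this
          exact this.symm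
        · exact p.adj_getVert_succ (by omega)
        · rw [hB] at hx
          have h := hsx x
          rw [hx] at h
          rcases h with h | ⟨h1, h2⟩
          · exact absurd h hne
          · exact h2.symm
      have h1 := card_le_card hsub
      rw [card_neighborFinset_eq_degree] at h1
      have h2 := hdeg (p.getVert i)
      have s1 := hsv (i - 1) (by omega)
      have s2 := hsv (i + 1) (by omega)
      rw [card_insert_of_notMem, card_insert_of_notMem, card_erase_of_mem (hvB i hi)] at h1
      · omega
      · simp only [mem_erase, hB, not_and]
        omega
      · simp only [mem_insert, mem_erase, hB, not_or, not_and]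
        refine ⟨fun h => ?_, by omega⟩
        rw [h] at s1
        omega
  let k : ℕ → ℕ := fun i => if i ≤ p.length then (B i).card else 1
  have hkB : ∀ i ≤ p.length, k i = (B i).card := fun i hi => by simp [k, hi]
  have hk1 : ∀ i, 1 ≤ k i := by
    intro i
    by_cases hi : i ≤ p.length
    · rw [hkB i hi]
      exact card_pos.mpr ⟨_, hvB i hi⟩
    · simp [k, hi]
  have hk4 : ∀ i, k i ≤ 4 := by
    intro i
    by_cases hi : i ≤ p.length
    · rw [hkB i hi]
      exact hBcard i hi
    · simp [k, hi]
  obtain ⟨o, ho⟩ := SA_exists (∑ j ∈ range p.length, k j) (k p.length) (hk1 _) (hk4 _)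
  obtain ⟨c, -, hc1, hc2⟩ := seq_exists k hk1 hk4 p.length o ho
  have hf : ∀ i, ∃ f : V → ℕ, i ≤ p.length → Set.InjOn f (B i) ∧ (∀ x ∈ B i, f x < k i) ∧
      f (p.getVert i) = c i := by
    intro i
    by_cases hi : i ≤ p.length
    · have h := (hc1 i hi).1
      rw [hkB i hi] at h ⊢
      obtain ⟨f, hf⟩ := block_label (B i) (p.getVert i) (hvB i hi) (c i) h
      exact ⟨f, fun _ => hf⟩
    · exact ⟨fun _ => 0, fun h => absurd h hi⟩
  choose f hf using hf
  let S : ℕ → ℕ := fun i => ∑ j ∈ range i, k j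
  have hS : ∀ i, S (i + 1) = S i + k i := fun i => sum_range_succ _ _
  have hSm : Monotone S := monotone_nat_of_le_succ fun i => by rw [hS]; omega
  have hcard : S (p.length + 1) = Fintype.card V := by
    have h := card_eq_sum_card_fiberwise (s := (univ : Finset V)) (t := range (p.length + 1))
      (f := s) (fun x _ => by simpa using Nat.lt_succ_of_le (hs x))
    rw [← Finset.card_univ, h]
    refine sum_congr rfl fun i hi => ?_
    exact hkB i (by simpa [Nat.lt_succ_iff] using hi)
  have hfk : ∀ x, f (s x) x < k (s x) := fun x => (hf (s x) (hs x)).2.1 x ((hB _ _).2 rfl)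
  have hfv : ∀ i ≤ p.length, f i (p.getVert i) = c i := fun i hi => (hf i hi).2.2
  have hleaf : ∀ x y, x ≠ y → y = p.getVert (s x) →
      Nat.Coprime (2 * (S (s x) + f (s x) x) + 1) (2 * (S (s y) + f (s y) y) + 1) := by
    intro x y hne hy
    have hsy : s y = s x := by rw [hy]; exact hsv _ (hs x)
    have hfy : f (s x) y = c (s x) := by rw [hy]; exact hfv _ (hs x)
    rw [hsy, hfy]
    refine cop_block _ _ _ _ (hk4 (s x)) (hc1 _ (hs x)) (hfk x) ?_
    rw [← hfy]
    intro h
    exact hne ((hf (s x) (hs x)).1 ((hB _ _).2 rfl) ((hB _ _).2 hsy) h)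
  have hspine : ∀ x y, (∃ i < p.length, x = p.getVert i ∧ y = p.getVert (i + 1)) →
      Nat.Coprime (2 * (S (s x) + f (s x) x) + 1) (2 * (S (s y) + f (s y) y) + 1) := by
    rintro x y ⟨i, hi, rfl, rfl⟩
    rw [hsv i hi.le, hsv (i + 1) hi, hfv i hi.le, hfv (i + 1) hi]
    exact hc2 i hi
  refine ⟨fun x => 2 * (S (s x) + f (s x) x) + 1, ?_, ?_, ?_⟩
  · intro x y hxy
    have hxy : S (s x) + f (s x) x = S (s y) + f (s y) y := by
      simp only at hxy
      omega
    have hx := hfk x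
    have hy := hfk y
    rcases lt_trichotomy (s x) (s y) with h | h | h
    · have h1 : S (s x + 1) ≤ S (s y) := hSm h
      rw [hS] at h1
      omega
    · refine (hf (s x) (hs x)).1 ((hB _ _).2 rfl) ((hB _ _).2 h.symm) ?_
      rw [← h] at hxy
      omega
    · have h1 : S (s y + 1) ≤ S (s x) := hSm h
      rw [hS] at h1
      omega
  · intro x
    refine ⟨⟨_, rfl⟩, ?_⟩
    have hx := hfk x
    have h1 : S (s x + 1) ≤ S (p.length + 1) := hSm (by have := hs x; omega)
    rw [hS, hcard] at h1
    simp only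
    omega
  · intro x y hxy
    rcases hedge x y hxy with (h | h) | (h | h)
    · exact hleaf x y hxy.ne h
    · exact hspine x y h
    · exact (hleaf y x hxy.ne.symm h).symm
    · exact (hspine y x h).symm
end

section
/- For every length and every number of toes t ≥ 1, the t-toed caterpillar is odd prime. That is, for every n ≥ 1 and t ≥ 1, the tree with spine u, v_1, ..., v_n, w in which each interior spine vertex v_i additionally has exactly t pendant leaves x_{i,1}, ..., x_{i,t} (so every interior vertex has degree t+2) admits an odd prime labeling. -/
/-- The `t`-toed caterpillar of length `n + 2`: the spine is the path
`u, v_0, v_1, ..., v_{n-1}, w` (with `u = Sum.inl 0` and `w = Sum.inl 1`), and each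
interior spine vertex `v_i` additionally has exactly `t` pendant leaves
`x_{i,0}, ..., x_{i,t-1}`, so each interior vertex has degree `t + 2`. -/
def tToedCaterpillar (n t : ℕ) : SimpleGraph (Fin 2 ⊕ (Fin n ⊕ (Fin n × Fin t))) :=
  SimpleGraph.fromRel (fun a b =>
    match a, b with
    | Sum.inl a, Sum.inr (Sum.inl i) => (a = 0 ∧ i.val = 0) ∨ (a = 1 ∧ i.val = n - 1)
    | Sum.inr (Sum.inl i), Sum.inr (Sum.inl i') => i'.val = i.val + 1
    | Sum.inr (Sum.inl i), Sum.inr (Sum.inr (i', _)) => i = i'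
    | _, _ => False)


section Part1

/-- Hall's theorem for the coprimality relation between `{1,3,…,2n-1}` and
`n` consecutive terms `a, a+2, …`. -/
theorem hall_reduction (n a : ℕ)
    (H : ∀ X Y : Finset ℕ, X ⊆ Finset.range n → Y ⊆ Finset.range n → X.Nonempty → Y.Nonempty →
      n + 1 ≤ X.card + Y.card →
      (∀ i ∈ X, ∀ j ∈ Y, ¬ Nat.Coprime (2 * i + 1) (a + 2 * j)) → False) :
    ∃ σ : Fin n → Fin n, Function.Injective σ ∧
      ∀ i, Nat.Coprime (2 * i.val + 1) (a + 2 * (σ i).val) := by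
  classical
  let t : Fin n → Finset (Fin n) := fun i =>
    Finset.univ.filter fun j => Nat.Coprime (2 * i.val + 1) (a + 2 * j.val)
  have key : ∀ s : Finset (Fin n), s.card ≤ (s.biUnion t).card := by
    intro s
    by_contra hlt
    push Not at hlt
    set Y : Finset (Fin n) := (s.biUnion t)ᶜ with hY
    have hYc : Y.card = n - (s.biUnion t).card := by
      rw [hY, Finset.card_compl, Fintype.card_fin]
    have hle : s.card ≤ n := by simpa using Finset.card_le_univ s
    have hs : 0 < s.card := by omega
    have hYp : 0 < Y.card := by omega
    refine H (s.image Fin.val) (Y.image Fin.val) ?_ ?_ ?_ ?_ ?_ ?_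
    · intro x hx
      obtain ⟨i, _, rfl⟩ := Finset.mem_image.1 hx
      exact Finset.mem_range.2 i.2
    · intro x hx
      obtain ⟨i, _, rfl⟩ := Finset.mem_image.1 hx
      exact Finset.mem_range.2 i.2
    · exact (Finset.card_pos.1 hs).image _
    · exact (Finset.card_pos.1 hYp).image _
    · rw [Finset.card_image_of_injective _ Fin.val_injective,
        Finset.card_image_of_injective _ Fin.val_injective]
      omega
    · intro i hi j hj hc
      obtain ⟨i, hi', rfl⟩ := Finset.mem_image.1 hi
      obtain ⟨j, hj', rfl⟩ := Finset.mem_image.1 hj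
      rw [hY, Finset.mem_compl] at hj'
      apply hj'
      rw [Finset.mem_biUnion]
      exact ⟨i, hi', Finset.mem_filter.2 ⟨Finset.mem_univ _, hc⟩⟩
  obtain ⟨σ, hσ, h⟩ := (Finset.all_card_le_biUnion_card_iff_exists_injective t).1 key
  exact ⟨σ, hσ, fun i => by simpa [t] using h i⟩

/-- The number of multiples of an odd `d` among `a, a+2, …, a+2(n-1)`. -/
theorem card_dvd_le (n a d : ℕ) (hd : Odd d) :
    ((Finset.range n).filter fun j => d ∣ a + 2 * j).card ≤ (n - 1) / d + 1 := by
  rw [← Finset.card_range ((n - 1) / d + 1)]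
  apply Finset.card_le_card_of_injOn (fun j => j / d)
  · intro j hj
    simp only [Finset.coe_filter, Finset.mem_range, Set.mem_ofPred_eq] at hj
    simp only [Finset.coe_range, Set.mem_Iio]
    exact Nat.lt_succ_of_le (Nat.div_le_div_right (by omega))
  · intro i hi j hj hij
    simp only [Finset.coe_filter, Finset.mem_range, Set.mem_ofPred_eq] at hi hj
    have hc : Nat.Coprime d 2 := (Nat.coprime_two_right).2 hd
    have h1 : a + 2 * i ≡ a + 2 * j [MOD d] :=
      ((Nat.modEq_zero_iff_dvd).2 hi.2).trans ((Nat.modEq_zero_iff_dvd).2 hj.2).symm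
    have h2 : i ≡ j [MOD d] :=
      Nat.ModEq.cancel_left_of_coprime hc (Nat.ModEq.add_left_cancel' a h1)
    have h3 : i % d = j % d := h2
    simp only at hij
    rw [← Nat.div_add_mod i d, ← Nat.div_add_mod j d, hij, h3]

/-- One step of the kernel-friendly trial division test below. -/
def wstep (n : ℕ) (ih : ℕ → ℕ → ℕ → Bool) (p s b : ℕ) : Bool :=
    Bool.rec (Bool.rec (Bool.rec (ih (Nat.add p 2) s b)
       (Bool.rec (Bool.rec false
          (ih (Nat.add p 2) (Nat.div s p) (Nat.sub b (Nat.succ (Nat.div n p))))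
          (Nat.ble (Nat.succ (Nat.div n p)) b))
        (ih p (Nat.div s p) b) (Nat.beq (Nat.mod (Nat.div s p) p) 0))
      (Nat.beq (Nat.mod s p) 0))
    true (Bool.rec false (Nat.ble (Nat.succ s) (Nat.mul p (Nat.mul p p)))
      (Nat.ble (Nat.mul 2 (Nat.succ (Nat.div n p))) b)))
   (Bool.rec (Nat.ble (Nat.succ (Nat.div n s)) b) true (Nat.ble s 1)) (Nat.ble (Nat.succ s) (Nat.mul p p))

/-- Kernel-friendly test: `wok n fuel p s b = true` certifies that an odd `s` without prime
factors below `p` is non-coprime to at most `b` of any `n + 1` consecutive terms `a + 2 * j`. -/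
def wok (n : ℕ) (fuel : ℕ) : ℕ → ℕ → ℕ → Bool :=
  Nat.rec (fun _ _ _ => false) (fun _ ih => wstep n ih) fuel

/-- Number of `i ∈ [lo, lo + 2^d)`, `i < m`, for which `2 * i + 1` passes the test. -/
def wcnt (n b m : ℕ) (d : ℕ) : ℕ → ℕ :=
  Nat.rec (fun lo => Bool.rec 0 (Bool.rec 0 1 (wok n 100 3 (Nat.succ (Nat.mul 2 lo)) b))
      (Nat.ble (Nat.succ lo) m))
  (fun d ih lo => Bool.rec (Nat.add (ih lo) (ih (Nat.add lo (Nat.pow 2 d)))) 0 (Nat.ble m lo)) d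

theorem wok_succ (n f p s b : ℕ) : wok n (f + 1) p s b =
    if s < p * p then decide (s ≤ 1 ∨ n / s + 1 ≤ b)
    else if 2 * (n / p + 1) ≤ b ∧ s < p * (p * p) then true
    else if s % p = 0 then
      (if s / p % p = 0 then wok n f p (s / p) b
       else if n / p + 1 ≤ b then wok n f (p + 2) (s / p) (b - (n / p + 1)) else false)
    else wok n f (p + 2) s b := by
  have e1 : ∀ x y : ℕ, Nat.beq x y = decide (x = y) := by
    intro x y
    rw [Bool.eq_iff_iff, decide_eq_true_eq]
    exact ⟨Nat.eq_of_beq_eq_true, fun h => h ▸ Nat.beq_refl x⟩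
  have e2 : ∀ x y : ℕ, Nat.ble x y = decide (x ≤ y) := by
    intro x y
    rw [Bool.eq_iff_iff, decide_eq_true_eq, Nat.ble_eq]
  show wstep n (wok n f) p s b = _
  generalize wok n f = ih
  unfold wstep
  simp only [e1, e2]
  change (Bool.rec (Bool.rec (Bool.rec (ih (p + 2) s b)
       (Bool.rec (Bool.rec false
          (ih (p + 2) (s / p) (b - (n / p + 1)))
          (decide (n / p + 1 ≤ b)))
        (ih p (s / p) b) (decide (s / p % p = 0)))
      (decide (s % p = 0)))
    true (Bool.rec false (decide (s < p * (p * p)))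
      (decide (2 * (n / p + 1) ≤ b))))
   (Bool.rec (decide (n / s + 1 ≤ b)) true (decide (s ≤ 1))) (decide (s < p * p)) : Bool) = _
  have hb : ∀ (x y : Bool) (P : Prop) [Decidable P],
      (Bool.rec x y (decide P) : Bool) = if P then y else x := by
    intro x y P _
    by_cases h : P <;> simp [h]
  simp only [hb]
  by_cases h1 : s < p * p
  · simp only [h1, if_true]
    by_cases h2 : s ≤ 1 <;> simp [h2]
  · simp only [h1, if_false]
    by_cases h2 : 2 * (n / p + 1) ≤ b
    · simp only [h2, if_true, true_and]
      by_cases h3 : s < p * (p * p) <;> simp [h3]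
    · simp [h2]

/-- Number of terms not coprime to `s`. -/
def nonCop (n a s : ℕ) : ℕ := ((Finset.range n).filter fun j => ¬ Nat.Coprime s (a + 2 * j)).card

theorem nonCop_one (n a : ℕ) : nonCop n a 1 = 0 := by simp [nonCop]

theorem nonCop_le_of_imp (n a s t : ℕ) (h : ∀ m, Nat.Coprime t m → Nat.Coprime s m) :
    nonCop n a s ≤ nonCop n a t := by
  apply Finset.card_le_card
  intro j hj
  simp only [Finset.mem_filter] at hj ⊢
  exact ⟨hj.1, fun hc => hj.2 (h _ hc)⟩

theorem nonCop_mul (n a s t : ℕ) : nonCop n a (s * t) ≤ nonCop n a s + nonCop n a t := by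
  unfold nonCop
  refine le_trans (Finset.card_le_card ?_) (Finset.card_union_le _ _)
  intro j hj
  simp only [Finset.mem_filter, Finset.mem_union, Nat.coprime_mul_iff_left] at hj ⊢
  tauto

theorem nonCop_prime (n a p : ℕ) (hp : p.Prime) (h2 : Odd p) :
    nonCop n a p ≤ (n - 1) / p + 1 := by
  refine le_trans (Finset.card_le_card ?_) (card_dvd_le n a p h2)
  intro j hj
  simp only [Finset.mem_filter] at hj ⊢
  exact ⟨hj.1, by_contra fun h => hj.2 ((Nat.Prime.coprime_iff_not_dvd hp).2 h)⟩

theorem prime_of_rough {p s : ℕ} (hs : 1 < s) (hr : ∀ q, q.Prime → q ∣ s → p ≤ q)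
    (h : s < p * p) : s.Prime := by
  by_contra hn
  have h1 := Nat.minFac_sq_le_self (by omega) hn
  have h2 := hr _ (Nat.minFac_prime (by omega)) (Nat.minFac_dvd s)
  nlinarith

theorem wok_sound (n a f : ℕ) : ∀ p s b, 3 ≤ p → Odd p → Odd s →
    (∀ q, q.Prime → q ∣ s → p ≤ q) → wok (n - 1) f p s b = true → nonCop n a s ≤ b := by
  induction f with
  | zero => intro p s b _ _ _ _ h; simp [wok] at h
  | succ f ih =>
    intro p s b hp hpo hso hr h
    have hs0 : 0 < s := hso.pos
    have big : ∀ q, q.Prime → q ∣ s → nonCop n a q ≤ (n - 1) / p + 1 := by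
      intro q hq hqs
      refine (nonCop_prime n a q hq (hso.of_dvd_nat hqs)).trans ?_
      exact Nat.succ_le_succ (Nat.div_le_div_left (hr q hq hqs) (by omega))
    rw [wok_succ] at h
    split_ifs at h with h1 h2 h3 h4 h5
    · rw [decide_eq_true_eq] at h
      rcases Nat.lt_or_ge 1 s with hs | hs
      · have := nonCop_prime n a s (prime_of_rough hs hr h1) hso
        omega
      · have : s = 1 := by omega
        subst this
        rw [nonCop_one]; omega
    · -- at most two prime factors
      have hs1 : 1 < s := by nlinarith
      by_cases hpr : s.Prime
      · have := big s hpr dvd_rfl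
        omega
      · have hm := Nat.minFac_prime (show s ≠ 1 by omega)
        have hmd := Nat.minFac_dvd s
        obtain ⟨t, ht⟩ := hmd
        have hpm := hr _ hm (Nat.minFac_dvd s)
        have ht1 : 1 < t := by
          rcases Nat.lt_or_ge 1 t with h' | h'
          · exact h'
          · interval_cases t
            · omega
            · rw [mul_one] at ht
              exact absurd (ht ▸ hm) hpr
        have htr : ∀ q, q.Prime → q ∣ t → p ≤ q := fun q hq hqt =>
          hr q hq (hqt.trans (Dvd.intro_left _ ht.symm))
        have htp : t.Prime := by
          apply prime_of_rough ht1 htr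
          by_contra hcon
          push Not at hcon
          have : p * (p * p) ≤ s := by
            rw [ht]; exact Nat.mul_le_mul hpm hcon
          omega
        have b1 := big _ hm (Nat.minFac_dvd s)
        have b2 := big t htp (Dvd.intro_left _ ht.symm)
        have b3 := nonCop_mul n a s.minFac t
        rw [← ht] at b3
        omega
    · -- p ∣ s, p ∣ s / p
      have hd : p ∣ s := Nat.dvd_of_mod_eq_zero h3
      have hd2 : p ∣ s / p := Nat.dvd_of_mod_eq_zero h4
      have hsp : s / p ∣ s := Nat.div_dvd_of_dvd hd
      have := ih p (s / p) b hp hpo (hso.of_dvd_nat hsp)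
        (fun q hq hqs => hr q hq (hqs.trans hsp)) h
      refine le_trans (nonCop_le_of_imp _ _ _ _ ?_) this
      intro m hm
      have hs' : s = p * (s / p) := (Nat.mul_div_cancel' hd).symm
      rw [hs', Nat.coprime_mul_iff_left]
      exact ⟨Nat.Coprime.coprime_dvd_left hd2 hm, hm⟩
    · have hd : p ∣ s := Nat.dvd_of_mod_eq_zero h3
      have hsp : s / p ∣ s := Nat.div_dvd_of_dvd hd
      have hpp : p.Prime := by
        have hm := Nat.minFac_prime (show p ≠ 1 by omega)
        have h1 := hr _ hm ((Nat.minFac_dvd p).trans hd)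
        have h2 := Nat.minFac_le (show 0 < p by omega)
        have : p.minFac = p := le_antisymm h2 h1
        exact this ▸ hm
      have := ih (p + 2) (s / p) (b - ((n - 1) / p + 1)) (by omega) (by
          rw [Nat.odd_iff] at *; omega) (hso.of_dvd_nat hsp)
        (fun q hq hqs => by
          have g1 := hr q hq (hqs.trans hsp)
          have g2 : q ≠ p := by
            rintro rfl
            exact h4 (Nat.mod_eq_zero_of_dvd hqs)
          have g3 : Odd q := hso.of_dvd_nat (hqs.trans hsp)
          rw [Nat.odd_iff] at *
          omega) h
      have b1 := big p hpp hd
      have b3 := nonCop_mul n a p (s / p)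
      rw [Nat.mul_div_cancel' hd] at b3
      omega
    · exact ih (p + 2) s b (by omega) (by rw [Nat.odd_iff] at *; omega) hso
        (fun q hq hqs => by
          have g1 := hr q hq hqs
          have g2 : q ≠ p := by
            rintro rfl
            exact h3 (Nat.mod_eq_zero_of_dvd hqs)
          have g3 : Odd q := hso.of_dvd_nat hqs
          rw [Nat.odd_iff] at *
          omega) h

theorem wcnt_sound (n a b m d : ℕ) : ∀ lo, wcnt (n - 1) b m d lo ≤
    ((Finset.Ico lo (lo + 2 ^ d)).filter fun i => i < m ∧ nonCop n a (2 * i + 1) ≤ b).card := by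
  induction d with
  | zero =>
    intro lo
    show (Bool.rec 0 (Bool.rec 0 1 (wok (n - 1) 100 3 (2 * lo + 1) b)) (Nat.ble (lo + 1) m) : ℕ) ≤ _
    rcases hc : Nat.ble (lo + 1) m with _ | _
    · exact Nat.zero_le _
    · rcases hw : wok (n - 1) 100 3 (2 * lo + 1) b with _ | _
      · exact Nat.zero_le _
      · show 1 ≤ _
        apply Finset.card_pos.2
        refine ⟨lo, ?_⟩
        simp only [Finset.mem_filter, Finset.mem_Ico]
        refine ⟨by simp, Nat.le_of_ble_eq_true hc, ?_⟩
        refine wok_sound n a 100 3 _ b le_rfl (by decide) ⟨lo, rfl⟩ ?_ hw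
        intro q hq hqs
        have := hq.two_le
        rcases Nat.lt_or_ge 2 q with h | h
        · exact h
        · have : q = 2 := by omega
          subst this; omega
  | succ d ih =>
    intro lo
    show (Bool.rec (wcnt (n - 1) b m d lo + wcnt (n - 1) b m d (lo + 2 ^ d)) 0 (Nat.ble m lo) : ℕ) ≤ _
    rcases hc : Nat.ble m lo with _ | _
    · show wcnt (n - 1) b m d lo + wcnt (n - 1) b m d (lo + 2 ^ d) ≤ _
      refine (Nat.add_le_add (ih lo) (ih (lo + 2 ^ d))).trans ?_
      rw [← Finset.card_union_of_disjoint, ← Finset.filter_union]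
      · apply Finset.card_le_card
        apply Finset.filter_subset_filter
        intro x hx
        simp only [Finset.mem_union, Finset.mem_Ico] at hx ⊢
        rw [pow_succ]
        omega
      · apply Finset.disjoint_filter_filter
        rw [Finset.disjoint_left]
        intro x hx hx'
        simp only [Finset.mem_Ico] at hx hx'
        omega
    · exact Nat.zero_le _

/-- If the degree sequence is small enough there is no violator. -/
theorem no_violator_of_counts (n a : ℕ)
    (hc : ∀ b < n, b + 1 ≤ ((Finset.range n).filter fun i => nonCop n a (2 * i + 1) ≤ b).card)
    (X Y : Finset ℕ) (hX : X ⊆ Finset.range n) (hY : Y ⊆ Finset.range n)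
    (hYn : Y.Nonempty) (hcard : n + 1 ≤ X.card + Y.card)
    (h : ∀ i ∈ X, ∀ j ∈ Y, ¬ Nat.Coprime (2 * i + 1) (a + 2 * j)) : False := by
  have hY0 : 0 < Y.card := hYn.card_pos
  have hYle : Y.card ≤ n := by simpa using Finset.card_le_card hY
  have h1 := hc (Y.card - 1) (by omega)
  have hdis : Disjoint X ((Finset.range n).filter fun i => nonCop n a (2 * i + 1) ≤ Y.card - 1) := by
    rw [Finset.disjoint_left]
    intro i hi hi'
    have h2 : Y.card ≤ nonCop n a (2 * i + 1) := by
      apply Finset.card_le_card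
      intro j hj
      exact Finset.mem_filter.2 ⟨hY hj, h i hi j hj⟩
    have h3 := (Finset.mem_filter.1 hi').2
    omega
  have h4 := Finset.card_le_card (Finset.union_subset hX (Finset.filter_subset
    (fun i => nonCop n a (2 * i + 1) ≤ Y.card - 1) (Finset.range n)))
  rw [Finset.card_union_of_disjoint hdis, Finset.card_range] at h4
  omega

theorem nonCop_mono {n m : ℕ} (h : n ≤ m) (a s : ℕ) : nonCop n a s ≤ nonCop m a s := by
  apply Finset.card_le_card
  apply Finset.filter_subset_filter
  simpa using h

/-- The chain check for a block of values of `n`. -/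
def chainOk (n1 n2 d : ℕ) : ℕ → List ℕ → Bool
  | b, [] => (Nat.blt b n1) && Nat.beq (wcnt (n2 - 1) b n2 d 0) n2
  | b, b' :: l => Nat.ble b' (wcnt (n2 - 1) b n1 d 0) && chainOk n1 n2 d b' l

theorem wcnt_range (n2 a b m d n : ℕ) (hn : n ≤ n2) (hm : m ≤ n) :
    wcnt (n2 - 1) b m d 0 ≤
      ((Finset.range n).filter fun i => nonCop n a (2 * i + 1) ≤ b).card := by
  refine (wcnt_sound n2 a b m d 0).trans (Finset.card_le_card ?_)
  intro i hi
  simp only [Finset.mem_filter, Finset.mem_range] at hi ⊢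
  exact ⟨by omega, (nonCop_mono hn _ _).trans hi.2.2⟩

theorem chain_sound (n1 n2 d n a : ℕ) (h1 : n1 ≤ n) (h2 : n ≤ n2) :
    ∀ (l : List ℕ) (b0 : ℕ), chainOk n1 n2 d b0 l = true → ∀ b, b0 ≤ b → b < n →
      b + 1 ≤ ((Finset.range n).filter fun i => nonCop n a (2 * i + 1) ≤ b).card := by
  intro l
  induction l with
  | nil =>
    intro b0 h b hb hbn
    rw [chainOk, Bool.and_eq_true] at h
    have h3 := Nat.eq_of_beq_eq_true h.2
    have h4 := wcnt_sound n2 a b0 n2 d 0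
    rw [h3] at h4
    have h5 : ((Finset.range n).filter fun i => nonCop n a (2 * i + 1) ≤ b) = Finset.range n := by
      have h6 : ((Finset.Ico 0 (0 + 2 ^ d)).filter
          fun i => i < n2 ∧ nonCop n2 a (2 * i + 1) ≤ b0) = Finset.range n2 := by
        apply Finset.eq_of_subset_of_card_le
        · intro i hi
          simp only [Finset.mem_filter] at hi
          exact Finset.mem_range.2 hi.2.1
        · simpa using h4
      apply Finset.filter_true_of_mem
      intro i hi
      have : i ∈ Finset.range n2 := Finset.range_mono h2 hi
      rw [← h6, Finset.mem_filter] at this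
      exact (nonCop_mono h2 _ _).trans (this.2.2.trans hb)
    rw [h5, Finset.card_range]
    omega
  | cons b' l ih =>
    intro b0 h b hb hbn
    rw [chainOk, Bool.and_eq_true] at h
    rcases Nat.lt_or_ge b b' with hlt | hge
    · have h3 := Nat.le_of_ble_eq_true h.1
      have h4 := wcnt_range n2 a b0 n1 d n h2 h1
      have h5 : ((Finset.range n).filter fun i => nonCop n a (2 * i + 1) ≤ b0).card ≤
          ((Finset.range n).filter fun i => nonCop n a (2 * i + 1) ≤ b).card := by
        apply Finset.card_le_card
        intro i hi
        simp only [Finset.mem_filter] at hi ⊢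
        exact ⟨hi.1, hi.2.trans hb⟩
      omega
    · exact ih b' h.2 b hge hbn

theorem small_case (n : ℕ) (h1 : 1 ≤ n) (h2 : n ≤ 4529) (a : ℕ) : ∀ b < n,
    b + 1 ≤ ((Finset.range n).filter fun i => nonCop n a (2 * i + 1) ≤ b).card := by
  intro b hb
  rcases Nat.lt_or_ge 1 n with h | h
  swap
  · exact chain_sound 1 1 1 n a (by omega) (by omega) [] 0 (by decide +kernel) b (by omega) hb
  clear h1
  have h1 := h
  clear h
  rcases Nat.lt_or_ge 3 n with h | h
  swap
  · exact chain_sound 2 3 2 n a (by omega) (by omega) [1] 0 (by decide +kernel) b (by omega) hb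
  clear h1
  have h1 := h
  clear h
  rcases Nat.lt_or_ge 7 n with h | h
  swap
  · exact chain_sound 4 7 3 n a (by omega) (by omega) [1, 2, 3] 0 (by decide +kernel) b (by omega) hb
  clear h1
  have h1 := h
  clear h
  rcases Nat.lt_or_ge 12 n with h | h
  swap
  · exact chain_sound 8 12 4 n a (by omega) (by omega) [1, 2, 4, 7] 0 (by decide +kernel) b (by omega) hb
  clear h1
  have h1 := h
  clear h
  rcases Nat.lt_or_ge 21 n with h | h
  swap
  · exact chain_sound 13 21 5 n a (by omega) (by omega) [1, 2, 6, 9, 11, 12] 0 (by decide +kernel) b (by omega) hb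
  clear h1
  have h1 := h
  clear h
  rcases Nat.lt_or_ge 39 n with h | h
  swap
  · exact chain_sound 22 39 6 n a (by omega) (by omega) [1, 3, 10, 14, 18, 20, 21] 0 (by decide +kernel) b (by omega) hb
  clear h1
  have h1 := h
  clear h
  rcases Nat.lt_or_ge 56 n with h | h
  swap
  · exact chain_sound 40 56 6 n a (by omega) (by omega) [1, 7, 19, 29, 37, 39] 0 (by decide +kernel) b (by omega) hb
  clear h1
  have h1 := h
  clear h
  rcases Nat.lt_or_ge 81 n with h | h
  swap
  · exact chain_sound 57 81 7 n a (by omega) (by omega) [1, 9, 27, 41, 53, 56] 0 (by decide +kernel) b (by omega) hb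
  clear h1
  have h1 := h
  clear h
  rcases Nat.lt_or_ge 119 n with h | h
  swap
  · exact chain_sound 82 119 7 n a (by omega) (by omega) [1, 9, 33, 52, 74, 81] 0 (by decide +kernel) b (by omega) hb
  clear h1
  have h1 := h
  clear h
  rcases Nat.lt_or_ge 175 n with h | h
  swap
  · exact chain_sound 120 175 8 n a (by omega) (by omega) [1, 13, 47, 76, 107, 117, 119] 0 (by decide +kernel) b (by omega) hb
  clear h1
  have h1 := h
  clear h
  rcases Nat.lt_or_ge 255 n with h | h
  swap
  · exact chain_sound 176 255 8 n a (by omega) (by omega) [1, 17, 66, 110, 158, 173] 0 (by decide +kernel) b (by omega) hb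
  clear h1
  have h1 := h
  clear h
  rcases Nat.lt_or_ge 375 n with h | h
  swap
  · exact chain_sound 256 375 9 n a (by omega) (by omega) [1, 24, 94, 158, 223, 251, 254] 0 (by decide +kernel) b (by omega) hb
  clear h1
  have h1 := h
  clear h
  rcases Nat.lt_or_ge 549 n with h | h
  swap
  · exact chain_sound 376 549 10 n a (by omega) (by omega) [1, 33, 131, 232, 327, 368, 372] 0 (by decide +kernel) b (by omega) hb
  clear h1
  have h1 := h
  clear h
  rcases Nat.lt_or_ge 714 n with h | h
  swap
  · exact chain_sound 550 714 10 n a (by omega) (by omega) [1, 58, 203, 349, 498, 548] 0 (by decide +kernel) b (by omega) hb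
  clear h1
  have h1 := h
  clear h
  rcases Nat.lt_or_ge 930 n with h | h
  swap
  · exact chain_sound 715 930 10 n a (by omega) (by omega) [1, 69, 254, 449, 645, 713, 714] 0 (by decide +kernel) b (by omega) hb
  clear h1
  have h1 := h
  clear h
  rcases Nat.lt_or_ge 1210 n with h | h
  swap
  · exact chain_sound 931 1210 11 n a (by omega) (by omega) [1, 88, 334, 580, 839, 928, 929] 0 (by decide +kernel) b (by omega) hb
  clear h1
  have h1 := h
  clear h
  rcases Nat.lt_or_ge 1575 n with h | h
  swap
  · exact chain_sound 1211 1575 11 n a (by omega) (by omega) [1, 112, 441, 759, 1089, 1205, 1209] 0 (by decide +kernel) b (by omega) hb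
  clear h1
  have h1 := h
  clear h
  rcases Nat.lt_or_ge 2051 n with h | h
  swap
  · exact chain_sound 1576 2051 12 n a (by omega) (by omega) [1, 138, 566, 979, 1417, 1569, 1575] 0 (by decide +kernel) b (by omega) hb
  clear h1
  have h1 := h
  clear h
  rcases Nat.lt_or_ge 2670 n with h | h
  swap
  · exact chain_sound 2052 2670 12 n a (by omega) (by omega) [1, 180, 750, 1282, 1843, 2041, 2049] 0 (by decide +kernel) b (by omega) hb
  clear h1
  have h1 := h
  clear h
  rcases Nat.lt_or_ge 3477 n with h | h
  swap
  · exact chain_sound 2671 3477 12 n a (by omega) (by omega) [1, 220, 958, 1658, 2393, 2657, 2669] 0 (by decide +kernel) b (by omega) hb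
  clear h1
  have h1 := h
  clear h
  exact chain_sound 3478 4529 13 n a (by omega) (by omega) [1, 278, 1227, 2157, 3110, 3456, 3475] 0 (by decide +kernel) b (by omega) hb

end Part1

section Part2

theorem periodic_cop (b q M : ℕ) : Function.Periodic (fun i => Nat.Coprime (b + q * i) M) M := by
  intro i
  have : b + q * (i + M) = (b + q * i) + q * M := by ring
  simp only [this, eq_iff_iff]
  exact Nat.coprime_add_mul_right_left _ _ _

theorem cop_period (b q M : ℕ) (hM : 0 < M) (hq : Nat.Coprime q M) :
    ((Finset.range M).filter fun i => Nat.Coprime (b + q * i) M).card = M.totient := by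
  rw [Nat.totient]
  have hinj : ∀ i j, i < M → j < M → (b + q * i) % M = (b + q * j) % M → i = j := by
    intro i j hi hj h
    have h1 : q * i ≡ q * j [MOD M] := Nat.ModEq.add_left_cancel' b h
    have h2 : i ≡ j [MOD M] := Nat.ModEq.cancel_left_of_coprime hq.symm h1
    exact Nat.ModEq.eq_of_lt_of_lt h2 hi hj
  have hsub : (Finset.range M).image (fun i => (b + q * i) % M) = Finset.range M := by
    apply Finset.eq_of_subset_of_card_le
    · intro x hx
      obtain ⟨i, _, rfl⟩ := Finset.mem_image.1 hx
      exact Finset.mem_range.2 (Nat.mod_lt _ hM)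
    · rw [Finset.card_image_of_injOn]
      intro i hi j hj h
      exact hinj i j (by simpa using hi) (by simpa using hj) h
  have hcm : ∀ x, Nat.Coprime M (x % M) ↔ Nat.Coprime x M := by
    intro x
    rw [Nat.Coprime, Nat.Coprime, Nat.gcd_comm M, ← Nat.gcd_rec, Nat.gcd_comm]
  refine Finset.card_bij (fun i _ => (b + q * i) % M) ?_ ?_ ?_
  · intro i hi
    simp only [Finset.mem_filter, Finset.mem_range] at hi ⊢
    exact ⟨Nat.mod_lt _ hM, (hcm _).2 hi.2⟩
  · intro i hi j hj h
    simp only [Finset.mem_filter, Finset.mem_range] at hi hj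
    exact hinj i j hi.1 hj.1 h
  · intro x hx
    simp only [Finset.mem_filter, Finset.mem_range] at hx
    have : x ∈ (Finset.range M).image (fun i => (b + q * i) % M) := by
      rw [hsub]; exact Finset.mem_range.2 hx.1
    obtain ⟨i, hi, rfl⟩ := Finset.mem_image.1 this
    exact ⟨i, Finset.mem_filter.2 ⟨hi, (hcm _).1 hx.2⟩, rfl⟩

theorem cop_mul (b q M : ℕ) (hM : 0 < M) (hq : Nat.Coprime q M) (k : ℕ) :
    ((Finset.range (k * M)).filter fun i => Nat.Coprime (b + q * i) M).card = k * M.totient := by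
  have hp := periodic_cop b q M
  induction k with
  | zero => simp
  | succ k ih =>
    have h1 := Nat.filter_Ico_card_eq_of_periodic (k * M) M _ hp
    rw [Nat.count_eq_card_filter_range, cop_period b q M hM hq] at h1
    have h2 : Finset.range ((k + 1) * M) = Finset.range (k * M) ∪ Finset.Ico (k * M) (k * M + M) := by
      ext x
      simp only [Finset.mem_range, Finset.mem_union, Finset.mem_Ico]
      rw [add_mul, one_mul]
      omega
    rw [h2, Finset.filter_union, Finset.card_union_of_disjoint, ih, h1, add_mul, one_mul]
    apply Finset.disjoint_filter_filter
    rw [Finset.disjoint_left]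
    intro x hx hx'
    simp only [Finset.mem_range, Finset.mem_Ico] at hx hx'
    omega

/-- The density `φ(M)/M`. -/
noncomputable def dens (M : ℕ) : ℝ := (M.totient : ℝ) / M

theorem dens_nonneg (M : ℕ) : 0 ≤ dens M := by unfold dens; positivity

theorem dens_pos {M : ℕ} (h : 0 < M) : 0 < dens M := by
  unfold dens
  have := Nat.totient_pos.2 h
  positivity

theorem cop_lower (b q M : ℕ) (hM : 0 < M) (hq : Nat.Coprime q M) (c : ℕ) :
    dens M * ((c : ℝ) - M) ≤
      (((Finset.range c).filter fun i => Nat.Coprime (b + q * i) M).card : ℝ) := by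
  have h1 : c / M * M.totient ≤ ((Finset.range c).filter fun i => Nat.Coprime (b + q * i) M).card := by
    rw [← cop_mul b q M hM hq (c / M)]
    apply Finset.card_le_card
    apply Finset.filter_subset_filter
    exact Finset.range_mono (Nat.div_mul_le_self c M)
  have h2 : (c : ℝ) - M ≤ ((c / M : ℕ) : ℝ) * M := by
    have : c < (c / M) * M + M := by
      have := Nat.lt_div_mul_add (a := c) hM
      omega
    have h3 : (c : ℝ) < ((c / M : ℕ) : ℝ) * M + M := by exact_mod_cast this
    linarith
  have h3 : ((c / M : ℕ) : ℝ) * M.totient ≤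
    (((Finset.range c).filter fun i => Nat.Coprime (b + q * i) M).card : ℝ) := by exact_mod_cast h1
  refine le_trans ?_ h3
  have hM' : (0 : ℝ) < M := by exact_mod_cast hM
  have : ((c / M : ℕ) : ℝ) * M.totient = dens M * (((c / M : ℕ) : ℝ) * M) := by
    unfold dens; field_simp
  rw [this]
  exact mul_le_mul_of_nonneg_left h2 (dens_nonneg M)

theorem cop_upper (b q M : ℕ) (hM : 0 < M) (hq : Nat.Coprime q M) (c : ℕ) :
    (((Finset.range c).filter fun i => Nat.Coprime (b + q * i) M).card : ℝ) ≤
      dens M * ((c : ℝ) + M) := by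
  have h1 : ((Finset.range c).filter fun i => Nat.Coprime (b + q * i) M).card ≤
      (c / M + 1) * M.totient := by
    rw [← cop_mul b q M hM hq (c / M + 1)]
    apply Finset.card_le_card
    apply Finset.filter_subset_filter
    apply Finset.range_mono
    have := Nat.lt_div_mul_add (a := c) hM
    rw [add_mul, one_mul]
    omega
  have h2 : ((c / M : ℕ) : ℝ) * M ≤ c := by exact_mod_cast Nat.div_mul_le_self c M
  have h3 : (((Finset.range c).filter fun i => Nat.Coprime (b + q * i) M).card : ℝ) ≤
      (((c / M : ℕ) : ℝ) + 1) * M.totient := by exact_mod_cast h1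
  refine h3.trans ?_
  have hM' : (0 : ℝ) < M := by exact_mod_cast hM
  have : (((c / M : ℕ) : ℝ) + 1) * M.totient = dens M * (((c / M : ℕ) : ℝ) * M + M) := by
    unfold dens; field_simp
  rw [this]
  exact mul_le_mul_of_nonneg_left (by linarith) (dens_nonneg M)

/-- Multiples of `p` coprime to `M` among `a + 2 * j`. -/
theorem dvd_cop_upper (n a p M : ℕ) (hM : Odd M) (hp : Odd p) (hpM : Nat.Coprime p M) :
    (((Finset.range n).filter fun j => p ∣ a + 2 * j ∧ Nat.Coprime (a + 2 * j) M).card : ℝ) ≤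
      dens M * ((n : ℝ) / p + 1 + M) := by
  have hp0 : 0 < p := hp.pos
  set S := (Finset.range n).filter fun j => p ∣ a + 2 * j ∧ Nat.Coprime (a + 2 * j) M with hS
  rcases S.eq_empty_or_nonempty with h | hne
  · rw [h]
    simp only [Finset.card_empty, Nat.cast_zero]
    have := dens_nonneg M
    positivity
  · set j0 := S.min' hne with hj0
    have hj0S : j0 ∈ S := S.min'_mem hne
    have hmin : ∀ j ∈ S, j0 ≤ j := fun j hj => S.min'_le j hj
    have hj0' := (Finset.mem_filter.1 hj0S)
    have hstep : ∀ j ∈ S, ∃ i, j = j0 + p * i := by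
      intro j hj
      have h1 := (Finset.mem_filter.1 hj).2.1
      have h2 : a + 2 * j0 ≡ a + 2 * j [MOD p] :=
        ((Nat.modEq_zero_iff_dvd).2 hj0'.2.1).trans ((Nat.modEq_zero_iff_dvd).2 h1).symm
      have h3 : j0 ≡ j [MOD p] :=
        Nat.ModEq.cancel_left_of_coprime ((Nat.coprime_two_right).2 hp)
          (Nat.ModEq.add_left_cancel' a h2)
      obtain ⟨i, hi⟩ := (Nat.modEq_iff_dvd' (hmin j hj)).1 h3
      exact ⟨i, by have := hmin j hj; omega⟩
    have hcard : S.card ≤ ((Finset.range ((n - 1) / p + 1)).filter fun i =>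
        Nat.Coprime ((a + 2 * j0) + (2 * p) * i) M).card := by
      have : S ⊆ ((Finset.range ((n - 1) / p + 1)).filter fun i =>
        Nat.Coprime ((a + 2 * j0) + (2 * p) * i) M).image (fun i => j0 + p * i) := by
        intro j hj
        obtain ⟨i, hi⟩ := hstep j hj
        rw [Finset.mem_image]
        refine ⟨i, ?_, hi.symm⟩
        have h1 := Finset.mem_filter.1 hj
        have h2 := Finset.mem_range.1 h1.1
        rw [Finset.mem_filter, Finset.mem_range]
        constructor
        · apply Nat.lt_succ_of_le
          rw [Nat.le_div_iff_mul_le hp0]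
          have : i * p = p * i := mul_comm _ _
          omega
        · have h3 := h1.2.2
          rw [hi] at h3
          convert h3 using 1
          ring
      exact (Finset.card_le_card this).trans Finset.card_image_le
    have hq : Nat.Coprime (2 * p) M := by
      rw [Nat.coprime_mul_iff_left]
      exact ⟨(Nat.coprime_two_left).2 hM, hpM⟩
    have h4 := cop_upper (a + 2 * j0) (2 * p) M hM.pos hq ((n - 1) / p + 1)
    have h5 : (S.card : ℝ) ≤ _ := le_trans (by exact_mod_cast hcard) h4
    refine h5.trans (mul_le_mul_of_nonneg_left ?_ (dens_nonneg M))
    have h6 : (((n - 1) / p : ℕ) : ℝ) ≤ (n : ℝ) / p := by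
      refine Nat.cast_div_le.trans ?_
      gcongr
      omega
    push_cast
    linarith

theorem cop_lower2 (n a M : ℕ) (hM : Odd M) : dens M * ((n : ℝ) - M) ≤
      (((Finset.range n).filter fun j => Nat.Coprime (a + 2 * j) M).card : ℝ) :=
  cop_lower a 2 M hM.pos ((Nat.coprime_two_left).2 hM) n

/-- Indices `l` of the odd primes `2 * l + 1 < 2 * n` not dividing `M`. -/
def PP (n M : ℕ) : Finset ℕ :=
  (Finset.range n).filter fun l => (2 * l + 1).Prime ∧ Nat.Coprime (2 * l + 1) M

/-- The error sum. -/
noncomputable def TT (n M : ℕ) : ℝ :=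
  ∑ l ∈ PP n M, ((n : ℝ) / (2 * l + 1 : ℕ) + 1) * ((n : ℝ) / (2 * l + 1 : ℕ) + 1 + M)

theorem TT_nonneg (n M : ℕ) : 0 ≤ TT n M := by unfold TT; positivity

theorem pair_lemma (n a b M : ℕ) (hM : Odd M) (X Y : Finset ℕ) (hX : X ⊆ Finset.range n)
    (hY : Y ⊆ Finset.range n)
    (h : ∀ i ∈ X, ∀ j ∈ Y, ∃ l < n, (2 * l + 1).Prime ∧ 2 * l + 1 ∣ a + 2 * i ∧
      2 * l + 1 ∣ b + 2 * j) :
    (X.card : ℝ) * (dens M * ((n : ℝ) - M) - ((n : ℝ) - Y.card)) ≤ dens M * TT n M := by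
  classical
  set A := (Finset.range n).filter fun j => Nat.Coprime (b + 2 * j) M with hA
  have h1 : dens M * ((n : ℝ) - M) ≤ A.card := cop_lower2 n b M hM
  have h2 : (A.card : ℝ) + Y.card ≤ n + (A ∩ Y).card := by
    have h3 := Finset.card_union_add_card_inter A Y
    have h4 : (A ∪ Y).card ≤ n := by
      simpa using Finset.card_le_card (Finset.union_subset (Finset.filter_subset _ _) hY :
        A ∪ Y ⊆ Finset.range n)
    have : A.card + Y.card ≤ n + (A ∩ Y).card := by omega
    exact_mod_cast this
  have h3 : ((X ×ˢ (A ∩ Y)).card : ℝ) ≤ dens M * TT n M := by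
    have hsub : X ×ˢ (A ∩ Y) ⊆ (PP n M).biUnion fun l =>
        ((Finset.range n).filter fun i => 2 * l + 1 ∣ a + 2 * i) ×ˢ
        ((Finset.range n).filter fun j => 2 * l + 1 ∣ b + 2 * j ∧ Nat.Coprime (b + 2 * j) M) := by
      rintro ⟨i, j⟩ hij
      rw [Finset.mem_product, Finset.mem_inter] at hij
      obtain ⟨hi, hjA, hjY⟩ := hij
      obtain ⟨l, hl, hlp, hla, hlb⟩ := h i hi j hjY
      have hjc := (Finset.mem_filter.1 hjA).2
      rw [Finset.mem_biUnion]
      refine ⟨l, ?_, ?_⟩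
      · exact Finset.mem_filter.2 ⟨Finset.mem_range.2 hl, hlp, Nat.Coprime.coprime_dvd_left hlb hjc⟩
      · exact Finset.mem_product.2 ⟨Finset.mem_filter.2 ⟨hX hi, hla⟩,
          Finset.mem_filter.2 ⟨hY hjY, hlb, hjc⟩⟩
    have h4 := (Finset.card_le_card hsub).trans Finset.card_biUnion_le
    have h5 : ((X ×ˢ (A ∩ Y)).card : ℝ) ≤ ∑ l ∈ PP n M,
        ((((Finset.range n).filter fun i => 2 * l + 1 ∣ a + 2 * i) ×ˢ
        ((Finset.range n).filter fun j => 2 * l + 1 ∣ b + 2 * j ∧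
          Nat.Coprime (b + 2 * j) M)).card : ℝ) := by exact_mod_cast h4
    refine h5.trans ?_
    rw [TT, Finset.mul_sum]
    apply Finset.sum_le_sum
    intro l hl
    have hl' := (Finset.mem_filter.1 hl).2
    rw [Finset.card_product, Nat.cast_mul]
    have g1 : (((Finset.range n).filter fun i => 2 * l + 1 ∣ a + 2 * i).card : ℝ) ≤
        (n : ℝ) / (2 * l + 1 : ℕ) + 1 := by
      have := card_dvd_le n a (2 * l + 1) ⟨l, rfl⟩
      have h6 : (((n - 1) / (2 * l + 1) : ℕ) : ℝ) ≤ (n : ℝ) / (2 * l + 1 : ℕ) := by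
        refine Nat.cast_div_le.trans ?_
        gcongr
        omega
      have h7 : (((Finset.range n).filter fun i => 2 * l + 1 ∣ a + 2 * i).card : ℝ) ≤
        (((n - 1) / (2 * l + 1) : ℕ) : ℝ) + 1 := by exact_mod_cast this
      linarith
    have g2 := dvd_cop_upper n b (2 * l + 1) M hM ⟨l, rfl⟩ hl'.2
    have := mul_le_mul g1 g2 (by positivity) (by positivity)
    refine this.trans (le_of_eq ?_)
    ring
  rw [Finset.card_product, Nat.cast_mul] at h3
  refine le_trans ?_ h3
  apply mul_le_mul_of_nonneg_left _ (by positivity)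
  linarith

/-- A pair of sets violating Hall's condition. -/
structure Viol (n a : ℕ) (X Y : Finset ℕ) : Prop where
  hX : X ⊆ Finset.range n
  hY : Y ⊆ Finset.range n
  hXn : X.Nonempty
  hYn : Y.Nonempty
  hc : n + 1 ≤ X.card + Y.card
  h : ∀ i ∈ X, ∀ j ∈ Y, ¬ Nat.Coprime (2 * i + 1) (a + 2 * j)

theorem Viol.exists_prime {n a : ℕ} {X Y : Finset ℕ} (V : Viol n a X Y) {i j : ℕ} (hi : i ∈ X)
    (hj : j ∈ Y) : ∃ l < n, (2 * l + 1).Prime ∧ 2 * l + 1 ∣ 2 * i + 1 ∧ 2 * l + 1 ∣ a + 2 * j := by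
  obtain ⟨p, hp, h1, h2⟩ := Nat.Prime.not_coprime_iff_dvd.1 (V.h i hi j hj)
  have hodd : Odd p := Odd.of_dvd_nat ⟨i, rfl⟩ h1
  obtain ⟨l, rfl⟩ := hodd
  have := Nat.le_of_dvd (by omega) h1
  have := Finset.mem_range.1 (V.hX hi)
  exact ⟨l, by omega, hp, h1, h2⟩

theorem Viol.mid {n a : ℕ} {X Y : Finset ℕ} (V : Viol n a X Y) (M : ℕ) (hM : Odd M) :
    let κ : ℝ := min (min (X.card : ℝ) Y.card) ((n : ℝ) / 2)
    κ * (dens M * ((n : ℝ) - M) - κ) ≤ dens M * TT n M := by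
  intro κ
  have hκ0 : 0 ≤ κ := by positivity
  have hT : 0 ≤ dens M * TT n M := mul_nonneg (dens_nonneg M) (TT_nonneg n M)
  have hcc : (n : ℝ) + 1 ≤ X.card + Y.card := by exact_mod_cast V.hc
  have hk1 : κ ≤ X.card := (min_le_left _ _).trans (min_le_left _ _)
  have hk2 : κ ≤ Y.card := (min_le_left _ _).trans (min_le_right _ _)
  rcases le_or_gt (dens M * ((n : ℝ) - M) - κ) 0 with h0 | h0
  · exact (mul_nonpos_of_nonneg_of_nonpos hκ0 h0).trans hT
  have comp : ((n : ℝ) - Y.card ≤ κ) ∨ ((n : ℝ) - X.card ≤ κ) := by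
    rcases le_total (X.card : ℝ) Y.card with hxy | hxy
    · left
      apply le_min (le_min _ _) _ <;> linarith
    · right
      apply le_min (le_min _ _) _ <;> linarith
  rcases comp with hc | hc
  · have := pair_lemma n 1 a M hM X Y V.hX V.hY (fun i hi j hj => by
      obtain ⟨l, h1, h2, h3, h4⟩ := V.exists_prime hi hj
      exact ⟨l, h1, h2, add_comm (2 * i) 1 ▸ h3, h4⟩)
    refine le_trans ?_ this
    calc κ * (dens M * ((n : ℝ) - M) - κ) ≤ X.card * (dens M * ((n : ℝ) - M) - κ) :=
          mul_le_mul_of_nonneg_right hk1 h0.le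
      _ ≤ _ := mul_le_mul_of_nonneg_left (by linarith) (by positivity)
  · have := pair_lemma n a 1 M hM Y X V.hY V.hX (fun j hj i hi => by
      obtain ⟨l, h1, h2, h3, h4⟩ := V.exists_prime hi hj
      exact ⟨l, h1, h2, h4, add_comm (2 * i) 1 ▸ h3⟩)
    refine le_trans ?_ this
    calc κ * (dens M * ((n : ℝ) - M) - κ) ≤ Y.card * (dens M * ((n : ℝ) - M) - κ) :=
          mul_le_mul_of_nonneg_right hk2 h0.le
      _ ≤ _ := mul_le_mul_of_nonneg_left (by linarith) (by positivity)

/-- Lower bound for `|X|` from a single element of `X`. -/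
theorem Viol.xend {n a : ℕ} {X Y : Finset ℕ} (V : Viol n a X Y) (M B : ℕ) (hM : Odd M)
    (hB : 0 < B) (hBM : ∀ p, p.Prime → Odd p → Nat.Coprime p M → B ≤ p) :
    ∃ c : ℕ, B ^ c ≤ 2 * n ∧
      dens M * ((n : ℝ) - M - c * ((n : ℝ) / B + 1 + M)) ≤ X.card := by
  classical
  obtain ⟨i, hi⟩ := V.hXn
  have hin := Finset.mem_range.1 (V.hX hi)
  set x := 2 * i + 1 with hx
  set P := x.primeFactors.filter fun p => Nat.Coprime p M with hP
  have hPp : ∀ p ∈ P, p.Prime ∧ Odd p ∧ Nat.Coprime p M ∧ B ≤ p := by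
    intro p hp
    have h1 := Finset.mem_filter.1 hp
    have h2 := Nat.prime_of_mem_primeFactors h1.1
    have h3 : Odd p := Odd.of_dvd_nat ⟨i, hx⟩ (Nat.dvd_of_mem_primeFactors h1.1)
    exact ⟨h2, h3, h1.2, hBM p h2 h3 h1.2⟩
  refine ⟨P.card, ?_, ?_⟩
  · calc B ^ P.card ≤ ∏ p ∈ P, p := by
          apply Finset.pow_card_le_prod
          exact fun p hp => (hPp p hp).2.2.2
      _ ≤ ∏ p ∈ x.primeFactors, p := by
          apply Finset.prod_le_prod_of_subset_of_one_le' (Finset.filter_subset _ _)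
          intro p hp _
          exact (Nat.prime_of_mem_primeFactors hp).one_le
      _ ≤ x := Nat.le_of_dvd (by omega) (Nat.prod_primeFactors_dvd x)
      _ ≤ 2 * n := by omega
  · set A := (Finset.range n).filter fun j => Nat.Coprime (a + 2 * j) M with hA
    have h1 : dens M * ((n : ℝ) - M) ≤ A.card := cop_lower2 n a M hM
    have h2 : A ⊆ (Finset.range n \ Y) ∪ P.biUnion fun p =>
        ((Finset.range n).filter fun j => p ∣ a + 2 * j ∧ Nat.Coprime (a + 2 * j) M) := by
      intro j hj
      have hj' := Finset.mem_filter.1 hj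
      rw [Finset.mem_union]
      by_cases hjY : j ∈ Y
      · right
        obtain ⟨l, _, hlp, h3, h4⟩ := V.exists_prime hi hjY
        rw [Finset.mem_biUnion]
        refine ⟨2 * l + 1, Finset.mem_filter.2 ⟨Nat.mem_primeFactors.2 ⟨hlp, h3, by omega⟩,
          Nat.Coprime.coprime_dvd_left h4 hj'.2⟩, Finset.mem_filter.2 ⟨hj'.1, h4, hj'.2⟩⟩
      · left
        exact Finset.mem_sdiff.2 ⟨hj'.1, hjY⟩
    have h3 := (Finset.card_le_card h2).trans ((Finset.card_union_le _ _).trans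
      (Nat.add_le_add_left Finset.card_biUnion_le _))
    rw [Finset.card_sdiff_of_subset V.hY, Finset.card_range] at h3
    have hYX : n - Y.card ≤ X.card := by have := V.hc; omega
    have h4 : (A.card : ℝ) ≤ X.card + ∑ p ∈ P, (((Finset.range n).filter fun j =>
        p ∣ a + 2 * j ∧ Nat.Coprime (a + 2 * j) M).card : ℝ) := by
      have := h3.trans (Nat.add_le_add_right hYX _)
      exact_mod_cast this
    have h5 : ∑ p ∈ P, (((Finset.range n).filter fun j =>
        p ∣ a + 2 * j ∧ Nat.Coprime (a + 2 * j) M).card : ℝ) ≤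
        ∑ p ∈ P, dens M * ((n : ℝ) / B + 1 + M) := by
      apply Finset.sum_le_sum
      intro p hp
      obtain ⟨_, g2, g3, g4⟩ := hPp p hp
      refine (dvd_cop_upper n a p M hM g2 g3).trans ?_
      apply mul_le_mul_of_nonneg_left _ (dens_nonneg M)
      have hB' : (0 : ℝ) < B := by exact_mod_cast hB
      have : (n : ℝ) / p ≤ (n : ℝ) / B := by
        apply div_le_div_of_nonneg_left (by positivity) hB' (by exact_mod_cast g4)
      linarith
    rw [Finset.sum_const, nsmul_eq_mul] at h5
    nlinarith

end Part2

section Part3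

theorem Viol.primes_out {n a : ℕ} {X Y : Finset ℕ} (V : Viol n a X Y) (R : Finset ℕ)
    (hR : ∀ p ∈ R, p.Prime ∧ p ≠ 2 ∧ p < 2 * n ∧ n ≤ (Y.card - 1) * p) :
    R.card + 1 ≤ Y.card - 1 := by
  classical
  have hn : 0 < n := by
    obtain ⟨i, hi⟩ := V.hXn
    have := Finset.mem_range.1 (V.hX hi)
    omega
  have h0 : 0 ∉ X := by
    intro h
    obtain ⟨j, hj⟩ := V.hYn
    exact V.h 0 h j hj (by simp)
  have hodd : ∀ p ∈ R, 2 * (p / 2) + 1 = p := by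
    intro p hp
    have h1 := (hR p hp).1.eq_two_or_odd
    have h2 := (hR p hp).2.1
    omega
  have hout : ∀ p ∈ R, p / 2 ∉ X := by
    intro p hp hX
    obtain ⟨h1, h2, h3, h4⟩ := hR p hp
    have h5 : Y.card ≤ (n - 1) / p + 1 := by
      refine le_trans (Finset.card_le_card ?_) (card_dvd_le n a p (h1.odd_of_ne_two h2))
      intro j hj
      rw [Finset.mem_filter]
      refine ⟨V.hY hj, ?_⟩
      have h6 := V.h _ hX j hj
      rw [hodd p hp, Nat.Prime.coprime_iff_not_dvd h1, not_not] at h6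
      exact h6
    have h6 : (Y.card - 1) * p ≤ (n - 1) / p * p :=
      Nat.mul_le_mul_right _ (Nat.sub_le_iff_le_add.2 h5)
    have h7 := Nat.div_mul_le_self (n - 1) p
    omega
  have hcard : (insert 0 (R.image fun p => p / 2)).card = R.card + 1 := by
    rw [Finset.card_insert_of_notMem, Finset.card_image_of_injOn]
    · intro p hp q hq h
      have := hodd p hp
      have := hodd q hq
      simp only at h
      omega
    · intro h
      obtain ⟨p, hp, h1⟩ := Finset.mem_image.1 h
      have h2 := hodd p hp
      have := (hR p hp).1.two_le
      omega
  have hsub : insert 0 (R.image fun p => p / 2) ⊆ Finset.range n \ X := by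
    intro x hx
    rw [Finset.mem_sdiff, Finset.mem_range]
    rcases Finset.mem_insert.1 hx with rfl | hx
    · exact ⟨hn, h0⟩
    · obtain ⟨p, hp, rfl⟩ := Finset.mem_image.1 hx
      have := (hR p hp).2.2.1
      exact ⟨by omega, hout p hp⟩
  have h8 := Finset.card_le_card hsub
  rw [hcard, Finset.card_sdiff_of_subset V.hX, Finset.card_range] at h8
  have := V.hc
  have h9 : 0 < Y.card := V.hYn.card_pos
  omega

theorem log_aux {n : ℕ} (hn : 4096 ≤ n) :
    Real.log (2 * n) * (√(n : ℝ) + 2 * √(2 * n : ℝ) + 2) < n * Real.log 2 := by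
  set s := √(n : ℝ) with hs
  have hn' : (4096 : ℝ) ≤ n := by exact_mod_cast hn
  have hs64 : 64 ≤ s := by
    rw [hs, show (64 : ℝ) = √(64 ^ 2) by rw [Real.sqrt_sq (by norm_num)]]
    apply Real.sqrt_le_sqrt; norm_num; linarith
  have hss : s * s = n := Real.mul_self_sqrt (by positivity)
  have h2 : √(2 * n : ℝ) ≤ 1.415 * s := by
    rw [Real.sqrt_mul (by norm_num)]
    gcongr
    rw [Real.sqrt_le_left (by norm_num)]
    norm_num
  have hl2 := Real.log_two_gt_d9
  have hl2' := Real.log_two_lt_d9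
  have hL : Real.log (2 * n) ≤ 7.02 + s / 32 := by
    rw [← hss, Real.log_mul (by norm_num) (by positivity), Real.log_mul (by positivity) (by positivity)]
    have h3 : Real.log s ≤ 6 * Real.log 2 + (s / 64 - 1) := by
      have h4 := Real.log_le_sub_one_of_pos (show 0 < s / 64 by positivity)
      rw [Real.log_div (by positivity) (by norm_num), show (64 : ℝ) = 2 ^ 6 by norm_num,
        Real.log_pow] at h4
      push_cast at h4
      linarith
    linarith
  have hL0 : 0 ≤ Real.log (2 * n) := Real.log_nonneg (by linarith)
  calc Real.log (2 * n) * (s + 2 * √(2 * n : ℝ) + 2)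
      ≤ (7.02 + s / 32) * (3.83 * s + 2) := by
        apply mul_le_mul hL (by linarith) (by positivity) (by positivity)
    _ < (s * s) * 0.693 := by nlinarith
    _ ≤ n * Real.log 2 := by rw [hss]; gcongr; linarith

theorem Viol.yend {n a : ℕ} {X Y : Finset ℕ} (V : Viol n a X Y) (hn : 4096 ≤ n) :
    2 * n * Real.log 2 - Real.log (2 * n + 1) ≤
      ((Y.card : ℝ) + √(n : ℝ)) * Real.log (2 * n) := by
  have hn' : (4096 : ℝ) ≤ n := by exact_mod_cast hn
  set m := Y.card - 1 with hm
  have hm2 : 2 ≤ m := by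
    have h1 := V.primes_out ∅ (by simp)
    rcases Nat.lt_or_ge 1 m with h | h
    · exact h
    · exfalso
      have hm1 : m = 1 := by simp at h1; omega
      obtain ⟨p, hp, h2, h3⟩ := Nat.exists_prime_lt_and_le_two_mul n (by omega)
      have h4 := V.primes_out {p} (by
        intro q hq
        rw [Finset.mem_singleton] at hq
        subst hq
        refine ⟨hp, by omega, lt_of_le_of_ne h3 ?_, by rw [← hm, hm1]; omega⟩
        rintro rfl
        exact Nat.not_prime_mul (by norm_num) (by omega) hp)
      simp at h4
      omega
  have hL0 : 0 < Real.log (2 * n) := Real.log_pos (by linarith)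
  have hneq : ∀ p : ℕ, p.Prime → p ≤ 2 * n → p < 2 * n := by
    intro p hp h3
    refine lt_of_le_of_ne h3 ?_
    rintro rfl
    exact Nat.not_prime_mul (by norm_num) (by omega) hp
  have hsq : √(n : ℝ) * √(n : ℝ) = n := Real.mul_self_sqrt (by positivity)
  have hmY : (m : ℝ) ≤ Y.card := by
    have : m ≤ Y.card := by omega
    exact_mod_cast this
  rcases Nat.lt_or_ge (m * m) n with hmn | hmn
  · -- few elements in `Y`
    exfalso
    set R := (Finset.Ioc (n / 2) (2 * n)).filter Nat.Prime with hR
    have h4 := V.primes_out R (by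
      intro p hp
      have h5 := Finset.mem_filter.1 hp
      have h6 := Finset.mem_Ioc.1 h5.1
      refine ⟨h5.2, by omega, hneq p h5.2 h6.2, ?_⟩
      have : 2 * p ≤ m * p := Nat.mul_le_mul_right _ hm2
      rw [← hm]
      omega)
    have h7 := Chebyshev.theta_ge (2 * n)
    have h8 : Chebyshev.theta ((n / 2 : ℕ) : ℝ) ≤ Real.log 4 * ((n / 2 : ℕ) : ℝ) :=
      Chebyshev.theta_le_log4_mul_x (by positivity)
    have h9 : Chebyshev.theta ((2 * n : ℕ) : ℝ) - Chebyshev.theta ((n / 2 : ℕ) : ℝ) ≤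
        R.card * Real.log (2 * n) := by
      have e : Finset.Ioc 0 (2 * n) = Finset.Ioc 0 (n / 2) ∪ Finset.Ioc (n / 2) (2 * n) := by
        rw [Finset.Ioc_union_Ioc_eq_Ioc (by omega) (by omega)]
      rw [Chebyshev.theta, Chebyshev.theta, Nat.floor_natCast, Nat.floor_natCast, e,
        Finset.filter_union, Finset.sum_union, add_sub_cancel_left]
      · rw [← nsmul_eq_mul]
        apply Finset.sum_le_card_nsmul
        intro p hp
        have h5 := Finset.mem_filter.1 hp
        have h6 := Finset.mem_Ioc.1 h5.1
        apply Real.log_le_log (by exact_mod_cast h5.2.pos)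
        exact_mod_cast h6.2
      · apply Finset.disjoint_filter_filter
        rw [Finset.disjoint_left]
        intro x hx hx'
        simp only [Finset.mem_Ioc] at hx hx'
        omega
    have h10 : ((n / 2 : ℕ) : ℝ) ≤ n / 2 := Nat.cast_div_le
    have hl4 : Real.log 4 = 2 * Real.log 2 := by
      rw [show (4 : ℝ) = 2 ^ 2 by norm_num, Real.log_pow]; norm_num
    have hl2 : 0 < Real.log 2 := Real.log_pos (by norm_num)
    have h11 : Real.log 4 * ((n / 2 : ℕ) : ℝ) ≤ n * Real.log 2 := by
      rw [hl4]; nlinarith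
    have h12 : (R.card : ℝ) + 1 ≤ √(n : ℝ) := by
      apply Real.le_sqrt_of_sq_le
      have : (R.card + 1) ^ 2 ≤ n := by nlinarith
      exact_mod_cast this
    have h13 : Real.log (2 * n + 1) ≤ 2 * Real.log (2 * n) := by
      rw [show 2 * Real.log (2 * (n : ℝ)) = Real.log ((2 * n) ^ 2) by rw [Real.log_pow]; norm_num]
      apply Real.log_le_log (by positivity)
      nlinarith
    have h14 := log_aux hn
    push_cast at h7 h9
    have h15 : (R.card : ℝ) * Real.log (2 * n) ≤ (√(n : ℝ)) * Real.log (2 * n) := by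
      apply mul_le_mul_of_nonneg_right _ hL0.le
      linarith
    nlinarith
  · set T := Nat.sqrt n with hT
    have hT1 : T * T ≤ n := Nat.sqrt_le n
    have hT2 : n < (T + 1) * (T + 1) := Nat.lt_succ_sqrt n
    set R := (Finset.Ioc T (2 * n)).filter Nat.Prime with hR
    have hT3 : 2 ≤ T := by nlinarith
    have hmT : T ≤ m := by nlinarith
    have h4 := V.primes_out R (by
      intro p hp
      have h5 := Finset.mem_filter.1 hp
      have h6 := Finset.mem_Ioc.1 h5.1
      refine ⟨h5.2, by omega, hneq p h5.2 h6.2, ?_⟩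
      rw [← hm]
      rcases Nat.lt_or_ge T m with h | h
      · nlinarith
      · have : m = T := by omega
        nlinarith)
    have h5 : Nat.primeCounting (2 * n) ≤ R.card + T := by
      rw [Nat.primeCounting, Nat.primeCounting', Nat.count_eq_card_filter_range]
      have : (Finset.range (2 * n + 1)).filter Nat.Prime ⊆ R ∪ Finset.Ioc 0 T := by
        intro p hp
        have h6 := Finset.mem_filter.1 hp
        have h7 := Finset.mem_range.1 h6.1
        have := h6.2.pos
        simp only [hR, Finset.mem_union, Finset.mem_filter, Finset.mem_Ioc]
        rcases Nat.lt_or_ge T p with h | h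
        · left; exact ⟨⟨h, by omega⟩, h6.2⟩
        · right; omega
      refine (Finset.card_le_card this).trans ((Finset.card_union_le _ _).trans ?_)
      simp
    have h6 := Chebyshev.pi_ge (2 * n)
    push_cast at h6
    rw [div_le_iff₀ hL0] at h6
    refine h6.trans (mul_le_mul_of_nonneg_right ?_ hL0.le)
    have h7 : (Nat.primeCounting (2 * n) : ℝ) ≤ R.card + T := by exact_mod_cast h5
    have h8 : (T : ℝ) ≤ √(n : ℝ) := by
      apply Real.le_sqrt_of_sq_le
      rw [sq]
      exact_mod_cast hT1
    have h9 : (R.card : ℝ) + 1 ≤ m := by exact_mod_cast h4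
    linarith

theorem sum_inv_le (n : ℕ) (hn : 1 ≤ n) :
    ∑ l ∈ Finset.Ico 1 n, (1 : ℝ) / (2 * l + 1 : ℕ) ≤ Real.log n / 2 := by
  induction n, hn using Nat.le_induction with
  | base => simp
  | succ k hk ih =>
    rw [Finset.sum_Ico_succ_top hk]
    have hk0 : (0 : ℝ) < k := by exact_mod_cast hk
    have h1 : (2 : ℝ) / (2 * k + 1) ≤ Real.log (1 + (k : ℝ)⁻¹) := by
      have h2 := Real.hasSum_log_one_add_inv hk0
      have h3 := h2.summable.sum_le_tsum {0} (fun i _ => by positivity)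
      rw [h2.tsum_eq] at h3
      simp only [Finset.sum_singleton] at h3
      refine le_trans (le_of_eq ?_) h3
      norm_num
      ring
    have h4 : Real.log ((k + 1 : ℕ) : ℝ) = Real.log k + Real.log (1 + (k : ℝ)⁻¹) := by
      rw [← Real.log_mul (by positivity) (by positivity)]
      congr 1
      push_cast
      field_simp
    rw [h4]
    have h5 : (1 : ℝ) / (2 * k + 1 : ℕ) = (2 / (2 * k + 1)) / 2 := by
      push_cast
      field_simp
    rw [h5]
    linarith

theorem sum_inv_sq_le (h n : ℕ) (hh : 1 ≤ h) (hn : h ≤ n) :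
    ∑ l ∈ Finset.Ico h n, (1 : ℝ) / ((2 * l + 1 : ℕ) : ℝ) ^ 2 ≤ 1 / (4 * h) - 1 / (4 * n) := by
  induction n, hn using Nat.le_induction with
  | base => simp
  | succ k hk ih =>
    rw [Finset.sum_Ico_succ_top hk]
    have hk0 : (0 : ℝ) < k := by exact_mod_cast (by omega : 0 < k)
    have : (1 : ℝ) / ((2 * k + 1 : ℕ) : ℝ) ^ 2 ≤ 1 / (4 * k) - 1 / (4 * (k + 1 : ℕ)) := by
      push_cast
      rw [div_sub_div _ _ (by positivity) (by positivity), div_le_div_iff₀ (by positivity) (by positivity)]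
      nlinarith
    linarith

/-- Sum of the inverse squares. -/
noncomputable def S2 (n M : ℕ) : ℝ := ∑ l ∈ PP n M, (1 : ℝ) / ((2 * l + 1 : ℕ) : ℝ) ^ 2

theorem TT_le (n M : ℕ) (hn : 1 ≤ n) :
    TT n M ≤ n ^ 2 * S2 n M + (M + 2) * n * (Real.log n / 2) + (M + 1) * n := by
  have h1 : ∑ l ∈ PP n M, (1 : ℝ) / (2 * l + 1 : ℕ) ≤ Real.log n / 2 := by
    refine le_trans ?_ (sum_inv_le n hn)
    apply Finset.sum_le_sum_of_subset_of_nonneg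
    · intro l hl
      have := Finset.mem_filter.1 hl
      have h2 := Finset.mem_range.1 this.1
      rw [Finset.mem_Ico]
      refine ⟨?_, h2⟩
      rcases Nat.eq_zero_or_pos l with rfl | h
      · exact absurd this.2.1 (by norm_num)
      · exact h
    · intros; positivity
  have h2 : ((PP n M).card : ℝ) ≤ n := by
    have := Finset.card_le_card (Finset.filter_subset
      (fun l => (2 * l + 1).Prime ∧ Nat.Coprime (2 * l + 1) M) (Finset.range n))
    rw [Finset.card_range] at this
    exact_mod_cast this
  have h3 : TT n M = n ^ 2 * S2 n M + (M + 2) * n * (∑ l ∈ PP n M, (1 : ℝ) / (2 * l + 1 : ℕ)) +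
      (M + 1) * (PP n M).card := by
    rw [TT, S2, Finset.mul_sum, Finset.mul_sum, Finset.card_eq_sum_ones, Nat.cast_sum,
      Finset.mul_sum, ← Finset.sum_add_distrib, ← Finset.sum_add_distrib]
    apply Finset.sum_congr rfl
    intro l _
    push_cast
    field_simp
    ring
  rw [h3]
  gcongr

end Part3

section Part4

/-- The error term in the normalized inequality. -/
noncomputable def errT (n M : ℕ) : ℝ := ((M + 2) * Real.log n + 3 * M + 2) / (2 * n)

theorem errT_le (n k M : ℕ) (hk : 2 ≤ k) (hn : 2 ^ k ≤ n) :
    errT n M ≤ ((M + 2) * (k * 0.6932) + 3 * M + 2) / (2 * 2 ^ k) := by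
  have hN : ((2 : ℝ) ^ k) ≤ n := by exact_mod_cast hn
  have hN0 : (0 : ℝ) < 2 ^ k := by positivity
  have hn0 : (0 : ℝ) < n := lt_of_lt_of_le hN0 hN
  have he : Real.exp 1 ≤ 2 ^ k := by
    have h1 := Real.exp_one_lt_d9
    have h2 : (2 : ℝ) ^ 2 ≤ 2 ^ k := pow_le_pow_right₀ (by norm_num) hk
    linarith
  have h1 : Real.log n / n ≤ Real.log (2 ^ k) / 2 ^ k :=
    Real.log_div_self_antitoneOn (by simpa using he) (by simpa using he.trans hN) hN
  have h2 : Real.log ((2 : ℝ) ^ k) ≤ k * 0.6932 := by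
    rw [Real.log_pow]
    have := Real.log_two_lt_d9
    gcongr
    linarith
  have h3 : Real.log n / n ≤ (k * 0.6932) / 2 ^ k := h1.trans (by gcongr)
  have h4 : 1 / (n : ℝ) ≤ 1 / 2 ^ k := by gcongr
  have e1 : errT n M = (M + 2) / 2 * (Real.log n / n) + (3 * M + 2) / 2 * (1 / n) := by
    unfold errT; field_simp; ring
  have e2 : ((M + 2) * (k * 0.6932) + 3 * M + 2) / (2 * 2 ^ k) =
      ((M : ℝ) + 2) / 2 * ((k * 0.6932) / 2 ^ k) + (3 * M + 2) / 2 * (1 / 2 ^ k) := by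
    field_simp; ring
  rw [e1, e2]
  gcongr

/-- The normalized size of the smaller side. -/
noncomputable def kap (n : ℕ) (X Y : Finset ℕ) : ℝ := min (min (X.card : ℝ) Y.card) ((n : ℝ) / 2) / n

theorem Viol.n_pos {n a : ℕ} {X Y : Finset ℕ} (V : Viol n a X Y) : 0 < n := by
  obtain ⟨i, hi⟩ := V.hXn
  have := Finset.mem_range.1 (V.hX hi)
  omega

theorem Viol.kap_le {n a : ℕ} {X Y : Finset ℕ} (V : Viol n a X Y) : kap n X Y ≤ 1 / 2 := by
  have : (0 : ℝ) < n := by exact_mod_cast V.n_pos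
  unfold kap
  rw [div_le_iff₀ this]
  refine (min_le_right _ _).trans (by linarith)

theorem Viol.le_kap {n a : ℕ} {X Y : Finset ℕ} (V : Viol n a X Y) (lo : ℝ) (h1 : lo * n ≤ X.card)
    (h2 : lo * n ≤ Y.card) (h3 : lo ≤ 1 / 2) : lo ≤ kap n X Y := by
  have : (0 : ℝ) < n := by exact_mod_cast V.n_pos
  unfold kap
  rw [le_div_iff₀ this]
  refine le_min (le_min h1 h2) ?_
  nlinarith

theorem Viol.mid' {n a : ℕ} {X Y : Finset ℕ} (V : Viol n a X Y) (M : ℕ) (hM : Odd M) :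
    kap n X Y * (1 - kap n X Y / dens M) ≤ S2 n M + errT n M := by
  have hn : (0 : ℝ) < n := by exact_mod_cast V.n_pos
  have h1 := V.mid M hM
  simp only at h1
  have hx2 := V.kap_le
  have hk : min (min (X.card : ℝ) Y.card) ((n : ℝ) / 2) = kap n X Y * n := by
    unfold kap; field_simp
  rw [hk] at h1
  set x := kap n X Y with hx
  have hP := dens_pos hM.pos
  set P := dens M
  have h2 := TT_le n M V.n_pos
  have h3 : x * n * (P * (n - M) - x * n) ≤
      P * (n ^ 2 * S2 n M + (M + 2) * n * (Real.log n / 2) + (M + 1) * n) :=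
    h1.trans (mul_le_mul_of_nonneg_left h2 hP.le)
  have h4 : x * (1 - x / P) * (P * n ^ 2) = x * n * (P * (n - M) - x * n) + x * (P * n * M) := by
    field_simp; ring
  have h5 : (S2 n M + errT n M) * (P * n ^ 2) =
      P * (n ^ 2 * S2 n M + (M + 2) * n * (Real.log n / 2) + (M + 1) * n) + 1 / 2 * (P * n * M) := by
    unfold errT; field_simp; ring
  have h6 : x * (P * n * M) ≤ 1 / 2 * (P * n * M) :=
    mul_le_mul_of_nonneg_right hx2 (by positivity)
  refine le_of_mul_le_mul_right (a := P * n ^ 2) ?_ (by positivity)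
  linarith

theorem S2_le (n M : ℕ) (hn : 50 ≤ n) : S2 n M ≤
    ∑ l ∈ (Finset.range 50).filter (fun l => (2 * l + 1).Prime ∧ Nat.Coprime (2 * l + 1) M),
      (1 : ℝ) / ((2 * l + 1 : ℕ) : ℝ) ^ 2 + 1 / 200 := by
  have h1 : PP n M ⊆ (Finset.range 50).filter
      (fun l => (2 * l + 1).Prime ∧ Nat.Coprime (2 * l + 1) M) ∪ Finset.Ico 50 n := by
    intro l hl
    have h2 := Finset.mem_filter.1 hl
    have h3 := Finset.mem_range.1 h2.1
    simp only [Finset.mem_union, Finset.mem_filter, Finset.mem_range, Finset.mem_Ico]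
    rcases Nat.lt_or_ge l 50 with h | h
    · left; exact ⟨h, h2.2⟩
    · right; exact ⟨h, h3⟩
  have h2 := sum_inv_sq_le 50 n (by norm_num) hn
  have h3 : S2 n M ≤ _ := Finset.sum_le_sum_of_subset_of_nonneg h1
    (f := fun l => (1 : ℝ) / ((2 * l + 1 : ℕ) : ℝ) ^ 2) (by intros; positivity)
  refine h3.trans ?_
  rw [Finset.sum_union]
  · have : (0 : ℝ) ≤ 1 / (4 * n) := by positivity
    push_cast at h2 ⊢
    linarith
  · rw [Finset.disjoint_left]
    intro x hx hx'
    simp only [Finset.mem_filter, Finset.mem_range, Finset.mem_Ico] at hx hx'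
    omega

theorem S2_three (n : ℕ) (hn : 50 ≤ n) : S2 n 3 ≤ 0.096 := by
  refine (S2_le n 3 hn).trans ?_
  rw [show (Finset.range 50).filter (fun l => (2 * l + 1).Prime ∧ Nat.Coprime (2 * l + 1) 3) =
    {2, 3, 5, 6, 8, 9, 11, 14, 15, 18, 20, 21, 23, 26, 29, 30, 33, 35, 36, 39, 41, 44, 48} by
      decide +kernel]
  norm_num

theorem S2_fifteen (n : ℕ) (hn : 50 ≤ n) : S2 n 15 ≤ 0.056 := by
  refine (S2_le n 15 hn).trans ?_
  rw [show (Finset.range 50).filter (fun l => (2 * l + 1).Prime ∧ Nat.Coprime (2 * l + 1) 15) =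
    {3, 5, 6, 8, 9, 11, 14, 15, 18, 20, 21, 23, 26, 29, 30, 33, 35, 36, 39, 41, 44, 48} by
      decide +kernel]
  norm_num

theorem S2_1155 (n : ℕ) (hn : 50 ≤ n) : S2 n 1155 ≤ 0.027 := by
  refine (S2_le n 1155 hn).trans ?_
  rw [show (Finset.range 50).filter (fun l => (2 * l + 1).Prime ∧ Nat.Coprime (2 * l + 1) 1155) =
    {6, 8, 9, 11, 14, 15, 18, 20, 21, 23, 26, 29, 30, 33, 35, 36, 39, 41, 44, 48} by
      decide +kernel]
  norm_num

theorem dens_3 : dens 3 = 2 / 3 := by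
  rw [dens, show Nat.totient 3 = 2 by decide +kernel]; norm_num

theorem dens_15 : dens 15 = 8 / 15 := by
  rw [dens, show Nat.totient 15 = 8 by decide +kernel]; norm_num

theorem dens_105 : dens 105 = 16 / 35 := by
  rw [dens, show Nat.totient 105 = 48 by decide +kernel]; norm_num

theorem dens_1155 : dens 1155 = 32 / 77 := by
  rw [dens, show Nat.totient 1155 = 480 by decide +kernel]; norm_num

theorem dens_15015 : dens 15015 = 384 / 1001 := by
  rw [dens, show Nat.totient 15015 = 5760 by decide +kernel]; norm_num

/-- No violator with both sides of proportion at least `lo`. -/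
theorem Viol.mid_contra {n a : ℕ} {X Y : Finset ℕ} (V : Viol n a X Y) (hn : 4096 ≤ n)
    (lo : ℝ) (M : ℕ) (hM : Odd M) (hlo : lo ≤ 1 / 4) (hk : lo ≤ kap n X Y)
    (h1 : S2 n M + errT n M < lo * (1 - lo / dens M))
    (h2 : S2 n M + errT n M < 1 / 4 * (1 - 1 / 4 / dens M)) : False := by
  have hx2 := V.kap_le
  set x := kap n X Y
  rcases le_total x (1 / 4) with h | h
  · have h3 := V.mid' M hM
    have hP := dens_pos hM.pos
    have h4 : 0 ≤ (x - lo) * (1 / 4 - x) / dens M := by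
      apply div_nonneg (mul_nonneg _ _) hP.le <;> linarith
    set Q := (dens M)⁻¹ with hQ
    simp only [div_eq_mul_inv, ← hQ] at h1 h2 h3 h4
    rcases lt_or_eq_of_le hlo with hl | hl
    · -- concavity
      have h5 : (x * (1 - x * Q)) * (1 / 4 - lo) =
          (1 / 4 - x) * (lo * (1 - lo * Q)) + (x - lo) * (1 / 4 * (1 - 1 / 4 * Q)) +
            (x - lo) * (1 / 4 - x) * Q * (1 / 4 - lo) := by ring
      have h6 : 0 ≤ (x - lo) * (1 / 4 - x) * Q * (1 / 4 - lo) :=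
        mul_nonneg h4 (by linarith)
      have h7 : 0 ≤ (1 / 4 - x) * (lo * (1 - lo * Q) - (S2 n M + errT n M)) :=
        mul_nonneg (by linarith) (by linarith)
      have h8 : 0 ≤ (x - lo) * (1 / 4 * (1 - 1 / 4 * Q) - (S2 n M + errT n M)) :=
        mul_nonneg (by linarith) (by linarith)
      have h9 : (x * (1 - x * Q) - (S2 n M + errT n M)) * (1 / 4 - lo) ≤ 0 :=
        mul_nonpos_of_nonpos_of_nonneg (by linarith) (by linarith)
      have h10 : (1 / 4 - x) * (lo * (1 - lo * Q) - (S2 n M + errT n M)) = 0 := by nlinarith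
      have h11 : (x - lo) * (1 / 4 * (1 - 1 / 4 * Q) - (S2 n M + errT n M)) = 0 := by nlinarith
      rcases mul_eq_zero.1 h10 with g | g
      · rcases mul_eq_zero.1 h11 with g' | g' <;> linarith
      · linarith
    · have : x = lo := by linarith
      rw [show kap n X Y = lo from this] at h3
      linarith
  · have h3 := V.mid' 3 (by decide)
    rw [dens_3] at h3
    have h4 := S2_three n (by omega)
    have h5 := errT_le n 12 3 (by norm_num) (by omega)
    norm_num at h5
    have : 0 ≤ (x - 1 / 4) * (1 / 2 - x) := mul_nonneg (by linarith) (by linarith)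
    have h6 : x * (1 - x / (2 / 3)) ≤ 0.11 := by
      refine h3.trans ?_
      linarith
    nlinarith

theorem Viol.y_lower {n a : ℕ} {X Y : Finset ℕ} (V : Viol n a X Y) (j k2 : ℕ) (lo : ℝ)
    (hj : 6 ≤ j) (h1 : 4 ^ j ≤ n) (h2 : n ≤ 2 ^ k2)
    (hlo : lo + 1 / 2 ^ j + (k2 + 2) / ((k2 + 1) * 4 ^ j) ≤ 2 / (k2 + 1)) :
    lo * n ≤ Y.card := by
  have hn : 4096 ≤ n := le_trans (by
    calc 4096 = 4 ^ 6 := by norm_num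
      _ ≤ 4 ^ j := Nat.pow_le_pow_right (by norm_num) hj) h1
  have hn0 : (0 : ℝ) < n := by exact_mod_cast V.n_pos
  have hy := V.yend hn
  have h1' : ((4 : ℝ) ^ j) ≤ n := by exact_mod_cast h1
  have h2' : (n : ℝ) ≤ 2 ^ k2 := by exact_mod_cast h2
  have hl2 : 0 < Real.log 2 := Real.log_pos (by norm_num)
  have hL : Real.log (2 * n) ≤ (k2 + 1) * Real.log 2 := by
    rw [show ((k2 : ℝ) + 1) * Real.log 2 = Real.log (2 ^ (k2 + 1)) by rw [Real.log_pow]; push_cast; ring]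
    apply Real.log_le_log (by positivity)
    rw [pow_succ]; linarith
  have hL2 : Real.log (2 * n + 1) ≤ (k2 + 2) * Real.log 2 := by
    rw [show ((k2 : ℝ) + 2) * Real.log 2 = Real.log (2 ^ (k2 + 2)) by rw [Real.log_pow]; push_cast; ring]
    apply Real.log_le_log (by positivity)
    rw [pow_succ, pow_succ]
    have : (1 : ℝ) ≤ n := by exact_mod_cast V.n_pos
    linarith
  have hsq : √(n : ℝ) ≤ n / 2 ^ j := by
    rw [le_div_iff₀ (by positivity)]
    have h3 : (2 : ℝ) ^ j ≤ √(n : ℝ) := by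
      apply Real.le_sqrt_of_sq_le
      rw [← pow_mul, mul_comm, pow_mul]; norm_num; exact h1'
    calc √(n : ℝ) * 2 ^ j ≤ √(n : ℝ) * √(n : ℝ) := by gcongr
      _ = n := Real.mul_self_sqrt hn0.le
  have h3 : (2 * n - (k2 + 2)) * Real.log 2 ≤ ((Y.card : ℝ) + √(n : ℝ)) * (k2 + 1) * Real.log 2 := by
    have : ((Y.card : ℝ) + √(n : ℝ)) * Real.log (2 * n) ≤
      ((Y.card : ℝ) + √(n : ℝ)) * ((k2 + 1) * Real.log 2) := by gcongr
    linarith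
  have h4 := le_of_mul_le_mul_right h3 hl2
  have hk : (0 : ℝ) < k2 + 1 := by positivity
  have h5 : (2 * n - (k2 + 2)) / (k2 + 1) ≤ (Y.card : ℝ) + √(n : ℝ) := by
    rwa [div_le_iff₀ hk]
  have h6 := mul_le_mul_of_nonneg_right hlo hn0.le
  have h7 : ((k2 : ℝ) + 2) / (k2 + 1) ≤ (k2 + 2) / ((k2 + 1) * 4 ^ j) * n := by
    rw [div_mul_eq_mul_div, div_le_div_iff₀ hk (by positivity)]
    have : ((k2 : ℝ) + 2) * ((k2 + 1) * 4 ^ j) ≤ (k2 + 2) * ((k2 + 1) * n) := by gcongr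
    linarith
  have h8 : (2 * (n : ℝ) - (k2 + 2)) / (k2 + 1) = 2 / (k2 + 1) * n - (k2 + 2) / (k2 + 1) := by
    field_simp
  have h9 : (lo + 1 / 2 ^ j + (k2 + 2) / ((k2 + 1) * 4 ^ j)) * n =
    lo * n + n / 2 ^ j + (k2 + 2) / ((k2 + 1) * 4 ^ j) * n := by ring
  linarith

theorem Viol.x_lower {n a : ℕ} {X Y : Finset ℕ} (V : Viol n a X Y) (M B C : ℕ) (lo : ℝ)
    (hM : Odd M) (hB : 0 < B) (hBM : ∀ p, p.Prime → Odd p → Nat.Coprime p M → B ≤ p) (N : ℕ)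
    (hN0 : 0 < N) (hN : N ≤ n) (hC : 2 * n < B ^ (C + 1))
    (hlo : lo ≤ dens M * (1 - M / N - C * (1 / B + (1 + M) / N))) :
    lo * n ≤ X.card := by
  obtain ⟨c, hc1, hc2⟩ := V.xend M B hM hB hBM
  have hcC : c ≤ C := by
    by_contra h
    have := Nat.pow_le_pow_right hB (show C + 1 ≤ c by omega)
    omega
  have hn0 : (0 : ℝ) < n := by exact_mod_cast V.n_pos
  have hN' : (N : ℝ) ≤ n := by exact_mod_cast hN
  have hN0' : (0 : ℝ) < N := by exact_mod_cast hN0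
  have hcC' : (c : ℝ) ≤ C := by exact_mod_cast hcC
  have hB' : (0 : ℝ) < B := by exact_mod_cast hB
  refine le_trans ?_ hc2
  refine (mul_le_mul_of_nonneg_right hlo hn0.le).trans ?_
  rw [mul_assoc]
  apply mul_le_mul_of_nonneg_left _ (dens_nonneg M)
  have h1 : (M : ℝ) ≤ M / N * n := by
    rw [div_mul_eq_mul_div, le_div_iff₀ hN0']; gcongr
  have h2 : (1 + (M : ℝ)) ≤ (1 + M) / N * n := by
    rw [div_mul_eq_mul_div, le_div_iff₀ hN0']; gcongr
  have h3 : (c : ℝ) * ((n : ℝ) / B + 1 + M) ≤ C * ((1 / B + (1 + M) / N) * n) := by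
    apply mul_le_mul hcC' _ (by positivity) (by positivity)
    have : (1 / (B : ℝ) + (1 + M) / N) * n = n / B + (1 + M) / N * n := by ring
    linarith
  linarith

theorem rough_105 : ∀ p, p.Prime → Odd p → Nat.Coprime p 105 → 11 ≤ p := by
  intro p hp ho hc
  by_contra h
  push Not at h
  interval_cases p <;> revert hp ho hc <;> decide

theorem rough_15015 : ∀ p, p.Prime → Odd p → Nat.Coprime p 15015 → 17 ≤ p := by
  intro p hp ho hc
  by_contra h
  push Not at h
  interval_cases p <;> revert hp ho hc <;> decide

theorem range1 {n a : ℕ} {X Y : Finset ℕ} (V : Viol n a X Y) (h1 : 4096 ≤ n) (h2 : n ≤ 2 ^ 14) :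
    False := by
  have hy := V.y_lower 6 14 0.115 (by norm_num) (by omega) h2 (by norm_num)
  have hx := V.x_lower 105 11 5 0.115 (by decide) (by norm_num) rough_105 4096 (by norm_num) h1
    (by norm_num; omega) (by rw [dens_105]; norm_num)
  have h3 := S2_fifteen n (by omega)
  have h5 := errT_le n 12 15 (by norm_num) (by omega)
  norm_num at h5
  refine V.mid_contra h1 0.115 15 (by decide) (by norm_num) (V.le_kap _ hx hy (by norm_num)) ?_ ?_
  · rw [dens_15]; norm_num; linarith
  · rw [dens_15]; norm_num; linarith

theorem range2 {n a : ℕ} {X Y : Finset ℕ} (V : Viol n a X Y) (h1 : 2 ^ 14 ≤ n) (h2 : n ≤ 2 ^ 18) :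
    False := by
  have hy := V.y_lower 7 18 0.095 (by norm_num) (by omega) h2 (by norm_num)
  have hx := V.x_lower 105 11 5 0.095 (by decide) (by norm_num) rough_105 4096 (by norm_num)
    (by omega) (by norm_num; omega) (by rw [dens_105]; norm_num)
  have h3 := S2_fifteen n (by omega)
  have h5 := errT_le n 14 15 (by norm_num) (by omega)
  norm_num at h5
  refine V.mid_contra (by omega) 0.095 15 (by decide) (by norm_num)
    (V.le_kap _ hx hy (by norm_num)) ?_ ?_
  · rw [dens_15]; norm_num; linarith
  · rw [dens_15]; norm_num; linarith

theorem range3 {n a : ℕ} {X Y : Finset ℕ} (V : Viol n a X Y) (h1 : 2 ^ 18 ≤ n) (h2 : n ≤ 2 ^ 25) :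
    False := by
  have hy := V.y_lower 9 25 0.0725 (by norm_num) (by omega) h2 (by norm_num)
  have hx := V.x_lower 105 11 7 0.0725 (by decide) (by norm_num) rough_105 (2 ^ 18) (by norm_num)
    (by omega) (by norm_num; omega) (by rw [dens_105]; norm_num)
  have h3 := S2_fifteen n (by omega)
  have h5 := errT_le n 18 15 (by norm_num) (by omega)
  norm_num at h5
  refine V.mid_contra (by omega) 0.0725 15 (by decide) (by norm_num)
    (V.le_kap _ hx hy (by norm_num)) ?_ ?_
  · rw [dens_15]; norm_num; linarith
  · rw [dens_15]; norm_num; linarith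

theorem range4 {n a : ℕ} {X Y : Finset ℕ} (V : Viol n a X Y) (h1 : 2 ^ 25 ≤ n) (h2 : n ≤ 2 ^ 59) :
    False := by
  have hy := V.y_lower 12 59 0.033 (by norm_num) (by omega) h2 (by norm_num)
  have hx := V.x_lower 15015 17 14 0.033 (by decide) (by norm_num) rough_15015 (2 ^ 25)
    (by norm_num) (by omega) (by norm_num; omega) (by rw [dens_15015]; norm_num)
  have h3 := S2_1155 n (by omega)
  have h5 := errT_le n 25 1155 (by norm_num) (by omega)
  norm_num at h5
  refine V.mid_contra (by omega) 0.033 1155 (by decide) (by norm_num)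
    (V.le_kap _ hx hy (by norm_num)) ?_ ?_
  · rw [dens_1155]; norm_num; linarith
  · rw [dens_1155]; norm_num; linarith

end Part4

section Part5

/-- The product of the odd primes below `2 * h`. -/
def oddPrim (h : ℕ) : ℕ := ∏ l ∈ (Finset.range h).filter (fun l => (2 * l + 1).Prime), (2 * l + 1)

theorem oddPrim_odd (h : ℕ) : Odd (oddPrim h) := by
  rw [← Nat.coprime_two_left]
  apply Nat.Coprime.prod_right
  intro l _
  rw [Nat.coprime_two_left]
  exact ⟨l, rfl⟩

theorem oddPrim_le (h : ℕ) : oddPrim h ≤ 16 ^ h := by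
  have h1 : oddPrim h ≤ primorial (2 * h) := by
    unfold oddPrim primorial
    rw [← Finset.prod_image (g := fun l => 2 * l + 1) (f := fun p => p)]
    · apply Finset.prod_le_prod_of_subset_of_one_le'
      · intro p hp
        obtain ⟨l, hl, rfl⟩ := Finset.mem_image.1 hp
        have h2 := Finset.mem_filter.1 hl
        have h3 := Finset.mem_range.1 h2.1
        exact Finset.mem_filter.2 ⟨Finset.mem_range.2 (by omega), h2.2⟩
      · intro p hp _
        exact (Finset.mem_filter.1 hp).2.one_le
    · intro x _ y _ hxy
      simp only at hxy
      omega
  refine h1.trans ((primorial_le_four_pow _).trans ?_)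
  rw [pow_mul]; norm_num

theorem dvd_oddPrim {h l : ℕ} (hl : l < h) (hp : (2 * l + 1).Prime) : 2 * l + 1 ∣ oddPrim h :=
  Finset.dvd_prod_of_mem (fun l => 2 * l + 1) (Finset.mem_filter.2 ⟨Finset.mem_range.2 hl, hp⟩)

theorem le_of_coprime_oddPrim {h l : ℕ} (hp : (2 * l + 1).Prime)
    (hc : Nat.Coprime (2 * l + 1) (oddPrim h)) : h ≤ l := by
  by_contra hl
  have h1 := dvd_oddPrim (show l < h by omega) hp
  have h2 := Nat.Coprime.eq_one_of_dvd hc h1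
  exact hp.one_lt.ne' h2

theorem rough_oddPrim (h : ℕ) : ∀ p, p.Prime → Odd p → Nat.Coprime p (oddPrim h) → 2 * h + 1 ≤ p := by
  rintro p hp ⟨l, rfl⟩ hc
  have := le_of_coprime_oddPrim hp hc
  omega

theorem oddPrim_succ (h : ℕ) : oddPrim (h + 1) =
    if (2 * h + 1).Prime then oddPrim h * (2 * h + 1) else oddPrim h := by
  unfold oddPrim
  rw [Finset.range_add_one, Finset.filter_insert]
  split_ifs with hp
  · rw [Finset.prod_insert (by simp), mul_comm]
  · rfl

theorem dens_oddPrim_sq (h : ℕ) (hh : 1 ≤ h) : 1 ≤ dens (oddPrim h) ^ 2 * (2 * h - 1) := by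
  induction h, hh using Nat.le_induction with
  | base =>
    have : oddPrim 1 = 1 := by decide +kernel
    rw [this, dens]
    norm_num
  | succ h hh ih =>
    have hh' : (1 : ℝ) ≤ h := by exact_mod_cast hh
    rw [oddPrim_succ]
    split_ifs with hp
    · have hc : Nat.Coprime (oddPrim h) (2 * h + 1) := by
        rw [Nat.coprime_comm, Nat.Prime.coprime_iff_not_dvd hp]
        intro hd
        obtain ⟨l, hl, h2⟩ := (hp.prime.dvd_finsetProd_iff _).1 hd
        have h3 := Finset.mem_range.1 (Finset.mem_filter.1 hl).1
        have := Nat.le_of_dvd (by omega) h2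
        omega
      have hd : dens (oddPrim h * (2 * h + 1)) = dens (oddPrim h) * (2 * h / (2 * h + 1)) := by
        unfold dens
        rw [Nat.totient_mul hc, Nat.totient_prime hp]
        push_cast
        rw [mul_div_mul_comm]
      rw [hd]
      push_cast
      have h1 : (dens (oddPrim h) * (2 * h / (2 * h + 1))) ^ 2 * (2 * ((h : ℝ) + 1) - 1) =
        dens (oddPrim h) ^ 2 * ((2 * h) ^ 2 / (2 * h + 1)) := by
        field_simp
        ring
      rw [h1]
      refine ih.trans (mul_le_mul_of_nonneg_left ?_ (by positivity))
      rw [le_div_iff₀ (by positivity)]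
      nlinarith
    · refine ih.trans (mul_le_mul_of_nonneg_left ?_ (by positivity))
      push_cast
      linarith

theorem dens_oddPrim (h : ℕ) (hh : 1 ≤ h) : 1 / √(2 * h : ℝ) ≤ dens (oddPrim h) := by
  have hh' : (1 : ℝ) ≤ h := by exact_mod_cast hh
  have h1 := dens_oddPrim_sq h hh
  have h2 := dens_nonneg (oddPrim h)
  have h3 : 0 < √(2 * h : ℝ) := Real.sqrt_pos.2 (by positivity)
  have h4 : √(2 * h : ℝ) ^ 2 = 2 * h := Real.sq_sqrt (by positivity)
  rw [div_le_iff₀ h3]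
  by_contra hlt
  push Not at hlt
  have h5 : (dens (oddPrim h) * √(2 * h : ℝ)) ^ 2 < 1 := by
    rw [sq_lt_one_iff₀ (by positivity)]; exact hlt
  rw [mul_pow, h4] at h5
  nlinarith [sq_nonneg (dens (oddPrim h))]

theorem S2_oddPrim (n h : ℕ) (hh : 1 ≤ h) (hn : h ≤ n) : S2 n (oddPrim h) ≤ 1 / (4 * h) := by
  have h1 : PP n (oddPrim h) ⊆ Finset.Ico h n := by
    intro l hl
    have h2 := Finset.mem_filter.1 hl
    have h3 := Finset.mem_range.1 h2.1
    exact Finset.mem_Ico.2 ⟨le_of_coprime_oddPrim h2.2.1 h2.2.2, h3⟩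
  have h3 : S2 n (oddPrim h) ≤ _ := Finset.sum_le_sum_of_subset_of_nonneg h1
    (f := fun l => (1 : ℝ) / ((2 * l + 1 : ℕ) : ℝ) ^ 2) (by intros; positivity)
  have h4 := sum_inv_sq_le h n hh hn
  have : (0 : ℝ) ≤ 1 / (4 * n) := by positivity
  linarith

theorem exp_bounds {L : ℝ} (hL : 41.58 ≤ L) :
    16 * (1.01 * L + 3.01) * (0.241 * L + 1) ≤ 0.024 * Real.exp (0.332 * L) ∧
    17 * (1 + L / 3) ≤ 0.005 * Real.exp (0.306 * L) := by
  have he := Real.exp_one_gt_d9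
  have h13 : (400000 : ℝ) ≤ Real.exp 13 := by
    rw [show (13 : ℝ) = (13 : ℕ) * 1 by norm_num, Real.exp_nat_mul]
    calc (400000 : ℝ) ≤ 2.718 ^ 13 := by norm_num
      _ ≤ _ := by gcongr; linarith
  have h12 : (100000 : ℝ) ≤ Real.exp 12 := by
    rw [show (12 : ℝ) = (12 : ℕ) * 1 by norm_num, Real.exp_nat_mul]
    calc (100000 : ℝ) ≤ 2.718 ^ 12 := by norm_num
      _ ≤ _ := by gcongr; linarith
  constructor
  · have h1 : Real.exp (0.332 * L) = Real.exp 13 * Real.exp (0.332 * L - 13) := by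
      rw [← Real.exp_add]; congr 1; ring
    have h2 := Real.quadratic_le_exp_of_nonneg (show 0 ≤ 0.332 * L - 13 by linarith)
    rw [h1]
    have h3 : 400000 * (1 + (0.332 * L - 13) + (0.332 * L - 13) ^ 2 / 2) ≤
      Real.exp 13 * Real.exp (0.332 * L - 13) := by
      apply mul_le_mul h13 h2 _ (Real.exp_pos _).le
      have : 0 ≤ 0.332 * L - 13 := by linarith
      positivity
    nlinarith
  · have h1 : Real.exp (0.306 * L) = Real.exp 12 * Real.exp (0.306 * L - 12) := by
      rw [← Real.exp_add]; congr 1; ring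
    have h2 := Real.quadratic_le_exp_of_nonneg (show 0 ≤ 0.306 * L - 12 by linarith)
    rw [h1]
    have h3 : 100000 * (1 + (0.306 * L - 12) + (0.306 * L - 12) ^ 2 / 2) ≤
      Real.exp 12 * Real.exp (0.306 * L - 12) := by
      apply mul_le_mul h12 h2 _ (Real.exp_pos _).le
      have : 0 ≤ 0.306 * L - 12 := by linarith
      positivity
    nlinarith

theorem pow16_le {h : ℕ} {L c : ℝ} (h0 : 0 ≤ L) (hh : (h : ℝ) ≤ c * L + 1) :
    (16 : ℝ) ^ h ≤ 16 * Real.exp (2.773 * c * L) ∨ c < 0 := by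
  rcases lt_or_ge c 0 with hc | hc
  · right; exact hc
  left
  have hl := Real.log_two_lt_d9
  have hl' : Real.log 16 ≤ 2.773 := by
    rw [show (16 : ℝ) = 2 ^ 4 by norm_num, Real.log_pow]; push_cast; linarith
  have h1 : (16 : ℝ) ^ h = Real.exp (h * Real.log 16) := by
    rw [Real.exp_nat_mul, Real.exp_log (by norm_num)]
  have h2 : (16 : ℝ) * Real.exp (2.773 * c * L) = Real.exp (Real.log 16 + 2.773 * c * L) := by
    rw [Real.exp_add, Real.exp_log (by norm_num)]
  rw [h1, h2]
  apply Real.exp_le_exp.2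
  have h3 : 0 ≤ Real.log 16 := Real.log_nonneg (by norm_num)
  have h4 : (h : ℝ) * Real.log 16 ≤ (c * L + 1) * Real.log 16 := by gcongr
  have h5 : c * L * Real.log 16 ≤ c * L * 2.773 := by gcongr
  linarith

theorem L_ge {n : ℕ} (hn : 2 ^ 59 ≤ n) : 41.58 ≤ Real.log (2 * n) := by
  have hn' : ((2 : ℝ) ^ 59) ≤ n := by exact_mod_cast hn
  have h1 : Real.log (2 ^ 60) ≤ Real.log (2 * n) :=
    Real.log_le_log (by norm_num) (by rw [pow_succ]; linarith)
  rw [Real.log_pow] at h1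
  have := Real.log_two_gt_d9
  push_cast at h1
  linarith

theorem Viol.y_large {n a : ℕ} {X Y : Finset ℕ} (V : Viol n a X Y) (hn : 2 ^ 59 ≤ n) :
    1.35 / Real.log (2 * n) * n ≤ Y.card := by
  have hy := V.yend (by omega)
  have hL := L_ge hn
  have hn' : ((2 : ℝ) ^ 59) ≤ n := by exact_mod_cast hn
  set s := √(n : ℝ) with hs
  have hss : s * s = n := Real.mul_self_sqrt (by positivity)
  have hs29 : 2 ^ 29 ≤ s := by
    apply Real.le_sqrt_of_sq_le
    refine le_trans ?_ hn'
    norm_num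
  have hl2 := Real.log_two_gt_d9
  have hl2' := Real.log_two_lt_d9
  have h13 : Real.log (2 * n + 1) ≤ 2 * Real.log (2 * n) := by
    rw [show 2 * Real.log (2 * (n : ℝ)) = Real.log ((2 * n) ^ 2) by rw [Real.log_pow]; norm_num]
    apply Real.log_le_log (by positivity)
    nlinarith
  have hLu : Real.log (2 * n) ≤ 41 + s / 2 ^ 28 := by
    rw [← hss, Real.log_mul (by norm_num) (by positivity), Real.log_mul (by positivity) (by positivity)]
    have h3 : Real.log s ≤ 29 * Real.log 2 + (s / 2 ^ 29 - 1) := by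
      have h4 := Real.log_le_sub_one_of_pos (show 0 < s / 2 ^ 29 by positivity)
      rw [Real.log_div (by positivity) (by norm_num), Real.log_pow] at h4
      push_cast at h4
      linarith
    have : s / 2 ^ 28 = 2 * (s / 2 ^ 29) := by ring
    linarith
  have h5 : (s + 2) * Real.log (2 * n) ≤ 0.036 * n := by
    calc (s + 2) * Real.log (2 * n) ≤ (s + 2) * (41 + s / 2 ^ 28) := by gcongr
      _ ≤ 0.036 * (s * s) := by nlinarith
      _ = _ := by rw [hss]
  rw [div_mul_eq_mul_div, div_le_iff₀ (by linarith)]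
  have h6 : 1.386 * (n : ℝ) ≤ 2 * n * Real.log 2 := by nlinarith
  nlinarith

theorem Viol.x_large {n a : ℕ} {X Y : Finset ℕ} (V : Viol n a X Y) (hn : 2 ^ 59 ≤ n) :
    1.35 / Real.log (2 * n) * n ≤ X.card := by
  have hL := L_ge hn
  have hn' : ((2 : ℝ) ^ 59) ≤ n := by exact_mod_cast hn
  have hn0 : (0 : ℝ) < n := by linarith [show (0 : ℝ) < 2 ^ 59 by positivity]
  set L := Real.log (2 * n) with hLdef
  have hexp : Real.exp L = 2 * n := Real.exp_log (by positivity)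
  set h := ⌈L / 4⌉₊ with hh
  have hh1 : L / 4 ≤ h := Nat.le_ceil _
  have hh2 : (h : ℝ) < L / 4 + 1 := Nat.ceil_lt_add_one (by linarith)
  have hh11 : 11 ≤ h := by
    have : (10 : ℝ) < h := by linarith
    have : 10 < h := by exact_mod_cast this
    omega
  obtain ⟨c, hc1, hc2⟩ := V.xend (oddPrim h) (2 * h + 1) (oddPrim_odd h) (by omega) (rough_oddPrim h)
  have hd := dens_oddPrim h (by omega)
  have hM : ((oddPrim h : ℕ) : ℝ) ≤ 16 ^ h := by exact_mod_cast oddPrim_le h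
  set M : ℝ := ((oddPrim h : ℕ) : ℝ) with hMdef
  have hc3 : (c : ℝ) ≤ L / 3 := by
    have h1 : ((2 * h + 1 : ℕ) : ℝ) ^ c ≤ 2 * n := by exact_mod_cast hc1
    have h2 : Real.exp 3 ≤ ((2 * h + 1 : ℕ) : ℝ) := by
      have he := Real.exp_one_lt_d9
      have h3 : Real.exp 3 ≤ 23 := by
        rw [show (3 : ℝ) = (3 : ℕ) * 1 by norm_num, Real.exp_nat_mul]
        calc Real.exp 1 ^ 3 ≤ 2.7183 ^ 3 := by gcongr; linarith
          _ ≤ 23 := by norm_num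
      refine h3.trans ?_
      have : 23 ≤ 2 * h + 1 := by omega
      exact_mod_cast this
    have h4 : Real.exp (c * 3) ≤ Real.exp L := by
      rw [hexp, Real.exp_nat_mul]
      refine le_trans ?_ h1
      gcongr
    have := Real.exp_le_exp.1 h4
    linarith
  have hM2 : M ≤ 16 * Real.exp (0.694 * L) := by
    rcases pow16_le (L := L) (c := 1 / 4) (h := h) (by linarith) (by linarith) with h1 | h1
    · refine hM.trans (h1.trans ?_)
      gcongr
      linarith
    · norm_num at h1
  have h1e : 1 ≤ Real.exp (0.694 * L) := Real.one_le_exp (by linarith)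
  have herr : (1 + (c : ℝ)) * (1 + M) ≤ 0.01 * n := by
    have h2 := (exp_bounds hL).2
    calc (1 + (c : ℝ)) * (1 + M) ≤ (1 + L / 3) * (17 * Real.exp (0.694 * L)) := by
          apply mul_le_mul (by linarith) (by linarith) (by positivity) (by linarith)
      _ = 17 * (1 + L / 3) * Real.exp (0.694 * L) := by ring
      _ ≤ 0.005 * Real.exp (0.306 * L) * Real.exp (0.694 * L) := by gcongr
      _ = 0.005 * Real.exp L := by
          rw [mul_assoc, ← Real.exp_add]; congr 2; ring
      _ = 0.01 * n := by rw [hexp]; ring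
  have hcB : (c : ℝ) * ((n : ℝ) / (2 * h + 1 : ℕ)) ≤ 2 / 3 * n := by
    rw [mul_div_assoc', div_le_iff₀ (by positivity)]
    push_cast
    have : (c : ℝ) ≤ 2 / 3 * (2 * h + 1) := by linarith
    nlinarith
  have hin : 0.32 * n ≤ (n : ℝ) - M - c * ((n : ℝ) / (2 * h + 1 : ℕ) + 1 + M) := by
    nlinarith
  refine le_trans ?_ hc2
  have hs0 : 0 < √(2 * h : ℝ) := Real.sqrt_pos.2 (by positivity)
  have hsq : √(2 * h : ℝ) ≤ L / 5 := by
    rw [Real.sqrt_le_left (by linarith)]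
    nlinarith
  calc 1.35 / L * n ≤ (1 / (L / 5)) * (0.32 * n) := by
        rw [show (1 / (L / 5)) * (0.32 * (n : ℝ)) = 1.6 / L * n by field_simp; norm_num]
        gcongr
        norm_num
    _ ≤ (1 / √(2 * h : ℝ)) * (0.32 * n) := by gcongr
    _ ≤ dens (oddPrim h) * (0.32 * n) := by gcongr
    _ ≤ _ := mul_le_mul_of_nonneg_left hin (dens_nonneg _)

set_option maxHeartbeats 2000000 in
theorem range5 {n a : ℕ} {X Y : Finset ℕ} (V : Viol n a X Y) (hn : 2 ^ 59 ≤ n) : False := by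
  have hL := L_ge hn
  have hn' : ((2 : ℝ) ^ 59) ≤ n := by exact_mod_cast hn
  have hn0 : (0 : ℝ) < n := by linarith [show (0 : ℝ) < 2 ^ 59 by positivity]
  have hx := V.le_kap _ (V.x_large hn) (V.y_large hn) (by
    rw [div_le_iff₀ (by linarith)]; linarith)
  rcases le_or_gt 0.031 (kap n X Y) with hk | hk
  · have h3 := S2_1155 n (by omega)
    have h5 := errT_le n 59 1155 (by norm_num) (by omega)
    norm_num at h5
    refine V.mid_contra (by omega) 0.031 1155 (by decide) (by norm_num) hk ?_ ?_
    · rw [dens_1155]; norm_num; linarith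
    · rw [dens_1155]; norm_num; linarith
  set x := kap n X Y with hxdef
  set L := Real.log (2 * n) with hLdef
  have hexp : Real.exp L = 2 * n := Real.exp_log (by positivity)
  have hL0 : 0 < L := by linarith
  have hx0 : 0 < x := lt_of_lt_of_le (by positivity) hx
  set h := ⌈0.325 / x⌉₊ with hh
  have hh1 : 0.325 / x ≤ h := Nat.le_ceil _
  have hh2 : (h : ℝ) < 0.325 / x + 1 := Nat.ceil_lt_add_one (by positivity)
  rw [div_le_iff₀ hx0] at hh1
  have hh3 : (h : ℝ) ≤ 0.2408 * L + 1 := by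
    have h1 : 0.325 / x ≤ 0.2408 * L := by
      rw [div_le_iff₀ hx0]
      rw [div_le_iff₀ hL0] at hx
      nlinarith
    linarith
  have hh11 : 11 ≤ h := by
    have : (10 : ℝ) < h := by nlinarith
    have : 10 < h := by exact_mod_cast this
    omega
  have hhp : (11 : ℝ) ≤ h := by exact_mod_cast hh11
  have hh4 : (h : ℝ) * x ≤ 0.325 + x := by
    have : (h : ℝ) * x ≤ (0.325 / x + 1) * x := by gcongr
    rwa [add_mul, one_mul, div_mul_cancel₀ _ hx0.ne'] at this
  -- error term
  have hM : ((oddPrim h : ℕ) : ℝ) ≤ 16 ^ h := by exact_mod_cast oddPrim_le h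
  have h16 : (1000 : ℝ) ≤ 16 ^ h := by
    calc (1000 : ℝ) ≤ 16 ^ 11 := by norm_num
      _ ≤ 16 ^ h := pow_le_pow_right₀ (by norm_num) hh11
  have h16' : (16 : ℝ) ^ h ≤ 16 * Real.exp (0.668 * L) := by
    rcases pow16_le (L := L) (c := 0.2408) (h := h) (by linarith) (by linarith) with h1 | h1
    · refine h1.trans ?_
      gcongr
      nlinarith
    · norm_num at h1
  have hlogn : Real.log n ≤ L := Real.log_le_log hn0 (by linarith)
  have hlogn0 : 0 ≤ Real.log n := Real.log_natCast_nonneg n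
  have herr : errT n (oddPrim h) * h ≤ 0.024 := by
    have h1 : ((oddPrim h : ℕ) + 2) * Real.log n + 3 * (oddPrim h : ℕ) + 2 ≤
        16 ^ h * (1.01 * L + 3.01) := by
      have : ((oddPrim h : ℕ) + 2) * Real.log n ≤ 16 ^ h * 1.01 * L := by
        apply mul_le_mul (by linarith) hlogn hlogn0 (by positivity)
      nlinarith
    have h2 := (exp_bounds hL).1
    unfold errT
    rw [div_mul_eq_mul_div, div_le_iff₀ (by positivity), ← hexp]
    calc (((oddPrim h : ℕ) + 2) * Real.log n + 3 * (oddPrim h : ℕ) + 2) * (h : ℝ)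
        ≤ (16 * Real.exp (0.668 * L) * (1.01 * L + 3.01)) * (0.241 * L + 1) := by
          apply mul_le_mul _ (by linarith) (by positivity) (by positivity)
          refine h1.trans ?_
          gcongr
      _ = (16 * (1.01 * L + 3.01) * (0.241 * L + 1)) * Real.exp (0.668 * L) := by ring
      _ ≤ 0.024 * Real.exp (0.332 * L) * Real.exp (0.668 * L) := by gcongr
      _ = 0.024 * Real.exp L := by
          rw [mul_assoc, ← Real.exp_add]; congr 2; ring
  have hhn : h ≤ n := by
    have h1 : L ≤ 2 * n - 1 := Real.log_le_sub_one_of_pos (by positivity)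
    have : (h : ℝ) ≤ n := by nlinarith
    exact_mod_cast this
  have hmid := V.mid' (oddPrim h) (oddPrim_odd h)
  rw [← hxdef] at hmid
  have hS := S2_oddPrim n h (by omega) hhn
  have hd := dens_oddPrim h (by omega)
  have hs0 : 0 < √(2 * h : ℝ) := Real.sqrt_pos.2 (by positivity)
  have hsq : √(2 * h : ℝ) ^ 2 = 2 * h := Real.sq_sqrt (by positivity)
  have h6 : x / dens (oddPrim h) ≤ x * √(2 * h : ℝ) := by
    rw [div_le_iff₀ (dens_pos (oddPrim_odd h).pos)]
    rw [div_le_iff₀ hs0] at hd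
    nlinarith
  have h7 : x * (1 - x * √(2 * h : ℝ)) ≤ 1 / (4 * h) + errT n (oddPrim h) := by
    have : x * (1 - x * √(2 * h : ℝ)) ≤ x * (1 - x / dens (oddPrim h)) := by
      apply mul_le_mul_of_nonneg_left _ hx0.le
      linarith
    linarith
  have h8 : (h * x) * (1 - x * √(2 * h : ℝ)) ≤ 0.274 := by
    have h9 := mul_le_mul_of_nonneg_right h7 (show (0 : ℝ) ≤ h by positivity)
    have h10 : (1 / (4 * (h : ℝ)) + errT n (oddPrim h)) * h = 1 / 4 + errT n (oddPrim h) * h := by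
      field_simp
    rw [h10] at h9
    linarith
  -- x * sqrt(2h) is small
  have h9 : x * √(2 * h : ℝ) ≤ 0.1525 := by
    have : (x * √(2 * h : ℝ)) ^ 2 ≤ 0.1525 ^ 2 := by
      rw [mul_pow, hsq]
      nlinarith
    exact le_of_sq_le_sq this (by norm_num)
  nlinarith

end Part5

section Part6

theorem caterpillar_of_matching (n t : ℕ) (hn : 1 ≤ n)
    (P : ∀ a : ℕ, ∃ σ : Fin n → Fin n, Function.Injective σ ∧
      ∀ i, Nat.Coprime (2 * i.val + 1) (a + 2 * (σ i).val)) :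
    IsOddPrime (tToedCaterpillar n t) := by
  choose σ hinj hcop using P
  let ℓ : Fin 2 ⊕ (Fin n ⊕ (Fin n × Fin t)) → ℕ := fun v =>
    match v with
    | Sum.inl a => if a = 0 then 2 * n + 3 else 2 * n + 1
    | Sum.inr (Sum.inl i) => 2 * i.val + 1
    | Sum.inr (Sum.inr (i, j)) =>
      (2 * n + 5 + 2 * (n * j.val)) + 2 * (σ (2 * n + 5 + 2 * (n * j.val)) i).val
  have key : ∀ u v : Fin 2 ⊕ (Fin n ⊕ (Fin n × Fin t)),
      (match u, v with
        | Sum.inl a, Sum.inr (Sum.inl i) => (a = 0 ∧ i.val = 0) ∨ (a = 1 ∧ i.val = n - 1)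
        | Sum.inr (Sum.inl i), Sum.inr (Sum.inl i') => i'.val = i.val + 1
        | Sum.inr (Sum.inl i), Sum.inr (Sum.inr (i', _)) => i = i'
        | _, _ => False) → Nat.Coprime (ℓ u) (ℓ v) := by
    have two : ∀ k : ℕ, Nat.Coprime (2 * k + 1) (2 * (k + 1) + 1) := by
      intro k
      rw [show 2 * (k + 1) + 1 = 2 + (2 * k + 1) by ring, Nat.coprime_add_self_right]
      simp
    rintro (a | i | ⟨i, j⟩) (b | i' | ⟨i', j'⟩) h <;> try exact h.elim
    · rcases h with ⟨rfl, h⟩ | ⟨rfl, h⟩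
      · simp [ℓ, h]
      · have := two i'.val
        have h2 : i'.val + 1 = n := by omega
        rw [h2] at this
        simpa [ℓ] using this.symm
    · have h' : i'.val = i.val + 1 := h
      have := two i.val
      rw [← h'] at this
      exact this
    · have h' : i = i' := h
      subst h'
      exact hcop _ i
  have l0 : ℓ (Sum.inl 0) = 2 * n + 3 := rfl
  have l1 : ℓ (Sum.inl 1) = 2 * n + 1 := rfl
  have l2 : ∀ i, ℓ (Sum.inr (Sum.inl i)) = 2 * i.val + 1 := fun _ => rfl
  have l3 : ∀ i j, ℓ (Sum.inr (Sum.inr (i, j))) = (2 * n + 5 + 2 * (n * j.val)) +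
    2 * (σ (2 * n + 5 + 2 * (n * j.val)) i).val := fun _ _ => rfl
  have la : ∀ a, (a = 0 ∧ ℓ (Sum.inl a) = 2 * n + 3) ∨ (a = 1 ∧ ℓ (Sum.inl a) = 2 * n + 1) := by
    intro a
    fin_cases a
    · exact Or.inl ⟨rfl, l0⟩
    · exact Or.inr ⟨rfl, l1⟩
  clear_value ℓ
  refine ⟨ℓ, ?_, ?_, ?_⟩
  · have leaf : ∀ (i i' : Fin n) (j j' : Fin t),
        (2 * n + 5 + 2 * (n * j.val)) + 2 * (σ (2 * n + 5 + 2 * (n * j.val)) i).val =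
        (2 * n + 5 + 2 * (n * j'.val)) + 2 * (σ (2 * n + 5 + 2 * (n * j'.val)) i').val →
        i = i' ∧ j = j' := by
      intro i i' j j' h
      have h1 := (σ (2 * n + 5 + 2 * (n * j.val)) i).isLt
      have h2 := (σ (2 * n + 5 + 2 * (n * j'.val)) i').isLt
      have hj : j.val = j'.val := by
        rcases lt_trichotomy j.val j'.val with hl | hl | hl
        · have := Nat.mul_le_mul_left n (Nat.succ_le_of_lt hl)
          rw [Nat.mul_succ] at this
          omega
        · exact hl
        · have := Nat.mul_le_mul_left n (Nat.succ_le_of_lt hl)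
          rw [Nat.mul_succ] at this
          omega
      have hj' : j = j' := Fin.ext hj
      subst hj'
      refine ⟨hinj (2 * n + 5 + 2 * (n * j.val)) (Fin.ext ?_), rfl⟩
      omega
    rintro (a | i | ⟨i, j⟩) (b | i' | ⟨i', j'⟩) h
    · rcases la a with ⟨rfl, h1⟩ | ⟨rfl, h1⟩ <;> rcases la b with ⟨rfl, h2⟩ | ⟨rfl, h2⟩
      · rfl
      · omega
      · omega
      · rfl
    · exfalso
      have := i'.isLt
      rcases la a with ⟨_, h1⟩ | ⟨_, h1⟩ <;> simp only [h1, l2, l3] at h <;> omega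
    · exfalso
      rcases la a with ⟨_, h1⟩ | ⟨_, h1⟩ <;> simp only [h1, l2, l3] at h <;> omega
    · exfalso
      have := i.isLt
      rcases la b with ⟨_, h1⟩ | ⟨_, h1⟩ <;> simp only [h1, l2, l3] at h <;> omega
    · have h' : 2 * i.val + 1 = 2 * i'.val + 1 := by rw [← l2, ← l2, h]
      have : i = i' := Fin.ext (by omega)
      rw [this]
    · exfalso
      have := i.isLt
      simp only [l2, l3] at h
      omega
    · exfalso
      rcases la b with ⟨_, h1⟩ | ⟨_, h1⟩ <;> simp only [h1, l2, l3] at h <;> omega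
    · exfalso
      have := i'.isLt
      simp only [l2, l3] at h
      omega
    · obtain ⟨rfl, rfl⟩ := leaf i i' j j' (by rw [← l3, ← l3, h])
      rfl
  · have hcard : Fintype.card (Fin 2 ⊕ (Fin n ⊕ (Fin n × Fin t))) = 2 + (n + n * t) := by
      simp
    rw [hcard]
    rintro (a | i | ⟨i, j⟩)
    · have := Nat.zero_le (n * t)
      constructor
      · rcases la a with ⟨_, h1⟩ | ⟨_, h1⟩
        · exact ⟨n + 1, by rw [h1]; ring⟩
        · exact ⟨n, h1⟩
      · rcases la a with ⟨_, h1⟩ | ⟨_, h1⟩ <;> rw [h1] <;> omega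
    · have := i.isLt
      exact ⟨⟨i.val, l2 i⟩, by simp only [l2, l3]; omega⟩
    · have h1 := (σ (2 * n + 5 + 2 * (n * j.val)) i).isLt
      have h2 := Nat.mul_le_mul_left n (Nat.succ_le_of_lt j.isLt)
      rw [Nat.mul_succ] at h2
      refine ⟨⟨n + 2 + n * j.val + (σ (2 * n + 5 + 2 * (n * j.val)) i).val, ?_⟩, ?_⟩
      · simp only [l2, l3]
        ring
      · simp only [l2, l3]
        omega
  · intro u v h
    rw [tToedCaterpillar, SimpleGraph.fromRel_adj] at h
    rcases h.2 with h | h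
    · exact key u v h
    · exact (key v u h).symm

theorem matching_exists (n : ℕ) (hn : 1 ≤ n) (a : ℕ) :
    ∃ σ : Fin n → Fin n, Function.Injective σ ∧
      ∀ i, Nat.Coprime (2 * i.val + 1) (a + 2 * (σ i).val) := by
  apply hall_reduction
  intro X Y hX hY hXn hYn hc h
  rcases le_or_gt n 4529 with h1 | h1
  · exact no_violator_of_counts n a (small_case n hn h1 a) X Y hX hY hYn hc h
  have V : Viol n a X Y := ⟨hX, hY, hXn, hYn, hc, h⟩
  rcases le_or_gt n (2 ^ 14) with h2 | h2
  · exact range1 V (by omega) h2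
  rcases le_or_gt n (2 ^ 18) with h3 | h3
  · exact range2 V h2.le h3
  rcases le_or_gt n (2 ^ 25) with h4 | h4
  · exact range3 V h3.le h4
  rcases le_or_gt n (2 ^ 59) with h5 | h5
  · exact range4 V h4.le h5
  · exact range5 V h5.le

end Part6

/-- All `t`-toed caterpillars are odd prime, for every length `n ≥ 1` and every
number of toes `t ≥ 1`. -/
theorem tToedCaterpillar_oddPrime (n t : ℕ) (hn : 1 ≤ n) (ht : 1 ≤ t) :
    IsOddPrime (tToedCaterpillar n t) := by
  exact caterpillar_of_matching n t hn (matching_exists n hn)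
end

section
/- For all n > 1 and k ≥ 3, the firecracker graph F_{n,k} is odd prime. -/
/-- The firecracker graph `F_{n,k}`: a path `v_0, ..., v_{n-1}` (the first summand),
star centers `u_0, ..., u_{n-1}` (the second summand), and star leaves `w_{i,j}`
for `0 ≤ j < k - 2` (the third summand), with edges `v_i v_{i+1}`, `v_i u_i`,
and `u_i w_{i,j}`; in total it has `n * k` vertices. -/
def firecracker (n k : ℕ) : SimpleGraph (Fin n ⊕ (Fin n ⊕ (Fin n × Fin (k - 2)))) :=
  SimpleGraph.fromRel (fun a b =>
    match a, b with
    | Sum.inl i, Sum.inl i' => i'.val = i.val + 1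
    | Sum.inl i, Sum.inr (Sum.inl i') => i = i'
    | Sum.inr (Sum.inl i), Sum.inr (Sum.inr (i', _)) => i = i'
    | _, _ => False)


namespace FC
open Finset

lemma mk (n k : ℕ) (hk : 3 ≤ k) (v u : Fin n → ℕ) (w : Fin n × Fin (k - 2) → ℕ)
    (hv : Function.Injective v) (hu : Function.Injective u) (hw : Function.Injective w)
    (d1 : ∀ i j, v i ≠ u j) (d2 : ∀ i a, v i ≠ w a) (d3 : ∀ i a, u i ≠ w a)
    (ov : ∀ i, Odd (v i)) (ou : ∀ i, Odd (u i)) (ow : ∀ a, Odd (w a))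
    (lv : ∀ i, v i < 2 * (n * k)) (lu : ∀ i, u i < 2 * (n * k)) (lw : ∀ a, w a < 2 * (n * k))
    (c1 : ∀ i j : Fin n, j.val = i.val + 1 → Nat.Coprime (v i) (v j))
    (c2 : ∀ i, Nat.Coprime (v i) (u i)) (c3 : ∀ i j, Nat.Coprime (u i) (w (i, j))) :
    IsOddPrime (firecracker n k) := by
  have hcard : Fintype.card (Fin n ⊕ (Fin n ⊕ (Fin n × Fin (k - 2)))) = n * k := by
    simp only [Fintype.card_sum, Fintype.card_prod, Fintype.card_fin]
    obtain ⟨r, rfl⟩ : ∃ r, k = r + 2 := ⟨k - 2, by omega⟩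
    simp only [Nat.add_sub_cancel]; ring
  refine ⟨Sum.elim v (Sum.elim u w), ?_, ?_, ?_⟩
  · exact hv.sumElim (hu.sumElim hw d3) (by rintro i (j | a); exacts [d1 i j, d2 i a])
  · rw [hcard]
    rintro (i | i | a)
    · exact ⟨ov i, by have := lv i; simp only [Sum.elim_inl]; omega⟩
    · exact ⟨ou i, by have := lu i; simp only [Sum.elim_inl, Sum.elim_inr]; omega⟩
    · exact ⟨ow a, by have := lw a; simp only [Sum.elim_inr]; omega⟩
  · intro a b hab
    rw [firecracker, SimpleGraph.fromRel_adj] at hab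
    obtain ⟨_, h | h⟩ := hab
    · rcases a with i | i | ⟨i, j⟩ <;> rcases b with i' | i' | ⟨i', j'⟩ <;> simp only at h
      · exact c1 i i' h
      · subst h; exact c2 i
      · subst h; exact c3 i j'
    · rcases a with i | i | ⟨i, j⟩ <;> rcases b with i' | i' | ⟨i', j'⟩ <;> simp only at h
      · exact (c1 i' i h).symm
      · subst h; exact (c2 i').symm
      · subst h; exact (c3 i' j).symm

/-- Legendre sieve on an arithmetic progression. -/
lemma legendre (R : Finset ℕ) : (∀ p ∈ R, p.Prime) → ∀ (a D m : ℕ), (∀ p ∈ R, ¬ p ∣ D) →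
    |((#{i ∈ range m | ∀ p ∈ R, ¬ p ∣ a + D * i} : ℕ) : ℝ) - m * ∏ p ∈ R, (1 - 1 / (p : ℝ))|
      ≤ 2 ^ #R - 1 := by
  classical
  induction R using Finset.induction_on with
  | empty => intro _ a D m _; simp
  | insert q R hq ih =>
    intro hP a D m hD
    have hPR : ∀ p ∈ R, p.Prime := fun p hp => hP p (mem_insert_of_mem hp)
    have hqp : q.Prime := hP q (mem_insert_self _ _)
    have hqD : ¬ q ∣ D := hD q (mem_insert_self _ _)
    have hDR : ∀ p ∈ R, ¬ p ∣ D := fun p hp => hD p (mem_insert_of_mem hp)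
    have hq0 : 0 < q := hqp.pos
    obtain ⟨i0, hi0, hi0'⟩ : ∃ i0, i0 < q ∧ q ∣ a + D * i0 := by
      have : Fact q.Prime := ⟨hqp⟩
      have hDz : (D : ZMod q) ≠ 0 := by
        rwa [Ne, ZMod.natCast_eq_zero_iff]
      refine ⟨(-(a : ZMod q) / D).val, ZMod.val_lt _, ?_⟩
      rw [← ZMod.natCast_eq_zero_iff]
      push_cast
      rw [ZMod.natCast_zmod_val]
      field_simp
      ring
    have hdiv : ∀ i, q ∣ a + D * i ↔ i % q = i0 := by
      intro i
      constructor
      · intro h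
        have h1 : (a + D * i) ≡ (a + D * i0) [MOD q] :=
          ((Nat.modEq_zero_iff_dvd).2 h).trans ((Nat.modEq_zero_iff_dvd).2 hi0').symm
        have h2 : D * i ≡ D * i0 [MOD q] := Nat.ModEq.add_left_cancel' a h1
        have h3 : i ≡ i0 [MOD q] :=
          Nat.ModEq.cancel_left_of_coprime ((Nat.Prime.coprime_iff_not_dvd hqp).2 hqD) h2
        have : i % q = i0 % q := h3
        rw [this, Nat.mod_eq_of_lt hi0]
      · intro h
        have h4 : i = i0 + q * (i / q) := by rw [← h]; exact (Nat.mod_add_div i q).symm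
        rw [h4, Nat.mul_add, ← add_assoc]
        exact dvd_add hi0' (Dvd.dvd.mul_left (dvd_mul_right q _) D)
    set m' := (m - i0 + (q - 1)) / q with hm'
    have hm'lt : ∀ t, t < m' ↔ i0 + q * t < m := by
      intro t
      rw [hm', Nat.lt_iff_add_one_le, Nat.le_div_iff_mul_le hq0]
      have : (t + 1) * q = q * t + q := by ring
      rw [this]
      omega
    have hm'1 : |(m' : ℝ) - m / q| ≤ 1 := by
      have hqr : (0 : ℝ) < q := by exact_mod_cast hq0
      have e1 : m' * q ≤ m - i0 + (q - 1) := Nat.div_mul_le_self _ _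
      have e2 : m - i0 + (q - 1) < m' * q + q := by
        have := Nat.lt_div_mul_add hq0 (a := m - i0 + (q - 1)); rwa [← hm'] at this
      have e3 : m' * q ≤ m + q := by omega
      have e4 : m ≤ m' * q + q := by omega
      have e3' : (m' : ℝ) * q ≤ m + q := by exact_mod_cast e3
      have e4' : (m : ℝ) ≤ m' * q + q := by exact_mod_cast e4
      have : (m : ℝ) / q * q = m := by field_simp
      rw [abs_le]
      constructor <;> nlinarith
    have hcount : (#{i ∈ range m | ∀ p ∈ R, ¬ p ∣ a + D * i} : ℕ)
        = #{i ∈ range m | ∀ p ∈ insert q R, ¬ p ∣ a + D * i}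
          + #{t ∈ range m' | ∀ p ∈ R, ¬ p ∣ (a + D * i0) + (D * q) * t} := by
      rw [← Finset.card_filter_add_card_filter_not
        (s := {i ∈ range m | ∀ p ∈ R, ¬ p ∣ a + D * i}) (p := fun i => ¬ q ∣ a + D * i)]
      congr 1
      · congr 1
        ext i
        simp only [mem_filter, mem_range, forall_mem_insert]
        tauto
      · symm
        apply Finset.card_bij (fun t _ => i0 + q * t)
        · intro t ht
          simp only [mem_filter, mem_range] at ht ⊢
          refine ⟨⟨(hm'lt t).1 ht.1, ?_⟩, ?_⟩
          · intro p hp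
            have := ht.2 p hp
            rwa [show a + D * (i0 + q * t) = a + D * i0 + D * q * t by ring]
          · rw [not_not, hdiv]
            rw [Nat.add_mul_mod_self_left, Nat.mod_eq_of_lt hi0]
        · intro t _ t' _ h
          have : q * t = q * t' := by omega
          exact Nat.eq_of_mul_eq_mul_left hq0 this
        · intro i hi
          simp only [mem_filter, mem_range, not_not] at hi
          have h5 := (hdiv i).1 hi.2
          have h4 : i0 + q * (i / q) = i := by rw [← h5]; exact Nat.mod_add_div i q
          refine ⟨i / q, ?_, h4⟩
          simp only [mem_filter, mem_range]
          refine ⟨(hm'lt _).2 (by rw [h4]; exact hi.1.1), ?_⟩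
          intro p hp
          have := hi.1.2 p hp
          rwa [show a + D * i0 + D * q * (i / q) = a + D * (i0 + q * (i / q)) by ring, h4]
    have ih1 := ih hPR a D m hDR
    have ih2 := ih hPR (a + D * i0) (D * q) m' (by
      intro p hp hpd
      rcases (Nat.Prime.dvd_mul (hPR p hp)).1 hpd with h | h
      · exact hDR p hp h
      · rw [(Nat.prime_dvd_prime_iff_eq (hPR p hp) hqp).1 h] at hp
        exact hq hp)
    rw [prod_insert hq, card_insert_of_notMem hq]
    set X := #{i ∈ range m | ∀ p ∈ R, ¬ p ∣ a + D * i}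
    set Y := #{i ∈ range m | ∀ p ∈ insert q R, ¬ p ∣ a + D * i}
    set Z := #{t ∈ range m' | ∀ p ∈ R, ¬ p ∣ (a + D * i0) + (D * q) * t}
    set π := ∏ p ∈ R, (1 - 1 / (p : ℝ)) with hπ
    have hπ0 : 0 ≤ π := prod_nonneg (fun p hp => by
      have : (1 : ℝ) ≤ p := by exact_mod_cast (hPR p hp).one_le
      rw [sub_nonneg, div_le_one (by linarith)]; exact this)
    have hπ1 : π ≤ 1 := prod_le_one (fun p hp => by
      have : (1 : ℝ) ≤ p := by exact_mod_cast (hPR p hp).one_le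
      rw [sub_nonneg, div_le_one (by linarith)]; exact this) (fun p hp => by
      have : (0 : ℝ) ≤ 1 / (p : ℝ) := by positivity
      linarith)
    have hXYZ : (X : ℝ) = Y + Z := by exact_mod_cast hcount
    have hmm : |((m' : ℝ) - m / q) * π| ≤ 1 := by
      rw [abs_mul, abs_of_nonneg hπ0]
      exact mul_le_one₀ hm'1 hπ0 hπ1
    rw [abs_le] at *
    have e : (m : ℝ) * ((1 - 1 / (q : ℝ)) * π) = m * π - m / q * π := by ring
    rw [e, pow_succ]
    constructor <;> nlinarith

/-- prime factors at least 5 -/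
def RR (x : ℕ) : Finset ℕ := x.primeFactors.filter (5 ≤ ·)

/-- the density of integers coprime to the big primes of x -/
noncomputable def dl (x : ℕ) : ℝ := ∏ p ∈ RR x, (1 - 1 / (p : ℝ))

/-- sieve error -/
noncomputable def ee (x : ℕ) : ℝ := 2 ^ #(RR x)

lemma mem_RR {x p : ℕ} (hx : x ≠ 0) : p ∈ RR x ↔ p.Prime ∧ p ∣ x ∧ 5 ≤ p := by
  simp [RR, hx, and_assoc]

lemma RR_prime {x p : ℕ} (h : p ∈ RR x) : p.Prime := by
  simp only [RR, mem_filter] at h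
  exact Nat.prime_of_mem_primeFactors h.1

lemma RR_ge {x p : ℕ} (h : p ∈ RR x) : 5 ≤ p := by
  simp only [RR, mem_filter] at h
  exact h.2

lemma dl_pos (x : ℕ) : 0 < dl x := by
  refine prod_pos fun p hp => ?_
  have : (5 : ℝ) ≤ p := by exact_mod_cast RR_ge hp
  rw [sub_pos, div_lt_one (by linarith)]; linarith

lemma dl_le_one (x : ℕ) : dl x ≤ 1 := by
  refine prod_le_one (fun p hp => ?_) (fun p hp => ?_)
  · have : (5 : ℝ) ≤ p := by exact_mod_cast RR_ge hp
    rw [sub_nonneg, div_le_one (by linarith)]; linarith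
  · have : (0 : ℝ) ≤ 1 / (p : ℝ) := by positivity
    linarith

/-- weight -/
noncomputable def hh (p : ℕ) : ℝ := ((p : ℝ) / (p - 1)) ^ 8 - 1

lemma hh_nonneg {p : ℕ} (hp : 5 ≤ p) : 0 ≤ hh p := by
  have : (5 : ℝ) ≤ p := by exact_mod_cast hp
  unfold hh
  have : 1 ≤ (p : ℝ) / (p - 1) := by rw [le_div_iff₀ (by linarith)]; linarith
  have := one_le_pow₀ this (n := 8)
  linarith

lemma hh_le {p : ℕ} (hp : 41 ≤ p) : hh p / p ≤ 10 * (1 / (p : ℝ) ^ 2) := by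
  have h41 : (41 : ℝ) ≤ p := by exact_mod_cast hp
  have key : hh p ≤ 10 / p := by
    unfold hh
    set y : ℝ := 1 / p with hy
    have hy0 : 0 < y := by positivity
    have hy1 : y ≤ 1 / 41 := by
      rw [hy]; exact one_div_le_one_div_of_le (by norm_num) h41
    have e1 : (p : ℝ) / (p - 1) = 1 / (1 - y) := by
      rw [hy]; field_simp
    have e2 : (10 : ℝ) / p = 10 * y := by rw [hy]; ring
    rw [e1, e2, div_pow, one_pow, sub_le_iff_le_add, div_le_iff₀ (by apply pow_pos; linarith)]
    have b : 1 + ((8 : ℕ) : ℝ) * (-y) ≤ (1 + -y) ^ 8 := one_add_mul_le_pow (by linarith) 8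
    have b' : 1 - 8 * y ≤ (1 - y) ^ 8 := by
      push_cast at b; have : (1 + -y) = 1 - y := by ring
      rw [this] at b; linarith
    nlinarith
  rw [div_le_iff₀ (by linarith)]
  calc hh p ≤ 10 / p := key
    _ = 10 * (1 / (p : ℝ) ^ 2) * p := by field_simp

lemma inv_dl_pow (y : ℕ) : ∏ p ∈ RR y, (1 + hh p) = 1 / (dl y) ^ 8 := by
  unfold dl
  rw [← prod_pow, one_div, ← prod_inv_distrib]
  refine prod_congr rfl fun p hp => ?_
  have : (5 : ℝ) ≤ p := by exact_mod_cast RR_ge hp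
  have h1 : (p : ℝ) - 1 ≠ 0 := by linarith
  unfold hh
  have e : 1 - 1 / (p : ℝ) = (p - 1) / p := by field_simp
  rw [e, ← inv_pow, inv_div]; ring

/-- big primes up to a bound -/
def PP (M : ℕ) : Finset ℕ := (range (M + 41)).filter (fun p => p.Prime ∧ 5 ≤ p)

lemma K_bound (M : ℕ) : ∏ p ∈ PP M, (1 + hh p / p) ≤ 55 / 12 := by
  rw [← prod_filter_mul_prod_filter_not (PP M) (fun p => p < 41)]
  have h1 : (PP M).filter (fun p => p < 41) = {5, 7, 11, 13, 17, 19, 23, 29, 31, 37} := by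
    have : (PP M).filter (fun p => p < 41) = (range 41).filter (fun p => p.Prime ∧ 5 ≤ p) := by
      ext p; simp only [PP, mem_filter, mem_range]
      constructor
      · rintro ⟨⟨_, h⟩, h'⟩; exact ⟨h', h⟩
      · rintro ⟨h', h⟩; exact ⟨⟨by omega, h⟩, h'⟩
    rw [this]; decide +kernel
  have h2 : ∏ p ∈ (PP M).filter (fun p => p < 41), (1 + hh p / p) ≤ 3.5415 := by
    rw [h1]
    simp [hh]
    norm_num
  have h3 : ∏ p ∈ (PP M).filter (fun p => ¬ p < 41), (1 + hh p / p) ≤ 1.285 := by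
    calc ∏ p ∈ (PP M).filter (fun p => ¬ p < 41), (1 + hh p / p)
        ≤ ∏ p ∈ (PP M).filter (fun p => ¬ p < 41), Real.exp (10 * (1 / (p : ℝ) ^ 2)) := by
          refine prod_le_prod (fun p hp => ?_) (fun p hp => ?_)
          · simp only [PP, mem_filter] at hp
            have := hh_nonneg hp.1.2.2
            positivity
          · simp only [PP, mem_filter] at hp
            have := hh_le (p := p) (by omega)
            have := Real.add_one_le_exp (10 * (1 / (p : ℝ) ^ 2))
            linarith
      _ = Real.exp (∑ p ∈ (PP M).filter (fun p => ¬ p < 41), 10 * (1 / (p : ℝ) ^ 2)) := by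
          rw [Real.exp_sum]
      _ ≤ Real.exp (1 / 4) := by
          rw [Real.exp_le_exp]
          rw [← mul_sum]
          have a1 : ∑ p ∈ (PP M).filter (fun p => ¬ p < 41), (1 / (p : ℝ) ^ 2)
              ≤ ∑ p ∈ Ioc 40 (M + 41), ((p : ℝ) ^ 2)⁻¹ := by
            simp only [one_div]
            apply sum_le_sum_of_subset_of_nonneg
            · intro p hp
              simp only [PP, mem_filter, mem_range] at hp
              rw [mem_Ioc]; omega
            · intros; positivity
          have a2 := sum_Ioc_inv_sq_le_sub (α := ℝ) (k := 40) (n := M + 41) (by norm_num) (by omega)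
          have a3 : (0 : ℝ) ≤ ((M + 41 : ℕ) : ℝ)⁻¹ := by positivity
          have a4 : ((40 : ℕ) : ℝ)⁻¹ = 1 / 40 := by norm_num
          rw [a4] at a2
          linarith
      _ ≤ 1.285 := by
          have e4 : Real.exp (1 / 4) ^ 4 = Real.exp 1 := by
            rw [← Real.exp_nat_mul]; norm_num
          have e1 := Real.exp_one_lt_d9
          by_contra hcon
          push Not at hcon
          have : (1.285 : ℝ) ^ 4 < Real.exp (1 / 4) ^ 4 := pow_lt_pow_left₀ hcon (by norm_num) (by norm_num)
          rw [e4] at this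
          norm_num at this e1
          linarith
  calc _ ≤ (3.5415 : ℝ) * 1.285 := by
        apply mul_le_mul h2 h3
        · refine prod_nonneg fun p hp => ?_
          simp only [PP, mem_filter] at hp
          have := hh_nonneg hp.1.2.2
          positivity
        · norm_num
    _ ≤ 55 / 12 := by norm_num

lemma moment (M : ℕ) : ∑ y ∈ Ioc 0 M, 1 / (dl y) ^ 8 ≤ (M : ℝ) * (55 / 12) := by
  classical
  have e : ∀ y ∈ Ioc 0 M, 1 / (dl y) ^ 8 =
      ∑ T ∈ (PP M).powerset, if (∀ p ∈ T, p ∣ y) then ∏ p ∈ T, hh p else 0 := by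
    intro y hy
    rw [mem_Ioc] at hy
    rw [← inv_dl_pow, prod_one_add, ← sum_filter]
    refine sum_congr ?_ fun _ _ => rfl
    ext T
    simp only [mem_powerset, mem_filter, subset_iff]
    constructor
    · intro h
      refine ⟨fun p hp => ?_, fun p hp => ((mem_RR (by omega)).1 (h hp)).2.1⟩
      have h' := (mem_RR (by omega)).1 (h hp)
      have := Nat.le_of_dvd (by omega) h'.2.1
      simp only [PP, mem_filter, mem_range]
      exact ⟨by omega, h'.1, h'.2.2⟩
    · rintro ⟨h1, h2⟩ p hp
      have h' := h1 hp
      simp only [PP, mem_filter, mem_range] at h'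
      exact (mem_RR (by omega)).2 ⟨h'.2.1, h2 p hp, h'.2.2⟩
  rw [sum_congr rfl e, sum_comm]
  calc ∑ T ∈ (PP M).powerset, ∑ y ∈ Ioc 0 M, (if (∀ p ∈ T, p ∣ y) then ∏ p ∈ T, hh p else 0)
      ≤ ∑ T ∈ (PP M).powerset, M * ∏ p ∈ T, (hh p / p) := by
        refine sum_le_sum fun T hT => ?_
        rw [mem_powerset] at hT
        have hT' : ∀ p ∈ T, p.Prime ∧ 5 ≤ p := fun p hp => by
          have := hT hp
          simp only [PP, mem_filter] at this
          exact this.2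
        rw [← sum_filter, sum_const, nsmul_eq_mul, prod_div_distrib]
        have h0 : 0 ≤ ∏ p ∈ T, hh p := prod_nonneg fun p hp => hh_nonneg (hT' p hp).2
        have hc : ((#{y ∈ Ioc 0 M | ∀ p ∈ T, p ∣ y} : ℕ) : ℝ) ≤ M / ∏ p ∈ T, (p : ℝ) := by
          have : #{y ∈ Ioc 0 M | ∀ p ∈ T, p ∣ y} ≤ M / ∏ p ∈ T, p := by
            rw [← Nat.Ioc_filter_dvd_card_eq_div]
            refine card_le_card fun y hy => ?_
            simp only [mem_filter] at hy ⊢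
            exact ⟨hy.1, prod_primes_dvd y (fun p hp => (hT' p hp).1.prime) hy.2⟩
          calc ((#{y ∈ Ioc 0 M | ∀ p ∈ T, p ∣ y} : ℕ) : ℝ) ≤ ((M / ∏ p ∈ T, p : ℕ) : ℝ) := by
                exact_mod_cast this
            _ ≤ (M : ℝ) / ((∏ p ∈ T, p : ℕ) : ℝ) := Nat.cast_div_le
            _ = _ := by push_cast; rfl
        calc _ ≤ (M / ∏ p ∈ T, (p : ℝ)) * ∏ p ∈ T, hh p := mul_le_mul_of_nonneg_right hc h0
          _ = _ := by ring
    _ = M * ∏ p ∈ PP M, (1 + hh p / p) := by rw [← mul_sum, prod_one_add]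
    _ ≤ M * (55 / 12) := mul_le_mul_of_nonneg_left (K_bound M) (by positivity)

lemma tail (M : ℕ) (Y : Finset ℕ) (hY : Y ⊆ Ioc 0 M) (α : ℝ) (hα : 0 < α)
    (h : ∀ y ∈ Y, dl y ≤ α) : (#Y : ℝ) ≤ M * (55 / 12) * α ^ 8 := by
  have h1 : (#Y : ℝ) * (1 / α ^ 8) ≤ ∑ y ∈ Y, 1 / (dl y) ^ 8 := by
    rw [← nsmul_eq_mul]
    refine card_nsmul_le_sum _ _ _ fun y hy => ?_
    have := dl_pos y
    exact one_div_le_one_div_of_le (by positivity) (pow_le_pow_left₀ this.le (h y hy) 8)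
  have h2 : ∑ y ∈ Y, 1 / (dl y) ^ 8 ≤ ∑ y ∈ Ioc 0 M, 1 / (dl y) ^ 8 :=
    sum_le_sum_of_subset_of_nonneg hY fun y _ _ => by have := dl_pos y; positivity
  have h3 := moment M
  have h4 : (#Y : ℝ) * (1 / α ^ 8) ≤ M * (55 / 12) := by linarith
  rw [mul_one_div, div_le_iff₀ (by positivity)] at h4
  exact h4

lemma prod_le_sub (S T : Finset ℕ) (f : ℕ → ℝ) (hST : S ⊆ T) (h : ∀ p ∈ T, 1 ≤ f p) :
    ∏ p ∈ S, f p ≤ ∏ p ∈ T, f p := by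
  classical
  rw [← prod_sdiff hST]
  refine le_mul_of_one_le_left (prod_nonneg fun p hp => by linarith [h p (hST hp)]) ?_
  calc (1 : ℝ) = ∏ _p ∈ T \ S, (1 : ℝ) := by simp
    _ ≤ _ := prod_le_prod (fun _ _ => zero_le_one) fun p hp => h p (mem_sdiff.1 hp).1

lemma err (x : ℕ) (hx : x ≠ 0) : (ee x / dl x) ^ 4 ≤ 150 * x := by
  classical
  let f : ℕ → ℝ := fun p => (2 * p / ((p : ℝ) - 1)) ^ 4 / p
  let S0 : Finset ℕ := {5, 7, 11, 13, 17, 19}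
  have h1 : (ee x / dl x) ^ 4 = (∏ p ∈ RR x, f p) * ∏ p ∈ RR x, (p : ℝ) := by
    unfold ee dl
    rw [← prod_const, ← prod_div_distrib, ← prod_pow, ← prod_mul_distrib]
    refine prod_congr rfl fun p hp => ?_
    have : (5 : ℝ) ≤ p := by exact_mod_cast RR_ge hp
    have h1 : (p : ℝ) - 1 ≠ 0 := by linarith
    simp only [f]
    have e : 1 - 1 / (p : ℝ) = (p - 1) / p := by field_simp
    rw [e]; field_simp
  have h2 : ∏ p ∈ RR x, (p : ℝ) ≤ x := by
    have : ∏ p ∈ RR x, p ∣ x :=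
      prod_primes_dvd x (fun p hp => (RR_prime hp).prime) fun p hp => ((mem_RR hx).1 hp).2.1
    have := Nat.le_of_dvd (by omega) this
    rw [← Nat.cast_prod]
    exact_mod_cast this
  have hf0 : ∀ p ∈ RR x, 0 ≤ f p := fun p hp => by
    have : (5 : ℝ) ≤ p := by exact_mod_cast RR_ge hp
    simp only [f]; positivity
  have h3 : ∏ p ∈ RR x, f p ≤ 150 := by
    calc ∏ p ∈ RR x, f p ≤ ∏ p ∈ RR x, (if p ∈ S0 then f p else 1) := by
          refine prod_le_prod hf0 fun p hp => ?_
          split_ifs with hS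
          · exact le_rfl
          · have hp23 : 23 ≤ p := by
              by_contra hlt
              have h5 := RR_ge hp
              have hpr := RR_prime hp
              interval_cases p <;> first | (exact hS (by decide)) | (revert hpr; decide)
            have : (23 : ℝ) ≤ p := by exact_mod_cast hp23
            simp only [f]
            rw [div_le_one (by linarith)]
            have : 2 * (p : ℝ) / (p - 1) ≤ 23 / 11 := by
              rw [div_le_div_iff₀ (by linarith) (by norm_num)]; linarith
            calc (2 * (p : ℝ) / (p - 1)) ^ 4 ≤ (23 / 11) ^ 4 := by
                  apply pow_le_pow_left₀ _ this
                  apply div_nonneg <;> linarith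
              _ ≤ 23 := by norm_num
              _ ≤ p := by linarith
      _ = ∏ p ∈ RR x ∩ S0, f p := by rw [prod_ite_mem]
      _ ≤ ∏ p ∈ S0, f p := by
          refine prod_le_sub _ _ _ inter_subset_right fun p hp => ?_
          simp only [S0, mem_insert, mem_singleton] at hp
          rcases hp with h | h | h | h | h | h <;> subst h <;> simp only [f] <;> norm_num
      _ ≤ 150 := by
          simp only [S0, f]
          simp
          norm_num
  rw [h1]
  exact mul_le_mul h3 h2 (prod_nonneg fun p _ => by positivity) (by norm_num)

lemma cop_left (i y : ℕ) (_hy : y ≠ 0) :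
    Nat.Coprime (1 + 6 * i) y ↔ ∀ p ∈ RR (1 + 6 * i), ¬ p ∣ y := by
  constructor
  · intro h p hp hpy
    have h' := (mem_RR (by omega)).1 hp
    exact Nat.Prime.not_coprime_iff_dvd.2 ⟨p, h'.1, h'.2.1, hpy⟩ h
  · intro h
    by_contra hc
    obtain ⟨p, hp, h1, h2⟩ := Nat.Prime.not_coprime_iff_dvd.1 hc
    refine h p ((mem_RR (by omega)).2 ⟨hp, h1, ?_⟩) h2
    by_contra h5
    have := hp.two_le
    interval_cases p
    · omega
    · omega
    · revert hp; decide

lemma cop_right (i y : ℕ) (hy : y ≠ 0) :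
    Nat.Coprime (1 + 6 * i) y ↔ ∀ p ∈ RR y, ¬ p ∣ 1 + 6 * i := by
  constructor
  · intro h p hp hpy
    have h' := (mem_RR hy).1 hp
    exact Nat.Prime.not_coprime_iff_dvd.2 ⟨p, h'.1, hpy, h'.2.1⟩ h
  · intro h
    by_contra hc
    obtain ⟨p, hp, h1, h2⟩ := Nat.Prime.not_coprime_iff_dvd.1 hc
    refine h p ((mem_RR hy).2 ⟨hp, h2, ?_⟩) h1
    by_contra h5
    have := hp.two_le
    interval_cases p
    · omega
    · omega
    · revert hp; decide

lemma RR_not_dvd6 {x p : ℕ} (h : p ∈ RR x) : ¬ p ∣ 6 := by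
  intro hd
  have h5 := RR_ge h
  have hp := RR_prime h
  have := Nat.le_of_dvd (by norm_num) hd
  interval_cases p
  · revert hd; decide
  · revert hp; decide

lemma RR_not_dvd2 {x p : ℕ} (h : p ∈ RR x) : ¬ p ∣ 2 := by
  intro hd
  have h5 := RR_ge h
  have := Nat.le_of_dvd (by norm_num) hd
  omega

lemma sieve_lower (x a D m : ℕ) (hD : ∀ p ∈ RR x, ¬ p ∣ D) :
    (m : ℝ) * dl x - ee x ≤ (#{i ∈ range m | ∀ p ∈ RR x, ¬ p ∣ a + D * i} : ℕ) := by
  have := legendre (RR x) (fun p hp => RR_prime hp) a D m hD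
  rw [abs_le] at this
  unfold dl ee
  linarith [this.1]

lemma hallM (n m M : ℕ) (Y : Finset ℕ) (hn : 0 < n) (hm : 0 < m) (hY : #Y = n * m)
    (hYM : Y ⊆ Ioc 0 M) (hM : M ≤ 6 * (n * m))
    (F2 : ∀ c, (#Y : ℝ) * dl c - 2 * ee c ≤ (#{y ∈ Y | ∀ p ∈ RR c, ¬ p ∣ y} : ℕ))
    (hb1 : ∀ i < n, 9 * ee (1 + 6 * i) ≤ n * dl (1 + 6 * i))
    (hb2 : ∀ y ∈ Y, 9 * ee y ≤ n * dl y) :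
    ∃ w : Fin n × Fin m → ℕ, Function.Injective w ∧ (∀ a, w a ∈ Y) ∧
      ∀ a, Nat.Coprime (1 + 6 * a.1.val) (w a) := by
  let t : Fin n × Fin m → Finset ℕ := fun a => {y ∈ Y | Nat.Coprime (1 + 6 * a.1.val) y}
  suffices h : ∀ S : Finset (Fin n × Fin m), #S ≤ #(S.biUnion t) by
    obtain ⟨f, hf1, hf2⟩ := (Finset.all_card_le_biUnion_card_iff_exists_injective t).1 h
    exact ⟨f, hf1, fun a => (mem_filter.1 (hf2 a)).1, fun a => (mem_filter.1 (hf2 a)).2⟩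
  intro S
  by_contra hcon
  push Not at hcon
  have hYpos : ∀ y ∈ Y, y ≠ 0 := fun y hy => by
    have := mem_Ioc.1 (hYM hy); omega
  set S1 : Finset ℕ := S.image (fun a => a.1.val) with hS1
  set Nb := S.biUnion t with hNb
  have hS1n : S1 ⊆ range n := by
    intro i hi
    rw [hS1, mem_image] at hi
    obtain ⟨a, _, rfl⟩ := hi
    exact mem_range.2 a.1.2
  have hSm : #S ≤ #S1 * m := by
    have : #S ≤ #(S1 ×ˢ range m) := by
      apply card_le_card_of_injOn (fun a => (a.1.val, a.2.val))
      · intro a ha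
        have ha' : a ∈ S := ha
        simp only [coe_product, Set.mem_prod, mem_coe, mem_range]
        exact ⟨mem_image_of_mem _ ha', a.2.2⟩
      · intro a _ b _ hab
        simp only [Prod.mk.injEq] at hab
        exact Prod.ext (Fin.ext hab.1) (Fin.ext hab.2)
    rwa [card_product, card_range] at this
  have hNY : Nb ⊆ Y := by
    intro y hy
    rw [hNb, mem_biUnion] at hy
    obtain ⟨a, _, h⟩ := hy
    exact (mem_filter.1 h).1
  have hcon' : (#Nb : ℝ) < #S1 * m := by exact_mod_cast lt_of_lt_of_le hcon hSm
  have hs_n : #S1 ≤ n := by simpa using card_le_card hS1n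
  have hTc : (#(Y \ Nb) : ℝ) = n * m - #Nb := by
    have := card_sdiff_add_card_eq_card hNY
    rw [hY] at this
    have h2 : (#(Y \ Nb) : ℝ) + #Nb = n * m := by exact_mod_cast this
    linarith
  have hn' : (0 : ℝ) < n := by exact_mod_cast hn
  have hm' : (1 : ℝ) ≤ m := by exact_mod_cast hm
  have hsn' : (#S1 : ℝ) ≤ n := by exact_mod_cast hs_n
  have hM' : (M : ℝ) ≤ 6 * (n * m) := by exact_mod_cast hM
  have hnm : (n : ℝ) ≤ n * m := by nlinarith
  -- the centre side
  have hS1ne : S1.Nonempty := by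
    by_contra h
    rw [not_nonempty_iff_eq_empty] at h
    rw [h] at hcon'
    simp at hcon'
    have : (0 : ℝ) ≤ #Nb := by positivity
    linarith
  obtain ⟨c0, hc0, hcmax⟩ := exists_max_image S1 (fun i => dl (1 + 6 * i)) hS1ne
  have hd0 := dl_pos (1 + 6 * c0)
  set d := dl (1 + 6 * c0) with hd
  have hs_tail : (#S1 : ℝ) ≤ 55 / 2 * n * d ^ 8 := by
    have h1 := tail (6 * n) (S1.image (fun i => 1 + 6 * i)) (by
      intro y hy
      rw [mem_image] at hy
      obtain ⟨i, hi, rfl⟩ := hy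
      have := mem_range.1 (hS1n hi)
      rw [mem_Ioc]; omega) d hd0 (by
      intro y hy
      rw [mem_image] at hy
      obtain ⟨i, hi, rfl⟩ := hy
      exact hcmax i hi)
    rw [card_image_of_injective _ (by intro i j h; simp only at h; omega)] at h1
    push_cast at h1
    linarith
  have hN_low : 7 / 9 * (n * m) * d ≤ #Nb := by
    have h2 : (#Y : ℝ) * dl (1 + 6 * c0) - 2 * ee (1 + 6 * c0) ≤ #Nb := by
      refine (F2 (1 + 6 * c0)).trans (Nat.cast_le.2 (card_le_card fun y hy => ?_))
      rw [mem_filter] at hy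
      rw [hS1, mem_image] at hc0
      obtain ⟨a, ha, hac⟩ := hc0
      rw [hNb, mem_biUnion]
      refine ⟨a, ha, mem_filter.2 ⟨hy.1, ?_⟩⟩
      rw [hac, cop_left _ _ (hYpos y hy.1)]
      exact hy.2
    have h3 := hb1 c0 (mem_range.1 (hS1n hc0))
    rw [← hd] at h2 h3
    rw [hY] at h2
    push_cast at h2
    have h4 : n * d ≤ n * m * d := mul_le_mul_of_nonneg_right hnm hd0.le
    linarith
  have key : ∀ x y : ℝ, 0 < x → x ≤ 3 / 5 → 0 < y → 55 / 2 * y * x ^ 8 < 7 / 9 * y * x := by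
    intro x y hx hx3 hy
    have : x ^ 7 ≤ (3 / 5) ^ 7 := pow_le_pow_left₀ hx.le hx3 7
    have h7 : 55 / 2 * x ^ 7 < 7 / 9 := by norm_num at this ⊢; linarith
    have hxy : 0 < y * x := by positivity
    calc 55 / 2 * y * x ^ 8 = (55 / 2 * x ^ 7) * (y * x) := by ring
      _ < 7 / 9 * (y * x) := mul_lt_mul_of_pos_right h7 hxy
      _ = _ := by ring
  have hd35 : 3 / 5 < d := by
    by_contra hle
    push Not at hle
    have h1 := key d (n * m) hd0 hle (by positivity)
    have h2 : (#S1 : ℝ) * m ≤ 55 / 2 * n * d ^ 8 * m := mul_le_mul_of_nonneg_right hs_tail (by linarith)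
    nlinarith
  -- the other side
  have hTne : (Y \ Nb).Nonempty := by
    rw [← card_pos]
    have : (0 : ℝ) < #(Y \ Nb) := by rw [hTc]; nlinarith
    exact_mod_cast this
  obtain ⟨t0, ht0, htmax⟩ := exists_max_image (Y \ Nb) dl hTne
  have hf0 := dl_pos t0
  set f := dl t0 with hf
  have ht0Y : t0 ∈ Y := (mem_sdiff.1 ht0).1
  have hT_tail : (#(Y \ Nb) : ℝ) ≤ 55 / 2 * (n * m) * f ^ 8 := by
    have h1 := tail M (Y \ Nb) (sdiff_subset.trans hYM) f hf0 htmax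
    have : (0 : ℝ) ≤ f ^ 8 := by positivity
    nlinarith
  have hS_low : 8 / 9 * n * f ≤ n - #S1 := by
    have hdis : Disjoint {i ∈ range n | ∀ p ∈ RR t0, ¬ p ∣ 1 + 6 * i} S1 := by
      rw [disjoint_left]
      intro i hi hiS
      rw [mem_filter] at hi
      rw [hS1, mem_image] at hiS
      obtain ⟨a, ha, hac⟩ := hiS
      refine (mem_sdiff.1 ht0).2 ?_
      rw [hNb, mem_biUnion]
      refine ⟨a, ha, mem_filter.2 ⟨ht0Y, ?_⟩⟩
      rw [hac, cop_right _ _ (hYpos _ ht0Y)]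
      exact hi.2
    have h1 : #{i ∈ range n | ∀ p ∈ RR t0, ¬ p ∣ 1 + 6 * i} + #S1 ≤ n := by
      rw [← card_union_of_disjoint hdis]
      have : _ ∪ S1 ⊆ range n := union_subset (filter_subset (fun i => ∀ p ∈ RR t0, ¬ p ∣ 1 + 6 * i) _) hS1n
      simpa using card_le_card this
    have h1' : ((#{i ∈ range n | ∀ p ∈ RR t0, ¬ p ∣ 1 + 6 * i} : ℕ) : ℝ) + #S1 ≤ n := by
      exact_mod_cast h1
    have h2 := sieve_lower t0 1 6 n (fun p hp => RR_not_dvd6 hp)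
    have h3 := hb2 t0 ht0Y
    rw [← hf] at h2 h3
    linarith
  have hf35 : 3 / 5 < f := by
    by_contra hle
    push Not at hle
    have h1 := key f (n * m) hf0 hle (by positivity)
    have h2 : 8 / 9 * n * f * m ≤ (n - #S1) * m := mul_le_mul_of_nonneg_right hS_low (by linarith)
    have h3 : 0 ≤ n * m * f := by positivity
    nlinarith
  have g1 : (#S1 : ℝ) ≤ 7 / 15 * n := by nlinarith
  have g2 : (#S1 : ℝ) * m ≤ 7 / 15 * n * m := mul_le_mul_of_nonneg_right g1 (by linarith)
  have g3 : 7 / 9 * (n * m) * (3 / 5) ≤ 7 / 9 * (n * m) * d :=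
    mul_le_mul_of_nonneg_left hd35.le (by positivity)
  nlinarith

lemma card_filter_img (g : ℕ → ℕ) (hg : Function.Injective g) (m : ℕ) (P : ℕ → Prop)
    [DecidablePred P] : #{y ∈ (range m).image g | P y} = #{i ∈ range m | P (g i)} := by
  rw [filter_image, card_image_of_injective _ hg]

lemma ee_pos (x : ℕ) : 0 < ee x := by unfold ee; positivity

lemma R3 (n k : ℕ) (hn : 1 < n) (hk : 3 ≤ k) (hbig : 10 ^ 6 * (2 * (n * k)) ≤ n ^ 4) :
    IsOddPrime (firecracker n k) := by
  have hb : ∀ x, x ≠ 0 → x < 2 * (n * k) → 9 * ee x ≤ n * dl x := by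
    intro x hx hx2
    have h1 := err x hx
    have hd := dl_pos x
    have he := ee_pos x
    have hx2' : (x : ℝ) ≤ 2 * (n * k) := by exact_mod_cast hx2.le
    have hbig' : (10 : ℝ) ^ 6 * (2 * (n * k)) ≤ (n : ℝ) ^ 4 := by exact_mod_cast hbig
    have h2 : (9 * (ee x / dl x)) ^ 4 ≤ (n : ℝ) ^ 4 := by
      rw [mul_pow]
      have : (0 : ℝ) ≤ x := by positivity
      norm_num at hbig' ⊢
      linarith
    have h3 : 9 * (ee x / dl x) ≤ n := le_of_pow_le_pow_left₀ (by norm_num) (by positivity) h2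
    rw [← mul_div_assoc, div_le_iff₀ hd] at h3
    exact h3
  have hnk : 3 * n ≤ n * k := by nlinarith
  have i5 : Function.Injective (fun i : ℕ => 5 + 6 * i) := fun a b h => by simp only at h; omega
  have i3 : Function.Injective (fun i : ℕ => 3 + 6 * i) := fun a b h => by simp only at h; omega
  have i2 : Function.Injective (fun i : ℕ => (6 * n + 1) + 2 * i) :=
    fun a b h => by simp only at h; omega
  set V := (range n).image (fun i => 5 + 6 * i) with hV
  set W1 := (range n).image (fun i => 3 + 6 * i) with hW1
  set W2 := (range (n * k - 3 * n)).image (fun i => (6 * n + 1) + 2 * i) with hW2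
  have mV : ∀ y ∈ V, ∃ i < n, y = 5 + 6 * i := fun y hy => by
    rw [hV, mem_image] at hy
    obtain ⟨i, hi, rfl⟩ := hy
    exact ⟨i, mem_range.1 hi, rfl⟩
  have mW : ∀ y ∈ W1 ∪ W2, (∃ i < n, y = 3 + 6 * i) ∨ (∃ i < n * k - 3 * n, y = 6 * n + 1 + 2 * i) :=
    fun y hy => by
    rw [mem_union] at hy
    rcases hy with hy | hy
    · rw [hW1, mem_image] at hy
      obtain ⟨i, hi, rfl⟩ := hy
      exact Or.inl ⟨i, mem_range.1 hi, rfl⟩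
    · rw [hW2, mem_image] at hy
      obtain ⟨i, hi, rfl⟩ := hy
      exact Or.inr ⟨i, mem_range.1 hi, rfl⟩
  have hdisj : Disjoint W1 W2 := by
    rw [disjoint_left]
    intro y h1 h2
    rw [hW1, mem_image] at h1
    rw [hW2, mem_image] at h2
    obtain ⟨i, hi, rfl⟩ := h1
    obtain ⟨j, hj, h⟩ := h2
    rw [mem_range] at hi
    omega
  have cV : #V = n * 1 := by rw [hV, card_image_of_injective _ i5, card_range, mul_one]
  have cW : #(W1 ∪ W2) = n + (n * k - 3 * n) := by
    rw [card_union_of_disjoint hdisj, hW1, hW2, card_image_of_injective _ i3,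
      card_image_of_injective _ i2, card_range, card_range]
  have hn2 : n * (k - 2) = n * k - 2 * n := by rw [Nat.mul_sub, mul_comm n 2]
  have cW' : #(W1 ∪ W2) = n * (k - 2) := by rw [cW, hn2]; omega
  have hb1 : ∀ i < n, 9 * ee (1 + 6 * i) ≤ n * dl (1 + 6 * i) :=
    fun i hi => hb _ (by omega) (by omega)
  obtain ⟨wV, wVi, wVm, wVc⟩ := hallM n 1 (6 * n) V (by omega) (by norm_num) cV
    (by intro y hy
        obtain ⟨i, hi, rfl⟩ := mV y hy
        rw [mem_Ioc]; omega) (by omega)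
    (by intro c
        rw [hV, card_filter_img _ i5, ← hV, cV]
        have := sieve_lower c 5 6 n (fun p hp => RR_not_dvd6 hp)
        have := ee_pos c
        push_cast
        linarith) hb1
    (by intro y hy
        obtain ⟨i, hi, rfl⟩ := mV y hy
        exact hb _ (by omega) (by omega))
  obtain ⟨wW, wWi, wWm, wWc⟩ := hallM n (k - 2) (2 * (n * k)) (W1 ∪ W2) (by omega) (by omega) cW'
    (by intro y hy
        rw [mem_Ioc]
        rcases mW y hy with ⟨i, hi, rfl⟩ | ⟨i, hi, rfl⟩ <;> omega) (by omega)
    (by intro c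
        rw [filter_union, card_union_of_disjoint (disjoint_filter_filter hdisj), cW,
          hW1, hW2, card_filter_img _ i3, card_filter_img _ i2]
        have h1 := sieve_lower c 3 6 n (fun p hp => RR_not_dvd6 hp)
        have h2 := sieve_lower c (6 * n + 1) 2 (n * k - 3 * n) (fun p hp => RR_not_dvd2 hp)
        rw [Nat.cast_add, Nat.cast_add]
        linarith) hb1
    (by intro y hy
        rcases mW y hy with ⟨i, hi, rfl⟩ | ⟨i, hi, rfl⟩ <;> exact hb _ (by omega) (by omega))
  have ht : ∀ i : Fin n, ∃ j : Fin n, wV (i, 0) = 5 + 6 * j.val := fun i => by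
    obtain ⟨j, hj, h⟩ := mV _ (wVm (i, 0))
    exact ⟨⟨j, hj⟩, h⟩
  choose τ hτ using ht
  have τi : Function.Injective τ := by
    intro a b h
    have : wV (a, 0) = wV (b, 0) := by rw [hτ, hτ, h]
    exact (Prod.mk.inj (wVi this)).1
  let τe := Equiv.ofBijective τ (Finite.injective_iff_bijective.1 τi)
  have hρ : ∀ j, τ (τe.symm j) = j := fun j => τe.apply_symm_apply j
  refine mk n k hk (fun j => 5 + 6 * j.val) (fun j => 1 + 6 * (τe.symm j).val)
    (fun a => wW (τe.symm a.1, a.2)) ?_ ?_ ?_ ?_ ?_ ?_ ?_ ?_ ?_ ?_ ?_ ?_ ?_ ?_ ?_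
  · intro a b h; apply Fin.ext; simp only at h; omega
  · intro a b h
    apply τe.symm.injective
    apply Fin.ext; simp only at h; omega
  · intro a b h
    have := wWi h
    simp only [Prod.mk.injEq, EmbeddingLike.apply_eq_iff_eq] at this
    exact Prod.ext this.1 this.2
  · intro i j h; omega
  · intro i a h
    rcases mW _ (wWm (τe.symm a.1, a.2)) with ⟨j, hj, h'⟩ | ⟨j, hj, h'⟩ <;> omega
  · intro i a h
    have := (τe.symm i).2
    rcases mW _ (wWm (τe.symm a.1, a.2)) with ⟨j, hj, h'⟩ | ⟨j, hj, h'⟩ <;> omega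
  · intro i; rw [Nat.odd_iff]; omega
  · intro i; rw [Nat.odd_iff]; omega
  · intro a
    rw [Nat.odd_iff]
    rcases mW _ (wWm (τe.symm a.1, a.2)) with ⟨j, hj, h'⟩ | ⟨j, hj, h'⟩ <;> omega
  · intro i; omega
  · intro i; have := (τe.symm i).2; omega
  · intro a
    rcases mW _ (wWm (τe.symm a.1, a.2)) with ⟨j, hj, h'⟩ | ⟨j, hj, h'⟩ <;> omega
  · intro i j hij
    rw [show 5 + 6 * j.val = (5 + 6 * i.val) + 6 by omega, Nat.coprime_self_add_right]
    simp
    decide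
  · intro i
    have := wVc (τe.symm i, 0)
    rw [hτ, hρ] at this
    exact this.symm
  · intro i j
    exact wWc (τe.symm i, j)

lemma R2 (n k : ℕ) (hn : 1 < n) (hk : 14 ≤ k) (Q : Finset ℕ) (hQ : n ≤ #Q)
    (hq : ∀ q ∈ Q, q.Prime ∧ 2 * (n * k) < 3 * q ∧ q < 2 * (n * k)) :
    IsOddPrime (firecracker n k) := by
  obtain ⟨Q', hQ', hc⟩ := exists_subset_card_eq hQ
  have hnk : 14 * n ≤ n * k := by nlinarith
  have hq' : ∀ q ∈ Q', q.Prime ∧ 2 * (n * k) < 3 * q ∧ q < 2 * (n * k) := fun q h => hq q (hQ' h)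
  have hodd : ∀ q ∈ Q', Odd q := fun q h => by
    obtain ⟨h1, h2, _⟩ := hq' q h
    refine h1.odd_of_ne_two (by omega)
  have hcop : ∀ q ∈ Q', ∀ y, Odd y → y < 2 * (n * k) → y ≠ q → Nat.Coprime q y := by
    intro q h y hy hy2 hne
    obtain ⟨h1, h2, _⟩ := hq' q h
    rw [Nat.Prime.coprime_iff_not_dvd h1]
    rintro ⟨c, rfl⟩
    have hc3 : c < 3 := by
      by_contra h3
      push Not at h3
      have : q * 3 ≤ q * c := Nat.mul_le_mul_left q h3
      omega
    interval_cases c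
    · simp at hy
    · simp at hne
    · rw [Nat.odd_iff] at hy; omega
  let A : Finset ℕ := (range (n * k)).image (fun i => 2 * i + 1)
  let V : Finset ℕ := (range n).image (fun i => 2 * i + 1)
  have ji : Function.Injective (fun i : ℕ => 2 * i + 1) := fun a b h => by simp only at h; omega
  let Z := A \ (Q' ∪ V)
  have hZ : Fintype.card (Fin n × Fin (k - 2)) ≤ Fintype.card Z := by
    rw [Fintype.card_coe, Fintype.card_prod, Fintype.card_fin, Fintype.card_fin, Nat.mul_sub]
    have h1 : #A = n * k := by rw [card_image_of_injective _ ji, card_range]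
    have h2 : #V = n := by rw [card_image_of_injective _ ji, card_range]
    have h3 := card_union_le Q' V
    have h4 := le_card_sdiff (Q' ∪ V) A
    rw [hc, h2] at h3
    show _ ≤ #(A \ (Q' ∪ V))
    omega
  obtain ⟨w⟩ := Function.Embedding.nonempty_of_card_le hZ
  have wA : ∀ a, Odd (w a).val ∧ (w a).val < 2 * (n * k) := fun a => by
    have := (mem_sdiff.1 (w a).2).1
    rw [mem_image] at this
    obtain ⟨i, hi, h⟩ := this
    rw [mem_range] at hi
    rw [← h]
    exact ⟨⟨i, rfl⟩, by omega⟩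
  have wN : ∀ a, (w a).val ∉ Q' ∧ (w a).val ∉ V := fun a => by
    have := (mem_sdiff.1 (w a).2).2
    rw [mem_union] at this
    tauto
  let u : Fin n → ℕ := Q'.orderEmbOfFin hc
  have uQ : ∀ i, u i ∈ Q' := fun i => orderEmbOfFin_mem Q' hc i
  have vu : ∀ i j : Fin n, 2 * i.val + 1 ≠ u j := fun i j h => by
    obtain ⟨_, h2, _⟩ := hq' _ (uQ j)
    omega
  refine mk n k (by omega) (fun i => 2 * i.val + 1) u (fun a => (w a).val)
    ?_ ?_ ?_ ?_ ?_ ?_ ?_ ?_ ?_ ?_ ?_ ?_ ?_ ?_ ?_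
  · intro a b h; apply Fin.ext; simp only at h; omega
  · exact (Q'.orderEmbOfFin hc).injective
  · intro a b h; exact w.injective (Subtype.ext h)
  · exact vu
  · intro i a h
    refine (wN a).2 ?_
    rw [← h]
    exact mem_image_of_mem _ (mem_range.2 i.2)
  · intro i a h
    refine (wN a).1 ?_
    rw [← h]
    exact uQ i
  · intro i; exact ⟨i, rfl⟩
  · intro i; exact hodd _ (uQ i)
  · intro a; exact (wA a).1
  · intro i; omega
  · intro i; exact (hq' _ (uQ i)).2.2
  · intro a; exact (wA a).2
  · intro i j h
    rw [show 2 * j.val + 1 = (2 * i.val + 1) + 2 by omega, Nat.coprime_self_add_right]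
    simp
  · intro i
    exact (hcop _ (uQ i) _ ⟨i, rfl⟩ (by omega) (vu i i)).symm
  · intro i j
    exact hcop _ (uQ i) _ (wA _).1 (wA _).2 fun h => (wN (i, j)).1 (h ▸ uQ i)

lemma copr (x y M : ℕ) (h : Nat.Coprime x M) (h1 : x < y → (y - x) ∣ M)
    (h2 : y < x → (x - y) ∣ M) (hne : x ≠ y) : Nat.Coprime x y := by
  have gx := Nat.gcd_dvd_left x y
  have gy := Nat.gcd_dvd_right x y
  have gM : Nat.gcd x y ∣ M := by
    rcases lt_or_gt_of_ne hne with hl | hl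
    · exact (Nat.dvd_sub gy gx).trans (h1 hl)
    · exact (Nat.dvd_sub gx gy).trans (h2 hl)
  have := Nat.dvd_gcd gx gM
  rw [h] at this
  exact Nat.dvd_one.1 this

lemma five (b : ℕ) (hb : Odd b) : ∃ j < 5, Nat.Coprime (b + 2 * j) 210 := by
  have key : ∀ r < 210, r % 2 = 1 → ∃ j < 5, Nat.Coprime (r + 2 * j) 210 := by decide +kernel
  obtain ⟨j, hj, h⟩ := key (b % 210) (Nat.mod_lt _ (by norm_num)) (by
    rw [Nat.odd_iff] at hb; omega)
  refine ⟨j, hj, ?_⟩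
  rw [show b + 2 * j = (b % 210 + 2 * j) + 210 * (b / 210) by
    have := Nat.mod_add_div b 210; omega, Nat.coprime_add_mul_left_left]
  exact h

lemma two (b : ℕ) (hb : Odd b) : ∃ j < 2, Nat.Coprime (b + 2 * j) 6 := by
  have key : ∀ r < 6, r % 2 = 1 → ∃ j < 2, Nat.Coprime (r + 2 * j) 6 := by decide +kernel
  obtain ⟨j, hj, h⟩ := key (b % 6) (Nat.mod_lt _ (by norm_num)) (by
    rw [Nat.odd_iff] at hb; omega)
  refine ⟨j, hj, ?_⟩
  rw [show b + 2 * j = (b % 6 + 2 * j) + 6 * (b / 6) by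
    have := Nat.mod_add_div b 6; omega, Nat.coprime_add_mul_left_left]
  exact h

lemma ctr (k b : ℕ) (hb : Odd b) (hk : 3 ≤ k) (hk2 : k ≤ 13) :
    ∃ c, 1 ≤ c ∧ c < k ∧ ∀ t < k, t ≠ c → Nat.Coprime (b + 2 * c) (b + 2 * t) := by
  rcases Nat.lt_or_ge k 6 with h6 | h6
  · obtain ⟨j, hj, h⟩ := two (b + 2) (by rw [Nat.odd_iff] at *; omega)
    refine ⟨1 + j, by omega, by omega, fun t ht hne => ?_⟩
    have h' : Nat.Coprime (b + 2 * (1 + j)) (6 ^ 3) := by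
      apply Nat.Coprime.pow_right
      rwa [show b + 2 * (1 + j) = b + 2 + 2 * j by ring]
    have dv : ∀ d, 1 ≤ d → d ≤ 4 → 2 * d ∣ 6 ^ 3 := by
      intro d h1 h2; interval_cases d <;> decide
    refine copr _ _ _ h' (fun hl => ?_) (fun hl => ?_) (by omega)
    · rw [show b + 2 * t - (b + 2 * (1 + j)) = 2 * (t - (1 + j)) by omega]
      exact dv _ (by omega) (by omega)
    · rw [show b + 2 * (1 + j) - (b + 2 * t) = 2 * (1 + j - t) by omega]
      exact dv _ (by omega) (by omega)
  · obtain ⟨s, hs1, hs2, hs3, hs4⟩ : ∃ s, 1 ≤ s ∧ s + 4 < k ∧ s ≤ 6 ∧ k ≤ s + 10 := by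
      refine ⟨max 1 ((k - 5) / 2), ?_⟩
      omega
    obtain ⟨j, hj, h⟩ := five (b + 2 * s) (by rw [Nat.odd_iff] at *; omega)
    refine ⟨s + j, by omega, by omega, fun t ht hne => ?_⟩
    have h' : Nat.Coprime (b + 2 * (s + j)) (210 ^ 4) := by
      apply Nat.Coprime.pow_right
      rwa [show b + 2 * (s + j) = b + 2 * s + 2 * j by ring]
    have dv : ∀ d, 1 ≤ d → d ≤ 10 → 2 * d ∣ 210 ^ 4 := by
      intro d h1 h2; interval_cases d <;> norm_num
    refine copr _ _ _ h' (fun hl => ?_) (fun hl => ?_) (by omega)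
    · rw [show b + 2 * t - (b + 2 * (s + j)) = 2 * (t - (s + j)) by omega]
      exact dv _ (by omega) (by omega)
    · rw [show b + 2 * (s + j) - (b + 2 * t) = 2 * (s + j - t) by omega]
      exact dv _ (by omega) (by omega)

lemma pos_inj (k i t i' t' : ℕ) (ht : t < k) (ht' : t' < k) (h : k * i + t = k * i' + t') :
    i = i' ∧ t = t' := by
  have hk : 0 < k := by omega
  have h1 : (k * i + t) / k = i := by
    rw [Nat.mul_add_div hk, Nat.div_eq_of_lt ht, add_zero]
  have h2 : (k * i' + t') / k = i' := by
    rw [Nat.mul_add_div hk, Nat.div_eq_of_lt ht', add_zero]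
  have : i = i' := by rw [← h1, h, h2]
  subst this
  exact ⟨rfl, by omega⟩

lemma R1 (n k : ℕ) (hk : 3 ≤ k) (hk2 : k ≤ 13) : IsOddPrime (firecracker n k) := by
  have hc : ∀ i : Fin n, ∃ c, 1 ≤ c ∧ c < k ∧ ∀ t < k, t ≠ c →
      Nat.Coprime ((2 * (k * i.val) + 1) + 2 * c) ((2 * (k * i.val) + 1) + 2 * t) :=
    fun i => ctr k _ ⟨_, rfl⟩ hk hk2
  choose c c1 c2 c3 using hc
  let pos : Fin n × Fin (k - 2) → ℕ := fun a =>
    if a.2.val + 1 < c a.1 then a.2.val + 1 else a.2.val + 2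
  have p1 : ∀ a, 1 ≤ pos a := fun a => by simp only [pos]; split_ifs <;> omega
  have p2 : ∀ a, pos a < k := fun a => by
    have := a.2.2
    simp only [pos]; split_ifs <;> omega
  have p3 : ∀ a, pos a ≠ c a.1 := fun a => by simp only [pos]; split_ifs <;> omega
  have p4 : ∀ a b, a.1 = b.1 → pos a = pos b → a = b := fun a b h1 h2 => by
    refine Prod.ext h1 (Fin.ext ?_)
    simp only [pos, h1] at h2
    split_ifs at h2 <;> omega
  have bd : ∀ (i : Fin n) t, t < k → 2 * (k * i.val) + 1 + 2 * t < 2 * (n * k) := fun i t ht => by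
    have : k * (i.val + 1) ≤ k * n := Nat.mul_le_mul_left k i.2
    rw [mul_comm n k]
    rw [Nat.mul_add] at this
    omega
  have inj : ∀ (i j : Fin n) t s, t < k → s < k →
      2 * (k * i.val) + 1 + 2 * t = 2 * (k * j.val) + 1 + 2 * s → i = j ∧ t = s :=
    fun i j t s ht hs h => by
      have := pos_inj k i.val t j.val s ht hs (by omega)
      exact ⟨Fin.ext this.1, this.2⟩
  have od : ∀ (i : Fin n) t, Odd (2 * (k * i.val) + 1 + 2 * t) := fun i t => by
    rw [Nat.odd_iff]; omega
  refine mk n k hk (fun i => 2 * (k * i.val) + 1 + 2 * 0) (fun i => 2 * (k * i.val) + 1 + 2 * c i)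
    (fun a => 2 * (k * a.1.val) + 1 + 2 * pos a)
    ?_ ?_ ?_ ?_ ?_ ?_ ?_ ?_ ?_ ?_ ?_ ?_ ?_ ?_ ?_
  · intro a b h; exact (inj a b 0 0 (by omega) (by omega) h).1
  · intro a b h; exact (inj a b _ _ (c2 a) (c2 b) h).1
  · intro a b h
    have := inj _ _ _ _ (p2 a) (p2 b) h
    exact p4 a b this.1 this.2
  · intro i j h
    have := inj i j _ _ (by omega) (c2 j) h
    have := c1 j
    omega
  · intro i a h
    have := inj i _ _ _ (by omega) (p2 a) h
    have := p1 a
    omega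
  · intro i a h
    have := inj i _ _ _ (c2 i) (p2 a) h
    have h2 := p3 a
    rw [← this.1] at h2
    omega
  · intro i; exact od i 0
  · intro i; exact od i _
  · intro a; exact od a.1 _
  · intro i; exact bd i 0 (by omega)
  · intro i; exact bd i _ (c2 i)
  · intro a; exact bd _ _ (p2 a)
  · intro i j h
    rw [h, show 2 * (k * (i.val + 1)) + 1 + 2 * 0 = (2 * (k * i.val) + 1 + 2 * 0) + 2 * k by ring,
      Nat.coprime_self_add_right,
      show 2 * (k * i.val) + 1 + 2 * 0 = 1 + (2 * k) * i.val by ring,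
      Nat.coprime_add_mul_left_left]
    exact Nat.coprime_one_left _
  · intro i
    exact (c3 i 0 (by omega) (by have := c1 i; omega)).symm
  · intro i j
    exact c3 i _ (p2 (i, j)) (p3 (i, j))

/-- number of `i < 2 ^ d` with `m + 2 i` coprime to `P`, by binary splitting -/
def cnt (P : ℕ) : ℕ → ℕ → ℕ
  | 0, m => if Nat.gcd m P = 1 then 1 else 0
  | d + 1, m => cnt P d m + cnt P d (m + 2 ^ (d + 1))

lemma prime_of_gcd (b m : ℕ) (hm : 1 < m) (hmb : m < b ^ 2) (h : Nat.gcd m (b - 1).factorial = 1) :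
    m.Prime := by
  by_contra hp
  have h1 := Nat.minFac_sq_le_self (by omega) hp
  have h2 : m.minFac < b := by
    by_contra hc
    push Not at hc
    have : b ^ 2 ≤ m.minFac ^ 2 := Nat.pow_le_pow_left hc 2
    omega
  have hpr := Nat.minFac_prime (n := m) (by omega)
  have h3 : m.minFac ∣ (b - 1).factorial := Nat.dvd_factorial hpr.pos (by omega)
  have := Nat.dvd_gcd (Nat.minFac_dvd m) h3
  rw [h] at this
  exact hpr.one_lt.ne' (Nat.dvd_one.1 this)

lemma cnt_le (b : ℕ) (d : ℕ) : ∀ m, 1 < m → m + 2 ^ (d + 1) ≤ b ^ 2 →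
    cnt (b - 1).factorial d m ≤ #{q ∈ Ico m (m + 2 ^ (d + 1)) | q.Prime} := by
  induction d with
  | zero =>
    intro m hm hb
    simp only [cnt]
    split_ifs with h
    · have hp := prime_of_gcd b m hm (by omega) h
      rw [Nat.one_le_iff_ne_zero, ← Nat.pos_iff_ne_zero, card_pos]
      exact ⟨m, mem_filter.2 ⟨mem_Ico.2 ⟨le_rfl, by omega⟩, hp⟩⟩
    · omega
  | succ d ih =>
    intro m hm hb
    have e : 2 ^ (d + 1 + 1) = 2 ^ (d + 1) + 2 ^ (d + 1) := by ring
    have hpos : 0 < 2 ^ d := by positivity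
    simp only [cnt]
    have h1 := ih m hm (by omega)
    have h2 := ih (m + 2 ^ (d + 1)) (by omega) (by omega)
    refine (Nat.add_le_add h1 h2).trans ?_
    rw [← card_union_of_disjoint]
    · apply card_le_card
      intro q hq
      simp only [mem_union, mem_filter, mem_Ico] at hq ⊢
      rcases hq with hq | hq <;> exact ⟨by omega, hq.2⟩
    · rw [disjoint_left]
      intro q h1 h2
      simp only [mem_filter, mem_Ico] at h1 h2
      omega

/-- there are at least `n` primes strictly between `2N/3` and `2N` -/
def Good (n N : ℕ) : Prop :=
  ∃ Q : Finset ℕ, n ≤ #Q ∧ ∀ q ∈ Q, q.Prime ∧ 2 * N < 3 * q ∧ q < 2 * N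

lemma win (A B d lo b c : ℕ) (h1 : 2 * B ≤ 3 * lo + 1) (h2 : lo + 2 ^ (d + 1) ≤ 2 * A) (hlo : 1 < lo)
    (h3 : lo + 2 ^ (d + 1) ≤ b ^ 2) (h4 : c ≤ cnt (b - 1).factorial d lo)
    (h5 : B ≤ (c + 1) * 14 ∨ 10 ^ 6 * (2 * B) ≤ (c + 1) ^ 4)
    (n N : ℕ) (hA : A ≤ N) (hB : N < B) (hn : 14 * n ≤ N) (hn4 : n ^ 4 < 10 ^ 6 * (2 * N)) :
    Good n N := by
  have hnc : n ≤ c := by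
    by_contra hc
    push Not at hc
    rcases h5 with h | h
    · omega
    · have : (c + 1) ^ 4 ≤ n ^ 4 := Nat.pow_le_pow_left hc 4
      omega
  refine ⟨{q ∈ Ico lo (lo + 2 ^ (d + 1)) | q.Prime}, hnc.trans (h4.trans (cnt_le b d lo hlo h3)), ?_⟩
  intro q hq
  simp only [mem_filter, mem_Ico] at hq
  exact ⟨hq.2, by omega, by omega⟩

lemma small (n N : ℕ) (h28 : 28 ≤ N) (hN : N < 32768) (hn : 14 * n ≤ N)
    (hn4 : n ^ 4 < 10 ^ 6 * (2 * N)) : Good n N := by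
  rcases Nat.lt_or_ge N 58 with h58 | h58
  · exact win 28 58 3 39 8 4 (by norm_num) (by norm_num) (by norm_num) (by norm_num)
      (by decide +kernel) (Or.inl (by norm_num)) n N (by omega) h58 hn hn4
  rcases Nat.lt_or_ge N 124 with h124 | h124
  · exact win 58 124 4 83 11 8 (by norm_num) (by norm_num) (by norm_num) (by norm_num)
      (by decide +kernel) (Or.inl (by norm_num)) n N (by omega) h124 hn hn4
  rcases Nat.lt_or_ge N 205 with h205 | h205
  · exact win 124 205 5 137 15 14 (by norm_num) (by norm_num) (by norm_num) (by norm_num)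
      (by decide +kernel) (Or.inl (by norm_num)) n N (by omega) h205 hn hn4
  rcases Nat.lt_or_ge N 334 with h334 | h334
  · exact win 205 334 6 223 19 23 (by norm_num) (by norm_num) (by norm_num) (by norm_num)
      (by decide +kernel) (Or.inl (by norm_num)) n N (by omega) h334 hn hn4
  rcases Nat.lt_or_ge N 588 with h588 | h588
  · exact win 334 588 7 393 26 41 (by norm_num) (by norm_num) (by norm_num) (by norm_num)
      (by decide +kernel) (Or.inl (by norm_num)) n N (by omega) h588 hn hn4
  rcases Nat.lt_or_ge N 994 with h994 | h994
  · exact win 588 994 8 663 35 70 (by norm_num) (by norm_num) (by norm_num) (by norm_num)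
      (by decide +kernel) (Or.inl (by norm_num)) n N (by omega) h994 hn hn4
  rcases Nat.lt_or_ge N 1444 with h1444 | h1444
  · exact win 994 1444 9 963 45 103 (by norm_num) (by norm_num) (by norm_num) (by norm_num)
      (by decide +kernel) (Or.inl (by norm_num)) n N (by omega) h1444 hn hn4
  rcases Nat.lt_or_ge N 1918 with h1918 | h1918
  · exact win 1444 1918 9 1279 48 136 (by norm_num) (by norm_num) (by norm_num) (by norm_num)
      (by decide +kernel) (Or.inl (by norm_num)) n N (by omega) h1918 hn hn4
  rcases Nat.lt_or_ge N 2680 with h2680 | h2680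
  · exact win 1918 2680 10 1787 62 191 (by norm_num) (by norm_num) (by norm_num) (by norm_num)
      (by decide +kernel) (Or.inl (by norm_num)) n N (by omega) h2680 hn hn4
  rcases Nat.lt_or_ge N 3526 with h3526 | h3526
  · exact win 2680 3526 10 2351 67 251 (by norm_num) (by norm_num) (by norm_num) (by norm_num)
      (by decide +kernel) (Or.inl (by norm_num)) n N (by omega) h3526 hn hn4
  rcases Nat.lt_or_ge N 4432 with h4432 | h4432
  · exact win 3526 4432 11 2955 84 306 (by norm_num) (by norm_num) (by norm_num) (by norm_num)
      (by decide +kernel) (Or.inr (by norm_num)) n N (by omega) h4432 hn hn4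
  rcases Nat.lt_or_ge N 7150 with h7150 | h7150
  · exact win 4432 7150 11 4767 95 345 (by norm_num) (by norm_num) (by norm_num) (by norm_num)
      (by decide +kernel) (Or.inr (by norm_num)) n N (by omega) h7150 hn hn4
  rcases Nat.lt_or_ge N 15304 with h15304 | h15304
  · exact win 7150 15304 11 10203 120 418 (by norm_num) (by norm_num) (by norm_num) (by norm_num)
      (by decide +kernel) (Or.inr (by norm_num)) n N (by omega) h15304 hn hn4
  rcases Nat.lt_or_ge N 33622 with h33622 | h33622
  · exact win 15304 33622 12 22415 175 509 (by norm_num) (by norm_num) (by norm_num) (by norm_num)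
      (by decide +kernel) (Or.inr (by norm_num)) n N (by omega) h33622 hn hn4
  omega

open Real in
lemma large (n N : ℕ) (hN : 32768 ≤ N) (hn4 : n ^ 4 < 10 ^ 6 * (2 * N)) : Good n N := by
  set x : ℕ := 2 * N with hx
  have hxr : (65536 : ℝ) ≤ x := by
    have : 65536 ≤ x := by omega
    exact_mod_cast this
  set P : Finset ℕ := {p ∈ Ioc 0 x | p.Prime} with hP
  refine ⟨{q ∈ P | x < 3 * q}, ?_, ?_⟩
  swap
  · intro q hq
    simp only [hP, mem_filter, mem_Ioc] at hq
    refine ⟨hq.1.2, hq.2, lt_of_le_of_ne hq.1.1.2 ?_⟩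
    rintro rfl
    have := (Nat.prime_dvd_prime_iff_eq Nat.prime_two hq.1.2).1 ⟨N, hx⟩
    omega
  by_contra hcon
  push Not at hcon
  set t : ℝ := √(√x) with ht
  have ht2 : t ^ 2 = √x := sq_sqrt (sqrt_nonneg _)
  have ht4 : t ^ 4 = x := by
    rw [show t ^ 4 = (t ^ 2) ^ 2 by ring, ht2, sq_sqrt (by positivity)]
  have ht0 : 0 ≤ t := sqrt_nonneg _
  have ht16 : 16 ≤ t := by
    refine le_of_pow_le_pow_left₀ (n := 4) (by norm_num) ht0 ?_
    rw [ht4]; norm_num; linarith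
  have hnt : (n : ℝ) ≤ 32 * t := by
    refine le_of_pow_le_pow_left₀ (n := 4) (by norm_num) (by positivity) ?_
    rw [mul_pow, ht4]
    have : (n : ℝ) ^ 4 ≤ 10 ^ 6 * x := by exact_mod_cast hn4.le
    norm_num at this ⊢
    linarith
  have hl2 := log_two_gt_d9
  have hl2' := log_two_lt_d9
  have hlx : log x ≤ t / 4 + 7.0904 := by
    have e1 : log x = 4 * log t := by
      rw [← ht4, log_pow]; norm_num
    have e2 : log (t / 16) ≤ t / 16 - 1 := log_le_sub_one_of_pos (by linarith)
    rw [log_div (by linarith) (by norm_num)] at e2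
    have e3 : log 16 = 4 * log 2 := by
      rw [show (16 : ℝ) = 2 ^ 4 by norm_num, log_pow]; norm_num
    rw [e1]
    norm_num at *
    linarith
  have hlx1 : 1 ≤ log x := by
    rw [le_log_iff_exp_le (by linarith)]
    have := exp_one_lt_d9
    linarith
  have hlx' : log (x + 1) ≤ 2 * log x := by
    rw [show 2 * log (x : ℝ) = log ((x : ℝ) ^ 2) by rw [log_pow]; norm_num]
    apply log_le_log (by linarith)
    nlinarith
  have th1 := Chebyshev.theta_ge x
  have th2 := Chebyshev.theta_le_log4_mul_x (x := (x : ℝ) / 3) (by positivity)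
  have hl4 : log 4 = 2 * log 2 := by
    rw [show (4 : ℝ) = 2 ^ 2 by norm_num, log_pow]; norm_num
  have hsplit : Chebyshev.theta x ≤ Chebyshev.theta ((x : ℝ) / 3) + n * log x := by
    have e1 : Chebyshev.theta x = ∑ p ∈ P, log p := by
      simp [Chebyshev.theta, hP]
    rw [e1, ← sum_filter_add_sum_filter_not P (fun p => ¬ x < 3 * p)]
    apply add_le_add
    · rw [Chebyshev.theta]
      apply sum_le_sum_of_subset_of_nonneg
      · intro p hp
        simp only [hP, mem_filter, mem_Ioc, not_lt] at hp ⊢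
        refine ⟨⟨hp.1.1.1, ?_⟩, hp.1.2⟩
        rw [Nat.le_floor_iff (by positivity), le_div_iff₀ (by norm_num)]
        have : ((3 * p : ℕ) : ℝ) ≤ x := by exact_mod_cast hp.2
        push_cast at this
        linarith
      · intro p hp _
        apply log_natCast_nonneg
    · have : ∑ p ∈ P with ¬¬ x < 3 * p, log p ≤ #{p ∈ P | ¬¬ x < 3 * p} • log x := by
        apply sum_le_card_nsmul
        intro p hp
        simp only [hP, mem_filter, mem_Ioc] at hp
        apply log_le_log
        · exact_mod_cast hp.1.1.1
        · exact_mod_cast hp.1.1.2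
      refine this.trans ?_
      rw [nsmul_eq_mul]
      apply mul_le_mul_of_nonneg_right _ (by linarith)
      simp only [not_not]
      exact_mod_cast hcon.le
  rw [← ht2] at th1
  rw [hl4] at th2
  have hL0 : 0 ≤ log x := by linarith
  have m1 : (n : ℝ) * log x ≤ 32 * t * log x := mul_le_mul_of_nonneg_right hnt hL0
  have m2 : x * log 2 / 3 ≤ log x * (2 * t ^ 2 + 32 * t + 2) := by nlinarith
  have m3 : log x * (2 * t ^ 2 + 32 * t + 2) ≤ (t / 4 + 7.0904) * (2 * t ^ 2 + 32 * t + 2) :=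
    mul_le_mul_of_nonneg_right hlx (by positivity)
  have m4 : t ^ 4 * 0.231 ≤ x * log 2 / 3 := by
    rw [ht4]
    have : (x : ℝ) * 0.693 ≤ x * log 2 := mul_le_mul_of_nonneg_left (by norm_num at *; linarith) (by linarith)
    norm_num at *
    linarith
  have m5 : (t / 4 + 7.0904) * (2 * t ^ 2 + 32 * t + 2) < t ^ 4 * 0.231 := by
    obtain ⟨s, hs⟩ : ∃ s, s = t - 16 := ⟨_, rfl⟩
    have hs0 : 0 ≤ s := by linarith
    have : t = 16 + s := by linarith
    rw [this]
    have h2 := pow_nonneg hs0 2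
    have h3 := pow_nonneg hs0 3
    have h4 := pow_nonneg hs0 4
    norm_num
    ring_nf
    linarith
  linarith

end FC

/-- The firecracker graph `F_{n,k}` is odd prime for all `n > 1` and `k ≥ 3`. -/
theorem firecracker_oddPrime (n k : ℕ) (hn : 1 < n) (hk : 3 ≤ k) :
    IsOddPrime (firecracker n k) := by
  rcases Nat.lt_or_ge k 14 with h14 | h14
  · exact FC.R1 n k hk (by omega)
  rcases Nat.lt_or_ge (n ^ 4) (10 ^ 6 * (2 * (n * k))) with h4 | h4
  · have h1 : 14 * n ≤ n * k := by nlinarith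
    have hG : FC.Good n (n * k) := by
      rcases Nat.lt_or_ge (n * k) 32768 with h | h
      · exact FC.small n (n * k) (by omega) h h1 h4
      · exact FC.large n (n * k) h h4
    obtain ⟨Q, hQ, hq⟩ := hG
    exact FC.R2 n k hn h14 Q hQ hq
  · exact FC.R3 n k hn hk h4
end
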